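/- Let Ω be a bounded open convex set in ℝ² containing the origin in its interior, and suppose that sup_{θ∈S¹} sup_{δ>0} δ^{-1/2} μ(θ,δ) < ∞. Then there is a constant C_Ω such that for all R ≥ 2 and 1 ≤ h ≤ R/(log R)²: 𝒢_Ω(R,h) ≤ C_Ω R^{1/2} + C_Ω R^{1/2} Σ_± Σ_{n≥0: 2ⁿ ≤ log R} 2^{−n/2} ( Σ_{l integer, 1 ≤ l ≤ log R} 2^{−l} · sup_{2^{l−1} ≤ r ≤ 2^{l}} 𝔖^±(r, 2ⁿ/(rR), h) )^{1/2}. -/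

import Mathlib

/-!
Throughout, `e(x) = exp(2πix)` and `ρ` is the support function of `Ω`.

**Smoothing.** The `1`-periodic lattice measure is replaced by a nonnegative trigonometric polynomial
`κ(x₀) κ(x₁)` of degree `O(R^{2/3})`, concentrated within `R^{-1/2}` of the lattice
(`exists_kernel`). Since `Ω` is convex with the origin inside, the number of lattice points of `tΩ`
lies between the integrals of the kernel over `(t ± c R^{-1/2})Ω`, up to negligible tails
(`Dom.sandwich`); the change in area is `O(√R)`, which the first term of the estimate absorbs
(`Dom.rest_le`). Expanding the kernel, the smoothed rest is a finite sum over `k ≠ 0` of Fourier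
integrals of the indicator function of `tΩ` (`Dom.smooth_expand`).

**Kinks.** In direction `θ` the Fourier integral over `Ω` is the one-dimensional transform of the
chord length function, which is concave. Discretizing and summing by parts twice
(`Profile.expansion`) expresses it by the masses `α_j ≥ 0` of the slope jumps, the kinks, at depths
`v_j` below the two support lines orthogonal to `θ`: each support point contributes a sum of
`α_j (e(-(ρ(k) - v_j|k|)t) - e(-ρ(k)t))` with a weight `O(|k|⁻²)`. Concavity bounds
`∑ α_j min(v_j, u)` by the length of the chord at depth `u`, hence by the cap diameter
`μ(θ, u)` (`Dom.kink_expansion`). The opposite support point is the conjugate of the term at `-k`.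

**Mean square in `t`.** A large sieve inequality (`large_sieve`) shows that only pairs of
frequencies within `1/h` of each other matter.
* Kinks at depth at least `log R/(R|k|)`: using `μ(θ, δ) ≪ √δ` and the number of lattice points in
  a shell, the close pairs contribute `O(R)` (`far_pairs`, `Dom.far_top`).
* Shallower kinks: `h (log R)² ≤ R` makes the displacement `v_j|k|` small compared with `1/h`, so
  the cancellation in `e(-(ρ(k) - v_j|k|)t) - e(-ρ(k)t)` can be kept (`near_mean`). For every `k`
  this yields the weight `∑ α_j min(R v_j|k|, 1)`, which is `O(R|k| μ(k/|k|, 1/(R|k|)))`, and the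
  sum over partners `k'` with `|ρ(k) - ρ(k')| ≤ 1/h` is a weighted lattice sum with `r = ρ(k)` and
  `δ = 1/(rR)` (`Dom.near_top`).

A dyadic decomposition in `ρ(k)` then bounds the mean square by
`R + R ∑_l 2^{-l} sup_r 𝔖⁺(r, 1/(rR), h)` for large `R` (`Dom.mean_large`); the range `l ≤ log R`
suffices because `2^{log R}` exceeds every multiple of `R^{2/3}`. This is the term `s = 1`, `n = 0`
of the right-hand side, all of whose terms are nonnegative. For bounded `R` the mean square is
bounded (`Dom.mean_small`).
-/

open MeasureTheory Set
open scoped Pointwise RealInnerProductSpace NNReal ENNReal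

noncomputable section

abbrev E2 := EuclideanSpace ℝ (Fin 2)

/-- The embedding of an integer vector into the Euclidean plane. -/
def ek (k : Fin 2 → ℤ) : E2 := (WithLp.equiv 2 (Fin 2 → ℝ)).symm fun i => (k i : ℝ)

/-- Number of lattice points in a set. -/
def latticeCount (S : Set E2) : ℕ := Nat.card {k : Fin 2 → ℤ | ek k ∈ S}

/-- The lattice rest `E_Ω(t) = card(tΩ ∩ ℤ²) − t²·area(Ω)`. -/
def latticeRest (Ω : Set E2) (t : ℝ) : ℝ :=
  (latticeCount (t • Ω) : ℝ) - t ^ 2 * (volume Ω).toReal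

/-- The mean square discrepancy `𝒢_Ω(R,h) = ((1/h)∫_R^{R+h} |E_Ω(t)|² dt)^{1/2}`. -/
def meanSquare (Ω : Set E2) (R h : ℝ) : ℝ :=
  Real.sqrt ((1 / h) * ∫ t in R..(R + h), (latticeRest Ω t) ^ 2)

/-- The support function `ρ*(ξ) = sup {⟨x,ξ⟩ : x ∈ Ω}`. -/
def suppFn (Ω : Set E2) (ξ : E2) : ℝ := sSup ((fun x => ⟪x, ξ⟫) '' Ω)

/-- `μ(θ,δ)`, the diameter of the cap `𝒞(θ,δ) = {x ∈ ∂Ω : ⟨x,θ⟩ ≥ ρ*(θ) − δ}`. -/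
def capDiam (Ω : Set E2) (θ : E2) (δ : ℝ) : ℝ :=
  Metric.diam {x ∈ frontier Ω | suppFn Ω θ - δ ≤ ⟪x, θ⟫}

/-- Curvature bounded below in the generalized sense:
`sup_{θ∈S¹} sup_{δ>0} δ^{-1/2} μ(θ,δ) < ∞`. -/
def CurvBddBelow (Ω : Set E2) : Prop :=
  ∃ K : ℝ, ∀ θ : E2, ‖θ‖ = 1 → ∀ δ : ℝ, 0 < δ → capDiam Ω θ δ ≤ K * Real.sqrt δ

/-- The weighted lattice sum `𝔖^±(r,δ,h) = Σ_{ℓ∈ℤ²∖{0} : |ρ*(±ℓ)−r| ≤ 1/h}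
δ^{−1/2} μ(ℓ/|ℓ|, δ)` (the sign `±` is encoded by `s = ±1`). -/
def wSum (Ω : Set E2) (s r δ h : ℝ) : ℝ :=
  ∑' k : Fin 2 → ℤ, if k ≠ 0 ∧ |suppFn Ω (s • ek k) - r| ≤ 1 / h then
    capDiam Ω ((‖ek k‖)⁻¹ • ek k) δ / Real.sqrt δ else 0

/-! ### Exponential sums and a large sieve inequality -/

/-- The additive character `e(x) = exp(2πix)`. -/
def ee (x : ℝ) : ℂ := Complex.exp ((2 * Real.pi * x : ℝ) * Complex.I)

lemma ee_add (x y : ℝ) : ee (x + y) = ee x * ee y := by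
  unfold ee
  rw [← Complex.exp_add]
  congr 1
  push_cast
  ring

@[simp] lemma ee_zero : ee 0 = 1 := by simp [ee]

@[simp] lemma norm_ee (x : ℝ) : ‖ee x‖ = 1 := by
  unfold ee
  exact Complex.norm_exp_ofReal_mul_I _

lemma ee_ne_zero (x : ℝ) : ee x ≠ 0 := Complex.exp_ne_zero _

lemma ee_mul_neg (x : ℝ) : ee x * ee (-x) = 1 := by
  rw [← ee_add]; simp

lemma ee_int (n : ℤ) : ee n = 1 := by
  unfold ee
  rw [Complex.exp_eq_one_iff]
  exact ⟨n, by push_cast; ring⟩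

lemma ee_nat_mul (n : ℕ) (x : ℝ) : ee (n * x) = ee x ^ n := by
  unfold ee
  rw [← Complex.exp_nat_mul]
  congr 1
  push_cast
  ring

lemma conj_ee (x : ℝ) : (starRingEnd ℂ) (ee x) = ee (-x) := by
  unfold ee
  rw [← Complex.exp_conj]
  congr 1
  rw [map_mul, Complex.conj_I, Complex.conj_ofReal]
  push_cast
  ring

lemma norm_ee_sub_one_le (x : ℝ) : ‖ee x - 1‖ ≤ 2 * Real.pi * |x| := by
  have := @Real.norm_exp_I_mul_ofReal_sub_one_le (2 * Real.pi * x)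
  unfold ee
  rw [mul_comm]
  refine this.trans (le_of_eq ?_)
  rw [Real.norm_eq_abs, abs_mul, abs_of_pos Real.two_pi_pos]

lemma norm_ee_sub_one_le_two (x : ℝ) : ‖ee x - 1‖ ≤ 2 := by
  refine (norm_sub_le _ _).trans ?_
  simp; norm_num

lemma norm_ee_sub_le (x y : ℝ) : ‖ee x - ee y‖ ≤ 2 * Real.pi * |x - y| := by
  have : ee x - ee y = ee y * (ee (x - y) - 1) := by
    rw [mul_sub, ← ee_add]; simp
  rw [this, norm_mul, norm_ee, one_mul]
  exact norm_ee_sub_one_le _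

@[fun_prop] lemma continuous_ee : Continuous ee := by
  unfold ee; fun_prop

/-- A smooth bump supported in `[-1/8, 1/8]`; its Fourier transform does not vanish on `[0, 1]`. -/
def sieveBump : ContDiffBump (0 : ℝ) := ⟨1 / 16, 1 / 8, by norm_num, by norm_num⟩

lemma sieveBump_nonneg (x : ℝ) : 0 ≤ sieveBump x := sieveBump.nonneg

lemma sieveBump_le_one (x : ℝ) : sieveBump x ≤ 1 := sieveBump.le_one

lemma sieveBump_eq_zero {x : ℝ} (hx : 1 / 8 ≤ |x|) : sieveBump x = 0 := by
  apply sieveBump.zero_of_le_dist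
  simpa [sieveBump, Real.dist_eq] using hx

lemma sieveBump_continuous : Continuous sieveBump := sieveBump.continuous

lemma sieveBump_lipschitz : ∃ L : ℝ, 0 < L ∧ ∀ x y, |sieveBump x - sieveBump y| ≤ L * |x - y| := by
  have h1 : ContDiff ℝ 1 (sieveBump : ℝ → ℝ) := sieveBump.contDiff
  obtain ⟨C, hC⟩ := h1.lipschitzWith_of_hasCompactSupport sieveBump.hasCompactSupport (by simp)
  refine ⟨C + 1, by positivity, fun x y => ?_⟩
  have := hC.dist_le_mul x y
  rw [Real.dist_eq, Real.dist_eq] at this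
  nlinarith [abs_nonneg (x - y)]

lemma sieveBump_integrable : Integrable (sieveBump : ℝ → ℝ) := sieveBump.integrable

lemma sieveBump_integral_pos : 0 < ∫ x, sieveBump x := sieveBump.integral_pos

lemma sieveBump_fourier_lower {t : ℝ} (h0 : 0 ≤ t) (h1 : t ≤ 1) :
    (∫ x, sieveBump x) / 2 ≤ ‖∫ x, ee (-(x * t)) * (sieveBump x : ℂ)‖ := by
  have hint : Integrable (fun x => ee (-(x * t)) * (sieveBump x : ℂ)) := by
    refine Integrable.bdd_mul (c := 1) sieveBump_integrable.ofReal ?_ ?_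
    · exact Continuous.aestronglyMeasurable (by fun_prop)
    · filter_upwards with x; simp
  have hre : (∫ x, ee (-(x * t)) * (sieveBump x : ℂ)).re
      = ∫ x, (ee (-(x * t)) * (sieveBump x : ℂ)).re := by
    have := integral_re hint
    simpa using this.symm
  refine le_trans ?_ (Complex.re_le_norm _)
  rw [hre, ← integral_div]
  refine integral_mono (sieveBump_integrable.div_const 2) hint.re ?_
  intro x
  simp only [Complex.mul_re, Complex.ofReal_re, Complex.ofReal_im, mul_zero, sub_zero]
  by_cases hx : 1 / 8 ≤ |x|
  · simp [sieveBump_eq_zero hx]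
  push Not at hx
  have hcos : (1 : ℝ) / 2 ≤ (ee (-(x * t))).re := by
    unfold ee
    rw [Complex.exp_ofReal_mul_I_re, ← Real.cos_pi_div_three, ← Real.cos_abs (2 * Real.pi * _)]
    apply Real.cos_le_cos_of_nonneg_of_le_pi (abs_nonneg _) (by linarith [Real.pi_pos])
    rw [abs_mul, abs_of_pos Real.two_pi_pos, abs_neg, abs_mul, abs_of_nonneg h0]
    have : |x| * t ≤ 1 / 8 := by nlinarith [abs_nonneg x]
    nlinarith [Real.pi_pos]
  nlinarith [sieveBump_nonneg x]

/-- Large sieve: the mean square of an exponential sum over a unit interval is controlled by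
the sum with the characters replaced by bumps centred at the frequencies (Plancherel). -/
lemma large_sieve_unit : ∃ C : ℝ, 0 < C ∧ ∀ {ι : Type} (s : Finset ι) (b : ι → ℂ) (ν : ι → ℝ),
    ∫ t in (0 : ℝ)..1, ‖∑ i ∈ s, b i * ee (-(ν i * t))‖ ^ 2
      ≤ C * ∫ x, ‖∑ i ∈ s, b i * (sieveBump (x - ν i) : ℂ)‖ ^ 2 := by
  set m := ∫ x, sieveBump x with hm
  have hmpos : 0 < m := sieveBump_integral_pos
  refine ⟨4 / m ^ 2, by positivity, fun {ι} s b ν => ?_⟩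
  set g : ℝ → ℂ := fun x => ∑ i ∈ s, b i * (sieveBump (x - ν i) : ℂ) with hg
  have hgs : ContDiff ℝ ((⊤ : ℕ∞) : WithTop ℕ∞) g := by
    refine ContDiff.sum fun i _ => contDiff_const.mul ?_
    exact Complex.ofRealCLM.contDiff.comp
      (sieveBump.contDiff.comp (contDiff_id.sub contDiff_const))
  have hgc : HasCompactSupport g := by
    refine HasCompactSupport.of_support_subset_isCompact
      (K := ⋃ i ∈ s, Metric.closedBall (ν i) (1 / 8)) ?_ ?_
    · exact s.isCompact_biUnion fun i _ => isCompact_closedBall _ _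
    · intro x hx
      rw [Function.mem_support] at hx
      obtain ⟨i, hi, hne⟩ := Finset.exists_ne_zero_of_sum_ne_zero hx
      simp only [mem_iUnion]
      refine ⟨i, hi, ?_⟩
      rw [Metric.mem_closedBall, Real.dist_eq]
      by_contra hlt
      push Not at hlt
      exact hne (by rw [sieveBump_eq_zero hlt.le]; simp)
  set f := hgc.toSchwartzMap hgs with hf
  have hfg : ∀ x, f x = g x := fun x => rfl
  have hcont : Continuous (fun t : ℝ => ‖∑ i ∈ s, b i * ee (-(ν i * t))‖ ^ 2) := by fun_prop
  have hF : ∀ t : ℝ, (FourierTransform.fourier f) t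
      = (∑ i ∈ s, b i * ee (-(ν i * t))) * ∫ x, ee (-(x * t)) * (sieveBump x : ℂ) := by
    intro t
    rw [SchwartzMap.fourier_coe, Real.fourier_real_eq_integral_exp_smul]
    have e1 : ∀ v : ℝ, Complex.exp (((-2 * Real.pi * v * t : ℝ) : ℂ) * Complex.I) • f v
        = ∑ i ∈ s, b i * (ee (-(v * t)) * (sieveBump (v - ν i) : ℂ)) := by
      intro v
      rw [hfg, hg, smul_eq_mul, Finset.mul_sum]
      refine Finset.sum_congr rfl fun i _ => ?_
      have : Complex.exp (((-2 * Real.pi * v * t : ℝ) : ℂ) * Complex.I) = ee (-(v * t)) := by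
        unfold ee; congr 3; ring
      rw [this]; ring
    simp_rw [e1]
    rw [integral_finsetSum, Finset.sum_mul]
    · refine Finset.sum_congr rfl fun i _ => ?_
      rw [integral_const_mul, mul_assoc]
      congr 1
      rw [← integral_sub_right_eq_self (fun x => ee (-(x * t)) * (sieveBump x : ℂ)) (ν i),
        ← integral_const_mul]
      congr 1
      ext x
      rw [← mul_assoc, ← ee_add]
      congr 2; ring
    · intro i _
      refine Integrable.const_mul ?_ _
      refine Integrable.bdd_mul (c := 1) (sieveBump_integrable.comp_sub_right (ν i)).ofReal ?_ ?_
      · exact Continuous.aestronglyMeasurable (by fun_prop)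
      · filter_upwards with x; simp
  have hP := SchwartzMap.integral_norm_sq_fourier f
  have hint : Integrable (fun t : ℝ => ‖(FourierTransform.fourier f) t‖ ^ 2) := by
    have := (FourierTransform.fourier f).memLp 2 (volume : Measure ℝ)
    exact this.integrable_norm_pow (by norm_num)
  calc ∫ t in (0 : ℝ)..1, ‖∑ i ∈ s, b i * ee (-(ν i * t))‖ ^ 2
      ≤ ∫ t in (0 : ℝ)..1, 4 / m ^ 2 * ‖(FourierTransform.fourier f) t‖ ^ 2 := by
        refine intervalIntegral.integral_mono_on (by norm_num) (hcont.intervalIntegrable _ _)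
          (hint.const_mul _).intervalIntegrable fun t ht => ?_
        rw [hF, norm_mul, mul_pow]
        have h2 := sieveBump_fourier_lower ht.1 ht.2
        rw [← hm] at h2
        have h3 : (m / 2) ^ 2 ≤ ‖∫ x, ee (-(x * t)) * (sieveBump x : ℂ)‖ ^ 2 := by gcongr
        have h4 : 1 ≤ 4 / m ^ 2 * ‖∫ x, ee (-(x * t)) * (sieveBump x : ℂ)‖ ^ 2 := by
          calc (1 : ℝ) = 4 / m ^ 2 * (m / 2) ^ 2 := by field_simp; norm_num
            _ ≤ _ := by gcongr
        nlinarith [sq_nonneg ‖∑ i ∈ s, b i * ee (-(ν i * t))‖]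
    _ = 4 / m ^ 2 * ∫ t in (0 : ℝ)..1, ‖(FourierTransform.fourier f) t‖ ^ 2 := by
        rw [intervalIntegral.integral_const_mul]
    _ ≤ 4 / m ^ 2 * ∫ t, ‖(FourierTransform.fourier f) t‖ ^ 2 := by
        gcongr
        rw [intervalIntegral.integral_of_le (by norm_num)]
        exact setIntegral_le_integral hint (Filter.Eventually.of_forall fun t => by positivity)
    _ = _ := by rw [hP]; rfl

/-- The large sieve over an interval of length `h`. -/
lemma large_sieve : ∃ C : ℝ, 0 < C ∧ ∀ {ι : Type} (s : Finset ι) (b : ι → ℂ) (ν : ι → ℝ)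
    (R h : ℝ), 0 < h →
    (1 / h) * ∫ t in R..(R + h), ‖∑ i ∈ s, b i * ee (-(ν i * t))‖ ^ 2
      ≤ C * ∫ x, ‖∑ i ∈ s, b i * ee (-(ν i * R)) * (sieveBump (x - h * ν i) : ℂ)‖ ^ 2 := by
  obtain ⟨C, hC, H⟩ := large_sieve_unit
  refine ⟨C, hC, fun {ι} s b ν R h hh => ?_⟩
  have := H s (fun i => b i * ee (-(ν i * R))) (fun i => h * ν i)
  refine le_trans (le_of_eq ?_) this
  have e := intervalIntegral.integral_comp_mul_add (a := 0) (b := 1)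
    (fun t => ‖∑ i ∈ s, b i * ee (-(ν i * t))‖ ^ 2) hh.ne' R
  simp only [mul_zero, zero_add, mul_one, smul_eq_mul] at e
  rw [add_comm R h, one_div, ← e]
  refine intervalIntegral.integral_congr fun t _ => ?_
  congr 2
  refine Finset.sum_congr rfl fun i _ => ?_
  rw [mul_assoc, ← ee_add]
  congr 2; ring

/-! ### Pair sums -/

lemma integral_indicator_pair_le (a b : ℝ) :
    ∫ x : ℝ, (if |x - a| ≤ 1 / 2 then (1 : ℝ) else 0) * (if |x - b| ≤ 1 / 2 then (1 : ℝ) else 0)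
      ≤ if |a - b| ≤ 1 then 1 else 0 := by
  split_ifs with hab
  · calc _ ≤ ∫ x : ℝ, (Icc (a - 1 / 2) (a + 1 / 2)).indicator (fun _ => (1 : ℝ)) x := by
          refine integral_mono_of_nonneg (Filter.Eventually.of_forall fun x => ?_) ?_
            (Filter.Eventually.of_forall fun x => ?_)
          · simp only [Pi.zero_apply]; split_ifs <;> norm_num
          · exact (integrable_indicator_iff measurableSet_Icc).2
              (integrableOn_const (by simp) (by simp))
          · simp only [indicator, mem_Icc]
            split_ifs with h1 h2 h3 h4 <;> try norm_num
            all_goals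
              rw [abs_le] at h1
              exact absurd (show a - 1 / 2 ≤ x ∧ x ≤ a + 1 / 2 from
                ⟨by linarith [h1.1], by linarith [h1.2]⟩) (by assumption)
      _ = 1 := by
          rw [integral_indicator measurableSet_Icc]
          simp
          norm_num
  · refine le_of_eq ?_
    rw [← integral_zero ℝ ℝ]
    congr 1
    ext x
    split_ifs with h1 h2 <;> try norm_num
    apply hab
    have : a - b = (x - b) - (x - a) := by ring
    rw [this]
    exact (abs_sub _ _).trans (by linarith)

lemma integrable_indicator_pair (a b c : ℝ) :
    Integrable fun x : ℝ => c * ((if |x - a| ≤ 1 / 2 then (1 : ℝ) else 0) *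
      (if |x - b| ≤ 1 / 2 then (1 : ℝ) else 0)) := by
  have h : ∀ a : ℝ, (fun x : ℝ => if |x - a| ≤ 1 / 2 then (1 : ℝ) else 0)
      = (Icc (a - 1 / 2) (a + 1 / 2)).indicator (fun _ => (1 : ℝ)) := by
    intro a
    ext x
    simp only [indicator, mem_Icc]
    refine if_congr ?_ rfl rfl
    rw [abs_le]
    constructor
    · rintro ⟨h1, h2⟩; exact ⟨by linarith, by linarith⟩
    · rintro ⟨h1, h2⟩; exact ⟨by linarith, by linarith⟩
  have hi : ∀ a : ℝ, Integrable (fun x : ℝ => if |x - a| ≤ 1 / 2 then (1 : ℝ) else 0) := by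
    intro a
    rw [h a]
    exact (integrable_indicator_iff measurableSet_Icc).2 (integrableOn_const (by simp) (by simp))
  refine Integrable.const_mul ?_ c
  refine (hi b).bdd_mul (c := 1) (hi a).aestronglyMeasurable ?_
  filter_upwards with x
  split_ifs <;> norm_num

lemma integral_sq_le_pairs {ι : Type} (s : Finset ι) (β a : ι → ℝ) (hβ : ∀ i ∈ s, 0 ≤ β i)
    (N : ℝ → ℂ)
    (hN : ∀ x, ‖N x‖ ≤ ∑ i ∈ s, β i * (if |x - a i| ≤ 1 / 2 then (1 : ℝ) else 0)) :
    ∫ x, ‖N x‖ ^ 2 ≤ ∑ i ∈ s, ∑ j ∈ s, if |a i - a j| ≤ 1 then β i * β j else 0 := by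
  have hexp : ∀ x, (∑ i ∈ s, β i * (if |x - a i| ≤ 1 / 2 then (1 : ℝ) else 0)) ^ 2
      = ∑ i ∈ s, ∑ j ∈ s, β i * β j * ((if |x - a i| ≤ 1 / 2 then (1 : ℝ) else 0) *
      (if |x - a j| ≤ 1 / 2 then (1 : ℝ) else 0)) := by
    intro x
    rw [sq, Finset.sum_mul_sum]
    refine Finset.sum_congr rfl fun i _ => Finset.sum_congr rfl fun j _ => ?_
    ring
  calc ∫ x, ‖N x‖ ^ 2
      ≤ ∫ x, (∑ i ∈ s, ∑ j ∈ s, β i * β j * ((if |x - a i| ≤ 1 / 2 then (1 : ℝ) else 0) *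
      (if |x - a j| ≤ 1 / 2 then (1 : ℝ) else 0))) := by
        refine integral_mono_of_nonneg (Filter.Eventually.of_forall fun x => by positivity) ?_
          (Filter.Eventually.of_forall fun x => ?_)
        · exact integrable_finsetSum _ fun i _ => integrable_finsetSum _ fun j _ =>
            integrable_indicator_pair _ _ _
        · simp only
          rw [← hexp]
          gcongr
          exact hN x
    _ = ∑ i ∈ s, ∑ j ∈ s, β i * β j * ∫ x, ((if |x - a i| ≤ 1 / 2 then (1 : ℝ) else 0) *
      (if |x - a j| ≤ 1 / 2 then (1 : ℝ) else 0)) := by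
        rw [integral_finsetSum _ fun i _ => integrable_finsetSum _ fun j _ =>
            integrable_indicator_pair _ _ _]
        refine Finset.sum_congr rfl fun i _ => ?_
        rw [integral_finsetSum _ fun j _ => integrable_indicator_pair _ _ _]
        refine Finset.sum_congr rfl fun j _ => ?_
        rw [integral_const_mul]
    _ ≤ _ := by
        refine Finset.sum_le_sum fun i hi => Finset.sum_le_sum fun j hj => ?_
        have h0 := mul_nonneg (hβ i hi) (hβ j hj)
        have := mul_le_mul_of_nonneg_left (integral_indicator_pair_le (a i) (a j)) h0
        refine this.trans (le_of_eq ?_)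
        split_ifs <;> simp

lemma sum_pairs_symm {ι : Type} (s : Finset ι) (F G : ι → ι → ℝ)
    (h : ∀ i ∈ s, ∀ j ∈ s, F i j ≤ G i j + G j i) :
    ∑ i ∈ s, ∑ j ∈ s, F i j ≤ 2 * ∑ i ∈ s, ∑ j ∈ s, G i j := by
  calc ∑ i ∈ s, ∑ j ∈ s, F i j ≤ ∑ i ∈ s, ∑ j ∈ s, (G i j + G j i) :=
        Finset.sum_le_sum fun i hi => Finset.sum_le_sum fun j hj => h i hi j hj
    _ = ∑ i ∈ s, ∑ j ∈ s, G i j + ∑ i ∈ s, ∑ j ∈ s, G j i := by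
        simp_rw [Finset.sum_add_distrib]
    _ = _ := by rw [Finset.sum_comm (f := fun i j => G j i)]; ring

/-- Pair sum for the kinks far from the tip: `α k i` is the mass of the kink at depth `v k i`,
and `y k i ∈ [0, v k i · n k]` is a frequency shift. Two kinks whose shifted frequencies are within
`1` of each other have tip frequencies within `1 + max y y'`, and the lattice point count
`hcount` bounds the number of such directions. -/
lemma far_pairs {Z : Type} (Ks : Finset Z) (T : Z → Finset ℕ) (n ρ : Z → ℝ)
    (α v y : Z → ℕ → ℝ) (c C C1 C2 Q : ℝ) (hc : 0 < c) (hc1 : c ≤ 1) (hC : 1 ≤ C) (hC1 : 0 ≤ C1)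
    (hC2 : 0 ≤ C2) (hQ : 0 ≤ Q)
    (hn : ∀ k ∈ Ks, 1 ≤ n k) (hρ1 : ∀ k ∈ Ks, c * n k ≤ ρ k) (hρ2 : ∀ k ∈ Ks, ρ k ≤ C * n k)
    (hα : ∀ k ∈ Ks, ∀ i ∈ T k, 0 ≤ α k i) (hy0 : ∀ k ∈ Ks, ∀ i ∈ T k, 0 ≤ y k i)
    (hyv : ∀ k ∈ Ks, ∀ i ∈ T k, y k i ≤ v k i * n k)
    (hyρ : ∀ k ∈ Ks, ∀ i ∈ T k, y k i ≤ ρ k / 2)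
    (hmass : ∀ k ∈ Ks, ∑ i ∈ T k, α k i ≤ Q * √(n k))
    (hmom : ∀ k ∈ Ks, ∑ i ∈ T k, α k i * v k i ≤ C1)
    (hcount : ∀ r z : ℝ, 0 ≤ r → 0 ≤ z →
      ((Ks.filter fun k => |ρ k - r| ≤ 1 + z).card : ℝ) ≤ C2 * (1 + z) * (1 + r + z)) :
    ∑ p ∈ Ks.sigma T, ∑ p' ∈ Ks.sigma T,
      (if |(ρ p.1 - y p.1 p.2) - (ρ p'.1 - y p'.1 p'.2)| ≤ 1 then
        (α p.1 p.2 / n p.1 ^ 2) * (α p'.1 p'.2 / n p'.1 ^ 2) else 0)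
      ≤ 2 * (3 * C * C2 * (4 * C / c) ^ 2) *
        (Q ^ 2 * ∑ k ∈ Ks, 1 / n k ^ 2 + Q * C1 * ∑ k ∈ Ks, √(n k) / n k ^ 2) := by
  set K' := 3 * C * C2 * (4 * C / c) ^ 2 with hK'
  have hK'0 : 0 ≤ K' := by positivity
  have hβ : ∀ p ∈ Ks.sigma T, 0 ≤ α p.1 p.2 / n p.1 ^ 2 := by
    intro p hp
    rw [Finset.mem_sigma] at hp
    exact div_nonneg (hα _ hp.1 _ hp.2) (by positivity)
  -- the inner sum over all partners `k'` of a kink of direction `k`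
  have inner : ∀ k ∈ Ks, ∀ z, 0 ≤ z → z ≤ ρ k / 2 →
      ∑ p' ∈ Ks.sigma T, (if |ρ p'.1 - ρ k| ≤ 1 + z then α p'.1 p'.2 / n p'.1 ^ 2 else 0)
        ≤ Q * K' * (1 + z) / √(n k) := by
    intro k hk z hz hzρ
    have hnk := hn k hk
    have hρk := hρ1 k hk
    have hρk0 : 0 ≤ ρ k := le_trans (by positivity) hρk
    rw [Finset.sum_sigma]
    calc ∑ k' ∈ Ks, ∑ i ∈ T k', (if |ρ k' - ρ k| ≤ 1 + z then α k' i / n k' ^ 2 else 0)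
        ≤ ∑ k' ∈ Ks, (if |ρ k' - ρ k| ≤ 1 + z then
            Q * ((4 * C / c) ^ 2 * (√(n k) / n k ^ 2)) else 0) := by
          refine Finset.sum_le_sum fun k' hk' => ?_
          split_ifs with hcl
          · rw [← Finset.sum_div]
            have hnk' := hn k' hk'
            have hcomp : c / (4 * C) * n k ≤ n k' := by
              rw [abs_le] at hcl
              have e1 := hρ2 k' hk'
              by_cases h4 : 4 ≤ ρ k
              · have : ρ k / 4 ≤ C * n k' := by linarith [hcl.1]
                rw [div_mul_eq_mul_div, div_le_iff₀ (by positivity)]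
                nlinarith
              · push Not at h4
                rw [div_mul_eq_mul_div, div_le_iff₀ (by positivity)]
                nlinarith
            have hroot : √(n k') / n k' ^ 2 ≤ (4 * C / c) ^ 2 * (√(n k) / n k ^ 2) := by
              have e1 : ∀ x : ℝ, 1 ≤ x → √x / x ^ 2 = 1 / (x * √x) := by
                intro x hx
                have hs : 0 < √x := Real.sqrt_pos.2 (by linarith)
                rw [div_eq_div_iff (by positivity) (by positivity)]
                have := Real.mul_self_sqrt (show 0 ≤ x by linarith)
                calc √x * (x * √x) = (√x * √x) * x := by ring
                  _ = 1 * x ^ 2 := by rw [this]; ring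
              rw [e1 _ hnk', e1 _ hnk]
              set κ := c / (4 * C) with hκ
              have hκ0 : 0 < κ := by positivity
              have hκ1 : κ ≤ 1 := by rw [hκ, div_le_one (by positivity)]; linarith
              have hκi : (4 * C / c) = κ⁻¹ := by rw [hκ]; field_simp
              have hsq : κ * √(n k) ≤ √(n k') := by
                apply Real.le_sqrt_of_sq_le
                rw [mul_pow, Real.sq_sqrt (by linarith)]
                have : κ ^ 2 ≤ κ := by nlinarith
                nlinarith
              have hsk : 0 < √(n k) := Real.sqrt_pos.2 (by linarith)
              rw [hκi, inv_pow, one_div, one_div, ← mul_inv]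
              apply inv_anti₀ (by positivity)
              calc κ ^ 2 * (n k * √(n k)) = (κ * n k) * (κ * √(n k)) := by ring
                _ ≤ n k' * √(n k') := by gcongr
            calc (∑ i ∈ T k', α k' i) / n k' ^ 2 ≤ Q * √(n k') / n k' ^ 2 := by
                  gcongr; exact hmass k' hk'
              _ = Q * (√(n k') / n k' ^ 2) := by ring
              _ ≤ _ := by gcongr
          · simp
      _ = ((Ks.filter fun k' => |ρ k' - ρ k| ≤ 1 + z).card : ℝ) *
            (Q * ((4 * C / c) ^ 2 * (√(n k) / n k ^ 2))) := by
          rw [← Finset.sum_filter, Finset.sum_const, nsmul_eq_mul]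
      _ ≤ (C2 * (1 + z) * (3 * C * n k)) * (Q * ((4 * C / c) ^ 2 * (√(n k) / n k ^ 2))) := by
          gcongr
          refine (hcount (ρ k) z hρk0 hz).trans ?_
          have := hρ2 k hk
          gcongr
          nlinarith
      _ = Q * K' * (1 + z) * (n k * (√(n k) / n k ^ 2)) := by rw [hK']; ring
      _ = Q * K' * (1 + z) / √(n k) := by
          have hsk : 0 < √(n k) := Real.sqrt_pos.2 (by linarith)
          have e2 : n k * (√(n k) / n k ^ 2) = 1 / √(n k) := by
            rw [eq_div_iff hsk.ne']
            have := Real.mul_self_sqrt (show 0 ≤ n k by linarith)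
            calc n k * (√(n k) / n k ^ 2) * √(n k) = n k * (√(n k) * √(n k)) / n k ^ 2 := by ring
              _ = 1 := by rw [this]; field_simp
          rw [e2]; ring
  refine (sum_pairs_symm _ _ (fun p p' => if |ρ p'.1 - ρ p.1| ≤ 1 + y p.1 p.2 then
        (α p.1 p.2 / n p.1 ^ 2) * (α p'.1 p'.2 / n p'.1 ^ 2) else 0) ?_).trans ?_
  · intro p hp p' hp'
    have h1 := hβ p hp
    have h2 := hβ p' hp'
    have h3 := mul_nonneg h1 h2
    rw [Finset.mem_sigma] at hp hp'
    have y1 := hy0 _ hp.1 _ hp.2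
    have y2 := hy0 _ hp'.1 _ hp'.2
    have h4 : 0 ≤ (α p'.1 p'.2 / n p'.1 ^ 2) * (α p.1 p.2 / n p.1 ^ 2) := mul_nonneg h2 h1
    by_cases a1 : |(ρ p.1 - y p.1 p.2) - (ρ p'.1 - y p'.1 p'.2)| ≤ 1
    · rw [if_pos a1]
      by_cases a2 : |ρ p'.1 - ρ p.1| ≤ 1 + y p.1 p.2
      · rw [if_pos a2]
        split_ifs <;> linarith
      · have a3 : |ρ p.1 - ρ p'.1| ≤ 1 + y p'.1 p'.2 := by
          rw [abs_le] at a1 a2 ⊢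
          rw [not_and_or] at a2
          rcases le_total (y p.1 p.2) (y p'.1 p'.2) with hh | hh
          · constructor <;> linarith [a1.1, a1.2]
          · exfalso
            rcases a2 with a2 | a2 <;> apply a2 <;> linarith [a1.1, a1.2]
        rw [if_neg a2, if_pos a3]
        exact le_of_eq (by ring)
    · rw [if_neg a1]
      split_ifs <;> linarith
  · rw [mul_assoc]
    refine mul_le_mul_of_nonneg_left ?_ (by norm_num)
    calc ∑ p ∈ Ks.sigma T, ∑ p' ∈ Ks.sigma T, (if |ρ p'.1 - ρ p.1| ≤ 1 + y p.1 p.2 then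
        (α p.1 p.2 / n p.1 ^ 2) * (α p'.1 p'.2 / n p'.1 ^ 2) else 0)
        ≤ ∑ p ∈ Ks.sigma T, (α p.1 p.2 / n p.1 ^ 2) *
            (Q * K' * (1 + v p.1 p.2 * n p.1) / √(n p.1)) := by
          refine Finset.sum_le_sum fun p hp => ?_
          have h1 := hβ p hp
          rw [Finset.mem_sigma] at hp
          have := inner p.1 hp.1 (y p.1 p.2) (hy0 _ hp.1 _ hp.2) (hyρ _ hp.1 _ hp.2)
          have e : ∀ p' : (Σ _ : Z, ℕ), (if |ρ p'.1 - ρ p.1| ≤ 1 + y p.1 p.2 then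
              (α p.1 p.2 / n p.1 ^ 2) * (α p'.1 p'.2 / n p'.1 ^ 2) else 0)
              = (α p.1 p.2 / n p.1 ^ 2) * (if |ρ p'.1 - ρ p.1| ≤ 1 + y p.1 p.2 then
                (α p'.1 p'.2 / n p'.1 ^ 2) else 0) := by
            intro p'; split_ifs <;> simp
          simp_rw [e]
          rw [← Finset.mul_sum]
          refine mul_le_mul_of_nonneg_left (this.trans ?_) h1
          gcongr
          exact hyv _ hp.1 _ hp.2
      _ = ∑ k ∈ Ks, Q * K' / (n k ^ 2 * √(n k)) *
            (∑ i ∈ T k, α k i + n k * ∑ i ∈ T k, α k i * v k i) := by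
          rw [Finset.sum_sigma]
          refine Finset.sum_congr rfl fun k _ => ?_
          rw [Finset.mul_sum, ← Finset.sum_add_distrib, Finset.mul_sum]
          refine Finset.sum_congr rfl fun i _ => ?_
          ring
      _ ≤ ∑ k ∈ Ks, Q * K' / (n k ^ 2 * √(n k)) * (Q * √(n k) + n k * C1) := by
          refine Finset.sum_le_sum fun k hk => ?_
          have := hn k hk
          have a := hmass k hk
          have b := hmom k hk
          gcongr
      _ = K' * (Q ^ 2 * ∑ k ∈ Ks, 1 / n k ^ 2 + Q * C1 * ∑ k ∈ Ks, √(n k) / n k ^ 2) := by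
          rw [Finset.mul_sum, Finset.mul_sum, ← Finset.sum_add_distrib, Finset.mul_sum]
          refine Finset.sum_congr rfl fun k hk => ?_
          have hnk := hn k hk
          have hs : 0 < √(n k) := Real.sqrt_pos.2 (by linarith)
          obtain ⟨w, hw, hw2⟩ : ∃ w, 0 < w ∧ n k = w ^ 2 :=
            ⟨√(n k), hs, (Real.sq_sqrt (by linarith)).symm⟩
          rw [hw2, Real.sqrt_sq hw.le]
          field_simp

/-! ### Kinks of a concave function -/

lemma disc_abel (b : ℕ → ℝ) (hb : b 0 = 0) (q : ℕ) :
    ∑ j ∈ Finset.range q, (2 * b (j + 1) - b j - b (j + 2)) * ((j : ℝ) + 1)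
      = b q - q * (b (q + 1) - b q) := by
  induction q with
  | zero => simp [hb]
  | succ q ih => rw [Finset.sum_range_succ, ih]; push_cast; ring

lemma disc_abel_min (b : ℕ → ℝ) (hb : b 0 = 0) (i q : ℕ) (hiq : i ≤ q) :
    ∑ j ∈ Finset.range q, (2 * b (j + 1) - b j - b (j + 2)) * min ((j : ℝ) + 1) i
      = b i - i * (b (q + 1) - b q) := by
  induction q, hiq using Nat.le_induction with
  | base =>
    rw [← disc_abel b hb i]
    refine Finset.sum_congr rfl fun j hj => ?_
    rw [min_eq_left]
    have : j + 1 ≤ i := Finset.mem_range.1 hj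
    exact_mod_cast this
  | succ q hq ih =>
    rw [Finset.sum_range_succ, ih, min_eq_right]
    · ring
    · have : (i : ℝ) ≤ q := by exact_mod_cast hq
      linarith

lemma disc_tele (b : ℕ → ℝ) (hb : b 0 = 0) (q : ℕ) :
    ∑ j ∈ Finset.range q, (2 * b (j + 1) - b j - b (j + 2)) = b 1 - (b (q + 1) - b q) := by
  induction q with
  | zero => simp [hb]
  | succ q ih => rw [Finset.sum_range_succ, ih]; ring

lemma disc_parts (b : ℕ → ℝ) (hb : b 0 = 0) (z : ℂ) (M : ℕ) :
    (1 - z) ^ 2 * ∑ j ∈ Finset.range (M + 1), (b j : ℂ) * z ^ j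
      = z * (b 1 - ∑ j ∈ Finset.range M, ((2 * b (j + 1) - b j - b (j + 2) : ℝ) : ℂ) * z ^ (j + 1))
        - b (M + 1) * z ^ (M + 1) + b M * z ^ (M + 2) := by
  induction M with
  | zero => simp [hb]; ring
  | succ M ih =>
    rw [Finset.sum_range_succ, mul_add, ih, Finset.sum_range_succ]
    push_cast
    ring

/-- The jump of the slope, at depth `(j + 1) σ`, of the piecewise linear interpolation of `B`
on the grid of step `σ`. -/
def kink (B : ℝ → ℝ) (σ : ℝ) (j : ℕ) : ℝ :=
  (2 * B ((j + 1 : ℕ) * σ) - B (j * σ) - B ((j + 2 : ℕ) * σ)) / σ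

/-- The profile hypotheses on a chord length function `B` of width `W`. -/
structure Profile (B : ℝ → ℝ) (W K Bm c : ℝ) (p : ℕ) : Prop where
  zero : B 0 = 0
  last : B W = 0
  conc : ConcaveOn ℝ (Icc 0 W) B
  nonneg : ∀ u ∈ Icc 0 W, 0 ≤ B u
  le : ∀ u ∈ Icc 0 W, B u ≤ Bm
  holder : ∀ x ∈ Icc 0 W, ∀ y ∈ Icc 0 W, |B x - B y| ≤ K * √|x - y|
  lower : ∀ u ∈ Icc 0 (W / p), c * u ≤ B u
  lower' : ∀ u ∈ Icc 0 (W / p), c * u ≤ B (W - u)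

lemma Profile.rev {B : ℝ → ℝ} {W K Bm c : ℝ} {p : ℕ} (h : Profile B W K Bm c p) :
    Profile (fun u => B (W - u)) W K Bm c p where
  zero := by simpa using h.last
  last := by simpa using h.zero
  conc := by
    refine ⟨convex_Icc 0 W, fun x hx y hy a b ha hb hab => ?_⟩
    have := h.conc.2 (x := W - x) ⟨by linarith [hx.2], by linarith [hx.1]⟩ (y := W - y)
      ⟨by linarith [hy.2], by linarith [hy.1]⟩ ha hb hab
    simp only [smul_eq_mul] at this ⊢
    refine this.trans (le_of_eq ?_)
    congr 1
    linear_combination hab * W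
  nonneg u hu := h.nonneg _ ⟨by linarith [hu.2], by linarith [hu.1]⟩
  le u hu := h.le _ ⟨by linarith [hu.2], by linarith [hu.1]⟩
  holder x hx y hy := by
    have := h.holder (W - x) ⟨by linarith [hx.2], by linarith [hx.1]⟩ (W - y)
      ⟨by linarith [hy.2], by linarith [hy.1]⟩
    refine this.trans (le_of_eq ?_)
    rw [← abs_neg]
    congr 3
    ring
  lower u hu := h.lower' u hu
  lower' u hu := by simpa using h.lower u hu

section
variable {B : ℝ → ℝ} {W K Bm c : ℝ} {p : ℕ}

lemma Profile.kink_nonneg (h : Profile B W K Bm c p) {σ : ℝ} (hσ : 0 < σ) (j : ℕ)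
    (hj : ((j + 2 : ℕ) : ℝ) * σ ≤ W) : 0 ≤ kink B σ j := by
  refine div_nonneg ?_ hσ.le
  have hc := h.conc.2
  have := @hc ((j : ℝ) * σ) ⟨by positivity, le_trans (by push_cast; nlinarith) hj⟩
    (((j + 2 : ℕ) : ℝ) * σ) ⟨by positivity, hj⟩ (1 / 2) (1 / 2) (by norm_num) (by norm_num)
    (by norm_num)
  simp only [smul_eq_mul] at this
  have e : 1 / 2 * (j * σ) + 1 / 2 * ((j + 2 : ℕ) * σ) = (j + 1 : ℕ) * σ := by push_cast; ring
  rw [e] at this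
  linarith

lemma Profile.slope_bound (h : Profile B W K Bm c p) (hW : 0 < W) (hBm : 0 ≤ Bm) (hp : 3 ≤ p)
    {σ : ℝ} (hσ : 0 < σ) {q : ℕ} (hq : 1 ≤ q) (hWσ : (p * q : ℕ) * σ = W) :
    |(B ((q + 1 : ℕ) * σ) - B (q * σ)) / σ| ≤ Bm * p / W := by
  have hpR : (3 : ℝ) ≤ p := by exact_mod_cast hp
  have hqR : (1 : ℝ) ≤ q := by exact_mod_cast hq
  have hWp : W / p = q * σ := by
    rw [← hWσ]; push_cast; field_simp
  have hq1 : (q + 1 : ℕ) * σ ≤ W - W / p := by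
    rw [hWp, ← hWσ]; push_cast
    have : (q : ℝ) + 1 ≤ p * q - q := by nlinarith
    nlinarith
  have hWp0 : 0 < W / p := by positivity
  have hx1 : (q : ℝ) * σ ∈ Icc 0 W := ⟨by positivity, by rw [← hWp]; exact div_le_self hW.le (by linarith)⟩
  have hx2 : ((q + 1 : ℕ) : ℝ) * σ ∈ Icc 0 W := ⟨by positivity, by linarith⟩
  have e : ((q + 1 : ℕ) : ℝ) * σ - q * σ = σ := by push_cast; ring
  have e2 : Bm * p / W = Bm / (W / p) := by field_simp
  rw [e2, abs_le]
  constructor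
  · have := h.conc.slope_anti_adjacent (x := q * σ) (y := (q + 1 : ℕ) * σ) (z := W) hx1
      ⟨hW.le, le_rfl⟩ (by linarith) (by linarith)
    rw [e, h.last] at this
    refine le_trans ?_ this
    rw [zero_sub, neg_div, neg_le_neg_iff]
    have := h.le _ hx2
    gcongr
    linarith
  · have := h.conc.slope_anti_adjacent (x := 0) (y := q * σ) (z := (q + 1 : ℕ) * σ)
      ⟨le_rfl, hW.le⟩ hx2 (by positivity) (by linarith)
    rw [e, h.zero] at this
    refine this.trans ?_
    rw [hWp, sub_zero, sub_zero]
    have := h.le _ hx1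
    gcongr

lemma Profile.kink_moment (h : Profile B W K Bm c p) (hW : 0 < W) (hBm : 0 ≤ Bm) (hp : 3 ≤ p)
    {σ : ℝ} (hσ : 0 < σ) {q : ℕ} (hq : 1 ≤ q) (hWσ : (p * q : ℕ) * σ = W) :
    ∑ j ∈ Finset.range q, kink B σ j * ((j + 1) * σ) ≤ 2 * Bm := by
  have hs := h.slope_bound hW hBm hp hσ hq hWσ
  have hpR : (3 : ℝ) ≤ p := by exact_mod_cast hp
  have hWp : W / p = q * σ := by
    rw [← hWσ]; push_cast; field_simp
  have := disc_abel (fun j => B (j * σ)) (by simpa using h.zero) q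
  calc ∑ j ∈ Finset.range q, kink B σ j * ((j + 1) * σ)
      = ∑ j ∈ Finset.range q, (2 * B ((j + 1 : ℕ) * σ) - B (j * σ) - B ((j + 2 : ℕ) * σ)) *
        ((j : ℝ) + 1) := by
        refine Finset.sum_congr rfl fun j _ => ?_
        rw [kink]; field_simp
    _ = B (q * σ) - (q * σ) * ((B ((q + 1 : ℕ) * σ) - B (q * σ)) / σ) := by
        rw [this]; field_simp
    _ ≤ Bm + (q * σ) * (Bm * p / W) := by
        have h1 := h.le (q * σ) ⟨by positivity, by rw [← hWp]; exact div_le_self hW.le (by linarith)⟩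
        have h2 := (abs_le.1 hs).1
        nlinarith [mul_nonneg (Nat.cast_nonneg (α := ℝ) q) hσ.le]
    _ = 2 * Bm := by rw [← hWp]; field_simp; ring

/-- The kinks truncated at depth `u` are controlled by a chord at depth at most `u`. -/
lemma Profile.kink_min (h : Profile B W K Bm c p) (hW : 0 < W) (hBm : 0 ≤ Bm) (hp : 3 ≤ p)
    (hc : 0 < c)
    {σ : ℝ} (hσ : 0 < σ) {q : ℕ} (hq : 1 ≤ q) (hWσ : (p * q : ℕ) * σ = W) {u : ℝ} (hu : σ ≤ u) :
    ∃ x ∈ Ioc 0 u, x ≤ W / p ∧ ∑ j ∈ Finset.range q, kink B σ j * min ((j + 1) * σ) u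
      ≤ 2 * (1 + Bm * p / W / c) * B x := by
  have hs := h.slope_bound hW hBm hp hσ hq hWσ
  have hpR : (3 : ℝ) ≤ p := by exact_mod_cast hp
  have hqR : (1 : ℝ) ≤ q := by exact_mod_cast hq
  have hWp : W / p = q * σ := by
    rw [← hWσ]; push_cast; field_simp
  obtain ⟨i, hi1, hiq, hiu, hmin⟩ : ∃ i : ℕ, 1 ≤ i ∧ i ≤ q ∧ i * σ ≤ u ∧
      ∀ j ∈ Finset.range q, min (((j : ℝ) + 1) * σ) u ≤ 2 * (min ((j : ℝ) + 1) i * σ) := by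
    by_cases hcase : u ≤ q * σ
    · refine ⟨⌊u / σ⌋₊, ?_, ?_, ?_, ?_⟩
      · rw [Nat.one_le_floor_iff, le_div_iff₀ hσ]; linarith
      · apply Nat.floor_le_of_le
        rw [div_le_iff₀ hσ]; exact hcase
      · rw [← le_div_iff₀ hσ]; exact Nat.floor_le (div_nonneg (by linarith) hσ.le)
      · intro j _
        have h1 : (1 : ℝ) ≤ (⌊u / σ⌋₊ : ℕ) := by
          have : 1 ≤ ⌊u / σ⌋₊ := by rw [Nat.one_le_floor_iff, le_div_iff₀ hσ]; linarith
          exact_mod_cast this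
        have h2 := Nat.lt_floor_add_one (u / σ)
        rw [div_lt_iff₀ hσ] at h2
        rcases le_total ((j : ℝ) + 1) (⌊u / σ⌋₊ : ℕ) with hh | hh
        · rw [min_eq_left hh]
          refine (min_le_left _ _).trans ?_
          have : 0 ≤ ((j : ℝ) + 1) * σ := by positivity
          linarith
        · rw [min_eq_right hh]
          refine (min_le_right _ _).trans ?_
          nlinarith
    · refine ⟨q, hq, le_rfl, by linarith, fun j hj => ?_⟩
      have : (j : ℝ) + 1 ≤ q := by exact_mod_cast (Finset.mem_range.1 hj)
      rw [min_eq_left this]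
      refine (min_le_left _ _).trans ?_
      have : 0 ≤ ((j : ℝ) + 1) * σ := by positivity
      linarith
  have hi1R : (1 : ℝ) ≤ i := by exact_mod_cast hi1
  have hiqR : (i : ℝ) ≤ q := by exact_mod_cast hiq
  have hiW : i * σ ≤ W / p := by rw [hWp]; gcongr
  refine ⟨i * σ, ⟨by positivity, hiu⟩, hiW, ?_⟩
  have hk : ∀ j ∈ Finset.range q, 0 ≤ kink B σ j := by
    intro j hj
    apply h.kink_nonneg hσ
    rw [← hWσ]
    gcongr
    have := Finset.mem_range.1 hj
    nlinarith
  have hab := disc_abel_min (fun j => B (j * σ)) (by simpa using h.zero) i q hiq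
  calc ∑ j ∈ Finset.range q, kink B σ j * min ((j + 1) * σ) u
      ≤ ∑ j ∈ Finset.range q, kink B σ j * (2 * (min ((j : ℝ) + 1) i * σ)) :=
        Finset.sum_le_sum fun j hj => mul_le_mul_of_nonneg_left (hmin j hj) (hk j hj)
    _ = 2 * ∑ j ∈ Finset.range q, (2 * B ((j + 1 : ℕ) * σ) - B (j * σ) - B ((j + 2 : ℕ) * σ)) *
        min ((j : ℝ) + 1) i := by
        rw [Finset.mul_sum]
        refine Finset.sum_congr rfl fun j _ => ?_
        rw [kink]; field_simp
    _ = 2 * (B (i * σ) - (i * σ) * ((B ((q + 1 : ℕ) * σ) - B (q * σ)) / σ)) := by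
        rw [hab]; field_simp
    _ ≤ 2 * (B (i * σ) + (B (i * σ) / c) * (Bm * p / W)) := by
        have h1 := h.lower (i * σ) ⟨by positivity, hiW⟩
        have h2 := (abs_le.1 hs).1
        have h3 : i * σ ≤ B (i * σ) / c := by rw [le_div_iff₀ hc]; linarith
        have h4 : 0 ≤ Bm * p / W := by positivity
        have h5 : 0 ≤ i * σ := by positivity
        nlinarith
    _ = _ := by ring

end

/-! ### Fourier integrals of concave functions -/

lemma riemann_sum (g : ℝ → ℂ) (σ ω : ℝ) (hσ : 0 < σ) (m : ℕ)
    (hg : ContinuousOn g (Icc 0 (m * σ)))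
    (hω : ∀ j < m, ∀ u ∈ Icc ((j : ℝ) * σ) ((j + 1 : ℕ) * σ), ‖g u - g (j * σ)‖ ≤ ω) :
    ‖(∫ u in (0 : ℝ)..(m * σ), g u) - σ * ∑ j ∈ Finset.range m, g (j * σ)‖ ≤ m * σ * ω := by
  have hstep : ∀ j : ℕ, ((j : ℝ) * σ) ≤ (j + 1 : ℕ) * σ := by intro j; push_cast; nlinarith
  have hint : ∀ j < m, IntervalIntegrable g volume ((j : ℝ) * σ) ((j + 1 : ℕ) * σ) := by
    intro j hj
    apply ContinuousOn.intervalIntegrable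
    apply hg.mono
    rw [uIcc_of_le (hstep j)]
    apply Icc_subset_Icc (by positivity)
    gcongr
    omega
  have hsum := intervalIntegral.sum_integral_adjacent_intervals (a := fun j : ℕ => (j : ℝ) * σ)
    (f := g) (μ := volume) (n := m) hint
  simp only [Nat.cast_zero, zero_mul] at hsum
  rw [← hsum, Finset.mul_sum, ← Finset.sum_sub_distrib]
  refine (norm_sum_le _ _).trans ?_
  calc ∑ j ∈ Finset.range m, ‖(∫ u in ((j : ℝ) * σ)..((j + 1 : ℕ) * σ), g u) - σ * g (j * σ)‖
      ≤ ∑ j ∈ Finset.range m, σ * ω := by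
        refine Finset.sum_le_sum fun j hj => ?_
        have e : (σ : ℂ) * g (j * σ) = ∫ u in ((j : ℝ) * σ)..((j + 1 : ℕ) * σ), g (j * σ) := by
          rw [intervalIntegral.integral_const, Complex.real_smul]
          push_cast; ring
        rw [e, ← intervalIntegral.integral_sub (hint j (Finset.mem_range.1 hj)) (by simp)]
        have := intervalIntegral.norm_integral_le_of_norm_le_const (a := (j : ℝ) * σ)
          (b := (j + 1 : ℕ) * σ) (C := ω) (f := fun u => g u - g (j * σ)) (by
            intro u hu
            rw [uIoc_of_le (hstep j)] at hu
            exact hω j (Finset.mem_range.1 hj) u ⟨hu.1.le, hu.2⟩)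
        refine this.trans (le_of_eq ?_)
        have e2 : ((j + 1 : ℕ) : ℝ) * σ - j * σ = σ := by push_cast; ring
        rw [e2, abs_of_pos hσ, mul_comm]
    _ = m * σ * ω := by rw [Finset.sum_const, nsmul_eq_mul, Finset.card_range]; ring

section
variable {B : ℝ → ℝ} {W K Bm c : ℝ} {p : ℕ}

lemma Profile.continuousOn (h : Profile B W K Bm c p) : ContinuousOn B (Icc 0 W) := by
  intro x hx
  rw [ContinuousWithinAt, tendsto_iff_norm_sub_tendsto_zero]
  have h1 : Filter.Tendsto (fun y : ℝ => K * √|y - x|) (nhdsWithin x (Icc 0 W)) (nhds 0) := by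
    have : ContinuousAt (fun y : ℝ => K * √|y - x|) x := by fun_prop
    have h2 := this.tendsto
    simp only [sub_self, abs_zero, Real.sqrt_zero, mul_zero] at h2
    exact h2.mono_left nhdsWithin_le_nhds
  refine squeeze_zero' (Filter.Eventually.of_forall fun y => norm_nonneg _) ?_ h1
  filter_upwards [self_mem_nhdsWithin] with y hy
  exact h.holder y hy x hx

lemma one_sub_ee_sq (x : ℝ) : (1 - ee x) ^ 2 = -(4 * (Real.sin (Real.pi * x) : ℂ) ^ 2) * ee x := by
  have h1 : ee x = ee (x / 2) ^ 2 := by rw [sq, ← ee_add]; congr 1; ring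
  have h2 : ee (x / 2) = Real.cos (Real.pi * x) + Real.sin (Real.pi * x) * Complex.I := by
    rw [ee, Complex.ofReal_cos, Complex.ofReal_sin, ← Complex.exp_mul_I]
    congr 1
    push_cast; ring
  have h3 : (Real.cos (Real.pi * x) : ℂ) ^ 2 = 1 - (Real.sin (Real.pi * x) : ℂ) ^ 2 := by
    rw [← Complex.ofReal_pow, ← Complex.ofReal_pow, Real.cos_sq']; push_cast; ring
  rw [h1, h2]
  set C := (Real.cos (Real.pi * x) : ℂ)
  set S := (Real.sin (Real.pi * x) : ℂ)
  have hI := Complex.I_sq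
  have e1 : (1 - (C + S * Complex.I) ^ 2) = -2 * S * Complex.I * (C + S * Complex.I) := by
    linear_combination (-1 : ℂ) * h3 + S ^ 2 * hI
  rw [e1]
  linear_combination 4 * S ^ 2 * (C + S * Complex.I) ^ 2 * hI

lemma sin_sq_sub_sq (x : ℝ) (h0 : 0 ≤ x) (h1 : x ≤ 1) : |4 * Real.sin x ^ 2 - 4 * x ^ 2| ≤ 2 * x ^ 4 := by
  rcases h0.eq_or_lt with rfl | h0
  · simp
  have h2 := Real.sin_gt_sub_cube h0 
  have h3 := Real.sin_lt h0
  have h4 : 0 < Real.sin x := Real.sin_pos_of_pos_of_lt_pi h0 (by linarith [Real.pi_gt_three])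
  rw [abs_le]
  constructor
  · nlinarith [mul_pos h0 h4, mul_nonneg (mul_nonneg h0.le h0.le) h0.le]
  · nlinarith [pow_pos h0 4]

/-- Twofold summation by parts. The Fourier integral of a concave function is governed by the kinks
near the two ends of its interval; the kinks in the middle have bounded total mass. -/
lemma Profile.expansion (h : Profile B W K Bm c p) (hW : 0 < W) (hBm : 0 ≤ Bm) (hK : 0 ≤ K)
    (hp : 3 ≤ p) {σ : ℝ} (hσ : 0 < σ) {q : ℕ} (hq : 1 ≤ q) (hWσ : (p * q : ℕ) * σ = W)
    {lam : ℝ} (hl : 0 < lam) (hsmall : Real.pi * (lam * σ) ≤ 1) :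
    ‖(4 * Real.pi ^ 2 * lam ^ 2 : ℝ) * (∫ u in (0 : ℝ)..W, (B u : ℂ) * ee (lam * u)) -
      ∑ j ∈ Finset.range q, (kink B σ j : ℂ) * (ee (lam * ((j + 1) * σ)) - 1) -
      ee (lam * W) * ∑ j ∈ Finset.range q,
        (kink (fun u => B (W - u)) σ j : ℂ) * (ee (-(lam * ((j + 1) * σ))) - 1)‖ ≤
      4 * Real.pi ^ 2 * lam ^ 2 * (W * (K * √σ + Bm * (2 * Real.pi * (lam * σ)))) +
      2 * Real.pi ^ 4 * lam ^ 4 * σ ^ 2 * (W * Bm) + 4 * (Bm * p / W) := by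
  have hpR : (3 : ℝ) ≤ p := by exact_mod_cast hp
  have hqR : (1 : ℝ) ≤ q := by exact_mod_cast hq
  obtain ⟨r, hr⟩ : ∃ r, p * q = 2 * q + r + 1 := by
    have : 3 * q ≤ p * q := Nat.mul_le_mul_right _ hp
    exact ⟨p * q - 2 * q - 1, by omega⟩
  set b : ℕ → ℝ := fun j => B (j * σ) with hb
  have hb0 : b 0 = 0 := by simpa [hb] using h.zero
  set m := 2 * q + r + 1 with hm
  have hmσ : (m : ℝ) * σ = W := by rw [← hWσ, hr]
  have hbm : b m = 0 := by simp only [hb]; rw [hmσ, h.last]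
  set z := ee (lam * σ) with hz
  have hzp : ∀ j : ℕ, z ^ j = ee (lam * (j * σ)) := by
    intro j
    rw [hz, ← ee_nat_mul]; congr 1; ring
  set s := ∑ j ∈ Finset.range m, (b j : ℂ) * z ^ j with hs
  -- `σ s` is a Riemann sum of the Fourier integral with step `σ`
  have hin : ∀ j : ℕ, j ≤ m → (j : ℝ) * σ ∈ Icc 0 W := by
    intro j hj
    refine ⟨by positivity, ?_⟩
    rw [← hmσ]; gcongr
  have hR : ‖(∫ u in (0 : ℝ)..W, (B u : ℂ) * ee (lam * u)) - σ * s‖ ≤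
      W * (K * √σ + Bm * (2 * Real.pi * (lam * σ))) := by
    have := riemann_sum (fun u => (B u : ℂ) * ee (lam * u)) σ
      (K * √σ + Bm * (2 * Real.pi * (lam * σ))) hσ m ?_ ?_
    · rw [hmσ] at this
      refine le_trans (le_of_eq ?_) this
      congr 3
      refine Finset.sum_congr rfl fun j _ => ?_
      rw [hzp]
    · rw [hmσ]
      refine ContinuousOn.mul ?_ ?_
      · exact Complex.continuous_ofReal.comp_continuousOn h.continuousOn
      · have : Continuous fun u => ee (lam * u) := by fun_prop
        exact this.continuousOn
    · intro j hj u hu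
      have hju := hin j hj.le
      have hj1 := hin (j + 1) hj
      have huW : u ∈ Icc 0 W := ⟨hju.1.trans hu.1, hu.2.trans hj1.2⟩
      have hd : |u - j * σ| ≤ σ := by
        have h2 := hu.2
        push_cast at h2
        rw [abs_le]; constructor <;> linarith [hu.1]
      have e : (B u : ℂ) * ee (lam * u) - (B (j * σ) : ℂ) * ee (lam * (j * σ)) =
          ((B u - B (j * σ) : ℝ) : ℂ) * ee (lam * u) +
          (B (j * σ) : ℂ) * (ee (lam * u) - ee (lam * (j * σ))) := by push_cast; ring
      rw [e]
      refine (norm_add_le _ _).trans ?_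
      rw [norm_mul, norm_mul, norm_ee, mul_one, Complex.norm_real, Complex.norm_real,
        Real.norm_eq_abs, Real.norm_eq_abs]
      refine add_le_add ?_ ?_
      · refine (h.holder u huW _ hju).trans ?_
        gcongr
      · rw [abs_of_nonneg (h.nonneg _ hju)]
        refine mul_le_mul (h.le _ hju) ?_ (norm_nonneg _) hBm
        refine (norm_ee_sub_le _ _).trans ?_
        rw [← mul_sub, abs_mul, abs_of_pos hl]
        gcongr
  have hsσ : ‖(σ : ℂ) * s‖ ≤ W * Bm := by
    rw [norm_mul, Complex.norm_real, Real.norm_eq_abs, abs_of_pos hσ]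
    have : ‖s‖ ≤ ∑ j ∈ Finset.range m, Bm := by
      refine (norm_sum_le _ _).trans (Finset.sum_le_sum fun j hj => ?_)
      rw [norm_mul, hzp, norm_ee, mul_one, Complex.norm_real, Real.norm_eq_abs]
      have := hin j (Finset.mem_range.1 hj).le
      rw [abs_of_nonneg (h.nonneg _ this)]
      exact h.le _ this
    rw [Finset.sum_const, nsmul_eq_mul, Finset.card_range] at this
    calc σ * ‖s‖ ≤ σ * (m * Bm) := by gcongr
      _ = W * Bm := by rw [← hmσ]; ring
  -- twofold summation by parts: the second differences of `b` are the kinks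
  have hparts : (4 * (Real.sin (Real.pi * (lam * σ)) : ℂ) ^ 2) * s =
      -(b 1 : ℂ) + σ * ∑ j ∈ Finset.range (m - 1), (kink B σ j : ℂ) * z ^ (j + 1)
        - b (m - 1) * z ^ m := by
    have := disc_parts b hb0 z (m - 1)
    have hm1 : m - 1 + 1 = m := by omega
    have hm2 : m - 1 + 2 = m + 1 := by omega
    rw [hm1, hm2, hbm, ← hs, hz, one_sub_ee_sq, ← hz] at this
    have hz0 : z ≠ 0 := ee_ne_zero _
    have e : ∑ j ∈ Finset.range (m - 1), ((2 * b (j + 1) - b j - b (j + 2) : ℝ) : ℂ) * z ^ (j + 1)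
        = σ * ∑ j ∈ Finset.range (m - 1), (kink B σ j : ℂ) * z ^ (j + 1) := by
      rw [Finset.mul_sum]
      refine Finset.sum_congr rfl fun j _ => ?_
      rw [← mul_assoc, ← Complex.ofReal_mul, kink, mul_div_cancel₀ _ hσ.ne']
    rw [e] at this
    apply mul_left_cancel₀ hz0
    rw [Complex.ofReal_zero] at this
    linear_combination (-1 : ℂ) * this
  -- the `q` kinks at either end are kept, the `r` kinks in the middle go to the error
  set B' : ℝ → ℝ := fun u => B (W - u) with hB'
  have hB'b : ∀ i ≤ m, B' (i * σ) = b (m - i) := by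
    intro i hi
    simp only [hB', hb]
    congr 1
    rw [Nat.cast_sub hi, ← hmσ]; ring
  have hrev : ∀ i, i < q → kink B σ (m - 2 - i) = kink B' σ i := by
    intro i hi
    have hi' : i + 2 ≤ m := by omega
    rw [kink, kink, hB'b i (by omega), hB'b (i + 1) (by omega), hB'b (i + 2) hi']
    simp only [hb]
    have e1 : m - 2 - i + 1 = m - (i + 1) := by omega
    have e2 : m - 2 - i + 2 = m - i := by omega
    have e3 : m - 2 - i = m - (i + 2) := by omega
    rw [e1, e2, e3]
    ring
  have hsplit : ∀ f : ℕ → ℂ, ∑ j ∈ Finset.range (m - 1), f j = ∑ j ∈ Finset.range q, f j +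
      ∑ j ∈ Finset.range r, f (q + j) + ∑ i ∈ Finset.range q, f (m - 2 - i) := by
    intro f
    have : m - 1 = (q + r) + q := by omega
    rw [this, Finset.sum_range_add, Finset.sum_range_add,
      ← Finset.sum_range_reflect (fun j => f (q + r + j))]
    congr 1
    refine Finset.sum_congr rfl fun i hi => ?_
    congr 1
    have := Finset.mem_range.1 hi
    omega
  have hpf := h.rev
  set s1 := (B ((q + 1 : ℕ) * σ) - B (q * σ)) / σ with hs1
  set s2 := (B' ((q + 1 : ℕ) * σ) - B' (q * σ)) / σ with hs2
  have hs1b : |s1| ≤ Bm * p / W := h.slope_bound hW hBm hp hσ hq hWσ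
  have hs2b : |s2| ≤ Bm * p / W := hpf.slope_bound hW hBm hp hσ hq hWσ
  have ht1 : ∑ j ∈ Finset.range q, kink B σ j = b 1 / σ - s1 := by
    have := disc_tele b hb0 q
    simp only [kink]
    rw [← Finset.sum_div, hs1, ← sub_div]
    exact congrArg (· / σ) this
  have ht2 : ∑ j ∈ Finset.range q, kink B' σ j = b (m - 1) / σ - s2 := by
    have := disc_tele (fun j => B' (j * σ)) (by
      simp only [Nat.cast_zero, zero_mul]; exact hpf.zero) q
    simp only [kink]
    rw [← Finset.sum_div, hs2, ← sub_div, ← hB'b 1 (by omega)]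
    exact congrArg (· / σ) this
  have ht3 : ∑ j ∈ Finset.range (m - 1), kink B σ j = b 1 / σ + b (m - 1) / σ := by
    have := disc_tele b hb0 (m - 1)
    rw [show m - 1 + 1 = m by omega, hbm] at this
    simp only [kink]
    rw [← Finset.sum_div, ← add_div]
    refine congrArg (· / σ) (this.trans ?_)
    ring
  have hmid : ∑ j ∈ Finset.range r, kink B σ (q + j) = s1 + s2 := by
    have h1 := hsplit fun j => (kink B σ j : ℂ)
    have h2 : ∑ i ∈ Finset.range q, (kink B σ (m - 2 - i) : ℂ)
        = ∑ i ∈ Finset.range q, (kink B' σ i : ℂ) :=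
      Finset.sum_congr rfl fun i hi => by rw [hrev i (Finset.mem_range.1 hi)]
    rw [h2] at h1
    norm_cast at h1
    rw [ht1, ht2, ht3] at h1
    linarith
  have hmidb : ‖∑ j ∈ Finset.range r, (kink B σ (q + j) : ℂ) * z ^ (q + j + 1)‖ ≤ s1 + s2 := by
    rw [← hmid]
    refine (norm_sum_le _ _).trans (Finset.sum_le_sum fun j hj => ?_)
    rw [norm_mul, hzp, norm_ee, mul_one, Complex.norm_real, Real.norm_eq_abs, abs_of_nonneg]
    apply h.kink_nonneg hσ
    have := Finset.mem_range.1 hj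
    exact (hin _ (by omega)).2
  have hzm : ee (lam * W) = z ^ m := by rw [hzp, hmσ]
  have hmain : (4 * (Real.sin (Real.pi * (lam * σ)) : ℂ) ^ 2) * s / σ -
      ∑ j ∈ Finset.range q, (kink B σ j : ℂ) * (ee (lam * ((j + 1) * σ)) - 1) -
      ee (lam * W) * ∑ j ∈ Finset.range q,
        (kink B' σ j : ℂ) * (ee (-(lam * ((j + 1) * σ))) - 1) =
      ∑ j ∈ Finset.range r, (kink B σ (q + j) : ℂ) * z ^ (q + j + 1) - s1 - s2 * z ^ m := by
    have hσC : (σ : ℂ) ≠ 0 := by exact_mod_cast hσ.ne'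
    have f1 : ∑ j ∈ Finset.range q, (kink B σ j : ℂ) * (ee (lam * ((j + 1) * σ)) - 1) =
        ∑ j ∈ Finset.range q, (kink B σ j : ℂ) * z ^ (j + 1) - (b 1 / σ - s1 : ℝ) := by
      rw [← ht1]
      push_cast
      rw [← Finset.sum_sub_distrib]
      refine Finset.sum_congr rfl fun j _ => ?_
      rw [hzp]; push_cast; ring
    have f2 : ee (lam * W) * ∑ j ∈ Finset.range q,
        (kink B' σ j : ℂ) * (ee (-(lam * ((j + 1) * σ))) - 1) =
        ∑ i ∈ Finset.range q, (kink B σ (m - 2 - i) : ℂ) * z ^ (m - 2 - i + 1)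
          - (b (m - 1) / σ - s2 : ℝ) * z ^ m := by
      rw [← ht2]
      push_cast
      rw [Finset.sum_mul, Finset.mul_sum, ← Finset.sum_sub_distrib]
      refine Finset.sum_congr rfl fun j hj => ?_
      have hj' := Finset.mem_range.1 hj
      rw [hrev j hj', ← hzm]
      have : z ^ (m - 2 - j + 1) = ee (lam * W) * ee (-(lam * ((j + 1) * σ))) := by
        rw [hzp, ← ee_add]
        congr 1
        rw [show m - 2 - j + 1 = m - (j + 1) by omega, Nat.cast_sub (by omega), ← hmσ]
        push_cast; ring
      rw [this]; ring
    rw [f1, f2, hparts, hsplit]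
    push_cast
    field_simp
    ring
  set I := ∫ u in (0 : ℝ)..W, (B u : ℂ) * ee (lam * u) with hI
  set S1 := ∑ j ∈ Finset.range q, (kink B σ j : ℂ) * (ee (lam * ((j + 1) * σ)) - 1)
  set S2 := ee (lam * W) * ∑ j ∈ Finset.range q,
        (kink B' σ j : ℂ) * (ee (-(lam * ((j + 1) * σ))) - 1)
  have hfin : (4 * Real.pi ^ 2 * lam ^ 2 : ℝ) * I - S1 - S2 =
      (4 * Real.pi ^ 2 * lam ^ 2 : ℝ) * (I - σ * s) -
      (((4 * Real.sin (Real.pi * (lam * σ)) ^ 2 - 4 * (Real.pi * (lam * σ)) ^ 2) / σ ^ 2 : ℝ) : ℂ)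
        * (σ * s) +
      ((4 * (Real.sin (Real.pi * (lam * σ)) : ℂ) ^ 2) * s / σ - S1 - S2) := by
    have hσC : (σ : ℂ) ≠ 0 := by exact_mod_cast hσ.ne'
    push_cast
    field_simp
    ring
  rw [hfin, hmain]
  have g1 : ‖(((4 * Real.pi ^ 2 * lam ^ 2 : ℝ)) : ℂ) * (I - σ * s)‖ ≤
      4 * Real.pi ^ 2 * lam ^ 2 * (W * (K * √σ + Bm * (2 * Real.pi * (lam * σ)))) := by
    rw [norm_mul, Complex.norm_real, Real.norm_eq_abs, abs_of_nonneg (by positivity)]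
    gcongr
  have g2 : ‖(((4 * Real.sin (Real.pi * (lam * σ)) ^ 2 - 4 * (Real.pi * (lam * σ)) ^ 2) / σ ^ 2 : ℝ)
      : ℂ) * (σ * s)‖ ≤ 2 * Real.pi ^ 4 * lam ^ 4 * σ ^ 2 * (W * Bm) := by
    rw [norm_mul, Complex.norm_real, Real.norm_eq_abs]
    refine mul_le_mul ?_ hsσ (norm_nonneg _) (by positivity)
    rw [abs_div, abs_of_pos (show 0 < σ ^ 2 by positivity), div_le_iff₀ (by positivity)]
    refine (sin_sq_sub_sq _ (by positivity) hsmall).trans (le_of_eq ?_)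
    ring
  have g3 : ‖∑ j ∈ Finset.range r, (kink B σ (q + j) : ℂ) * z ^ (q + j + 1) - s1 - s2 * z ^ m‖
      ≤ 4 * (Bm * p / W) := by
    refine (norm_sub_le _ _).trans ?_
    have := norm_sub_le (∑ j ∈ Finset.range r, (kink B σ (q + j) : ℂ) * z ^ (q + j + 1)) (s1 : ℂ)
    rw [norm_mul, ← hzm, norm_ee, mul_one, Complex.norm_real, Real.norm_eq_abs]
    rw [Complex.norm_real, Real.norm_eq_abs] at this
    have := le_abs_self s1
    have := le_abs_self s2
    linarith
  exact (norm_add_le _ _).trans (add_le_add ((norm_sub_le _ _).trans (add_le_add g1 g2)) g3)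

end

/-! ### Support function and caps -/

/-- A planar domain with quantitative inner radius `r0`, outer radius `Rm` and cap constant `K`. -/
structure Dom (Ω : Set E2) (r0 Rm K : ℝ) : Prop where
  conv : Convex ℝ Ω
  isOpen : IsOpen Ω
  r0_pos : 0 < r0
  K_nonneg : 0 ≤ K
  ball_sub : Metric.ball 0 r0 ⊆ Ω
  sub_ball : Ω ⊆ Metric.ball 0 Rm
  cap : ∀ θ : E2, ‖θ‖ = 1 → ∀ δ : ℝ, 0 < δ → capDiam Ω θ δ ≤ K * √δ

lemma exists_dom (Ω : Set E2) (hconv : Convex ℝ Ω) (hopen : IsOpen Ω)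
    (hbdd : Bornology.IsBounded Ω) (h0 : (0 : E2) ∈ Ω) (hcurv : CurvBddBelow Ω) :
    ∃ r0 Rm K, Dom Ω r0 Rm K := by
  obtain ⟨r0, hr0, hb⟩ := Metric.isOpen_iff.1 hopen 0 h0
  obtain ⟨Rm, hRm⟩ := hbdd.subset_ball 0
  obtain ⟨K, hK⟩ := hcurv
  refine ⟨r0, Rm, max K 0, hconv, hopen, hr0, le_max_right _ _, hb, hRm, fun θ hθ δ hδ => ?_⟩
  exact (hK θ hθ δ hδ).trans (by gcongr; exact le_max_left _ _)

section
variable {Ω : Set E2} {r0 Rm K : ℝ}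

lemma Dom.zero_mem (h : Dom Ω r0 Rm K) : (0 : E2) ∈ Ω := h.ball_sub (by simp [h.r0_pos])

lemma Dom.Rm_pos (h : Dom Ω r0 Rm K) : 0 < Rm := by
  simpa using h.sub_ball h.zero_mem

lemma Dom.norm_lt (h : Dom Ω r0 Rm K) {x : E2} (hx : x ∈ Ω) : ‖x‖ < Rm := by
  simpa using h.sub_ball hx

lemma Dom.isBounded (h : Dom Ω r0 Rm K) : Bornology.IsBounded Ω :=
  Metric.isBounded_ball.subset h.sub_ball

lemma Dom.isCompact_closure (h : Dom Ω r0 Rm K) : IsCompact (closure Ω) :=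
  h.isBounded.isCompact_closure

lemma Dom.bddAbove (h : Dom Ω r0 Rm K) (ξ : E2) : BddAbove ((fun x => ⟪x, ξ⟫) '' Ω) := by
  refine ⟨Rm * ‖ξ‖, ?_⟩
  rintro _ ⟨x, hx, rfl⟩
  refine (real_inner_le_norm x ξ).trans ?_
  have := (h.norm_lt hx).le
  gcongr

lemma Dom.inner_le (h : Dom Ω r0 Rm K) {x : E2} (hx : x ∈ Ω) (ξ : E2) : ⟪x, ξ⟫ ≤ suppFn Ω ξ :=
  le_csSup (h.bddAbove ξ) ⟨x, hx, rfl⟩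

lemma Dom.inner_le_closure (h : Dom Ω r0 Rm K) {x : E2} (hx : x ∈ closure Ω) (ξ : E2) :
    ⟪x, ξ⟫ ≤ suppFn Ω ξ := by
  have : closure Ω ⊆ {x | ⟪x, ξ⟫ ≤ suppFn Ω ξ} := by
    apply closure_minimal
    · intro y hy; exact h.inner_le hy ξ
    · exact isClosed_le (by fun_prop) continuous_const
  exact this hx

lemma Dom.norm_le_closure (h : Dom Ω r0 Rm K) {x : E2} (hx : x ∈ closure Ω) : ‖x‖ ≤ Rm := by
  have : closure Ω ⊆ {x | ‖x‖ ≤ Rm} := by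
    apply closure_minimal
    · intro y hy; exact (h.norm_lt hy).le
    · exact isClosed_le (by fun_prop) continuous_const
  exact this hx

lemma Dom.supp_le_of (h : Dom Ω r0 Rm K) {ξ : E2} {a : ℝ} (ha : ∀ x ∈ Ω, ⟪x, ξ⟫ ≤ a) :
    suppFn Ω ξ ≤ a := by
  refine csSup_le (Set.Nonempty.image _ ⟨0, h.zero_mem⟩) ?_
  rintro _ ⟨x, hx, rfl⟩
  exact ha x hx

lemma Dom.supp_le (h : Dom Ω r0 Rm K) (ξ : E2) : suppFn Ω ξ ≤ Rm * ‖ξ‖ := by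
  refine h.supp_le_of fun x hx => (real_inner_le_norm x ξ).trans ?_
  have := (h.norm_lt hx).le
  gcongr

lemma Dom.exists_supp (h : Dom Ω r0 Rm K) (ξ : E2) : ∃ x ∈ closure Ω, ⟪x, ξ⟫ = suppFn Ω ξ := by
  obtain ⟨x, hx, hmax⟩ := h.isCompact_closure.exists_isMaxOn
    ⟨0, subset_closure h.zero_mem⟩ (f := fun x => ⟪x, ξ⟫) (by fun_prop)
  refine ⟨x, hx, le_antisymm (h.inner_le_closure hx ξ) (h.supp_le_of fun y hy => ?_)⟩
  exact hmax (subset_closure hy)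

lemma Dom.le_supp (h : Dom Ω r0 Rm K) (ξ : E2) : r0 * ‖ξ‖ ≤ suppFn Ω ξ := by
  by_cases hξ : ξ = 0
  · subst hξ
    simpa using h.inner_le h.zero_mem (0 : E2)
  have hn : 0 < ‖ξ‖ := norm_pos_iff.2 hξ
  have hmem : (r0 / ‖ξ‖) • ξ ∈ closure Ω := by
    have : Metric.closedBall (0 : E2) r0 ⊆ closure Ω := by
      rw [← closure_ball _ h.r0_pos.ne']
      exact closure_mono h.ball_sub
    apply this
    have := h.r0_pos
    rw [mem_closedBall_zero_iff, norm_smul, Real.norm_eq_abs, abs_of_pos (by positivity),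
      div_mul_cancel₀ _ hn.ne']
  have := h.inner_le_closure hmem ξ
  rw [real_inner_smul_left, real_inner_self_eq_norm_sq] at this
  refine le_trans (le_of_eq ?_) this
  field_simp

lemma Dom.supp_smul (h : Dom Ω r0 Rm K) (ξ : E2) {a : ℝ} (ha : 0 ≤ a) :
    suppFn Ω (a • ξ) = a * suppFn Ω ξ := by
  apply le_antisymm
  · refine h.supp_le_of fun x hx => ?_
    rw [real_inner_smul_right]
    have := h.inner_le hx ξ
    gcongr
  · obtain ⟨x, hx, hxe⟩ := h.exists_supp ξ
    have := h.inner_le_closure hx (a • ξ)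
    rwa [real_inner_smul_right, hxe] at this

lemma Dom.supp_add (h : Dom Ω r0 Rm K) (ξ η : E2) :
    suppFn Ω (ξ + η) ≤ suppFn Ω ξ + suppFn Ω η := by
  refine h.supp_le_of fun x hx => ?_
  rw [inner_add_right]
  exact add_le_add (h.inner_le hx ξ) (h.inner_le hx η)

lemma Dom.supp_lip (h : Dom Ω r0 Rm K) (ξ η : E2) :
    suppFn Ω ξ ≤ suppFn Ω η + Rm * ‖ξ - η‖ := by
  have := h.supp_add η (ξ - η)
  rw [add_sub_cancel] at this
  linarith [h.supp_le (ξ - η)]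

lemma Dom.supp_continuous (h : Dom Ω r0 Rm K) : Continuous (suppFn Ω) := by
  refine (LipschitzWith.of_dist_le_mul (K := Rm.toNNReal) fun ξ η => ?_).continuous
  rw [Real.dist_eq, dist_eq_norm, abs_le]
  have h1 := h.supp_lip ξ η
  have h2 := h.supp_lip η ξ
  rw [norm_sub_rev] at h2
  rw [Real.coe_toNNReal _ h.Rm_pos.le]
  constructor <;> linarith

lemma Dom.cap_bounded (h : Dom Ω r0 Rm K) (θ : E2) (δ : ℝ) :
    Bornology.IsBounded {x ∈ frontier Ω | suppFn Ω θ - δ ≤ ⟪x, θ⟫} :=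
  h.isCompact_closure.isBounded.subset fun _ hx => frontier_subset_closure hx.1

lemma Dom.cap_mono (h : Dom Ω r0 Rm K) (θ : E2) {δ δ' : ℝ} (hδ : δ ≤ δ') :
    capDiam Ω θ δ ≤ capDiam Ω θ δ' :=
  Metric.diam_mono (fun _ hx => ⟨hx.1, by linarith [hx.2]⟩) (h.cap_bounded θ δ')

lemma capDiam_nonneg (θ : E2) (δ : ℝ) : 0 ≤ capDiam Ω θ δ := Metric.diam_nonneg

end

/-! ### Chords -/

/-- The rotation of `θ` by a right angle. -/
def perp (θ : E2) : E2 := !₂[-θ 1, θ 0]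

lemma inner_E2 (x y : E2) : ⟪x, y⟫ = x 0 * y 0 + x 1 * y 1 := by
  rw [PiLp.inner_apply, Fin.sum_univ_two]
  simp [mul_comm]

lemma norm_sq_E2 (x : E2) : ‖x‖ ^ 2 = x 0 ^ 2 + x 1 ^ 2 := by
  rw [← real_inner_self_eq_norm_sq, inner_E2]; ring

lemma inner_perp (θ : E2) : ⟪perp θ, θ⟫ = 0 := by
  rw [inner_E2]; simp [perp]; ring

lemma norm_perp (θ : E2) : ‖perp θ‖ = ‖θ‖ := by
  have : ‖perp θ‖ ^ 2 = ‖θ‖ ^ 2 := by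
    rw [norm_sq_E2, norm_sq_E2]; simp [perp]; ring
  exact (sq_eq_sq₀ (norm_nonneg _) (norm_nonneg _)).1 this

/-- The point of coordinates `(s, τ)` in the orthonormal frame `θ, θ^⊥`. -/
def fr (θ : E2) (s τ : ℝ) : E2 := s • θ + τ • perp θ

lemma inner_fr (θ : E2) (hθ : ‖θ‖ = 1) (s τ : ℝ) : ⟪fr θ s τ, θ⟫ = s := by
  rw [fr, inner_add_left, real_inner_smul_left, real_inner_smul_left, inner_perp,
    real_inner_self_eq_norm_sq, hθ]
  ring

lemma norm_fr_sq (θ : E2) (hθ : ‖θ‖ = 1) (s τ : ℝ) : ‖fr θ s τ‖ ^ 2 = s ^ 2 + τ ^ 2 := by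
  have : θ 0 ^ 2 + θ 1 ^ 2 = 1 := by rw [← norm_sq_E2, hθ]; norm_num
  rw [norm_sq_E2]; simp [fr, perp]
  linear_combination (s ^ 2 + τ ^ 2) * this

lemma abs_le_norm_fr (θ : E2) (hθ : ‖θ‖ = 1) (s τ : ℝ) : |τ| ≤ ‖fr θ s τ‖ := by
  apply abs_le_of_sq_le_sq _ (norm_nonneg _)
  rw [norm_fr_sq θ hθ]; nlinarith [sq_nonneg s]

lemma fr_continuous (θ : E2) : Continuous fun q : ℝ × ℝ => fr θ q.1 q.2 := by
  unfold fr; fun_prop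

lemma fr_sub (θ : E2) (s τ τ' : ℝ) : fr θ s τ - fr θ s τ' = (τ - τ') • perp θ := by
  simp only [fr]; module

lemma fr_combo (θ : E2) (s τ s' τ' a b : ℝ) :
    a • fr θ s τ + b • fr θ s' τ' = fr θ (a * s + b * s') (a * τ + b * τ') := by
  simp only [fr]; module

/-- Every point has frame coordinates. -/
lemma exists_fr (θ : E2) (hθ : ‖θ‖ = 1) (x : E2) : ∃ τ, x = fr θ ⟪x, θ⟫ τ := by
  have h1 : θ 0 ^ 2 + θ 1 ^ 2 = 1 := by rw [← norm_sq_E2, hθ]; norm_num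
  refine ⟨⟪x, perp θ⟫, ?_⟩
  ext i
  rw [inner_E2, inner_E2]
  fin_cases i
  · simp [fr, perp]; linear_combination (-x 0) * h1
  · simp [fr, perp]; linear_combination (-x 1) * h1

/-- The section of the closed domain orthogonal to `θ` at height `s`. -/
def sec (Ω : Set E2) (θ : E2) (s : ℝ) : Set ℝ := {τ | fr θ s τ ∈ closure Ω}

/-- The length of the section at height `s`. -/
def chord (Ω : Set E2) (θ : E2) (s : ℝ) : ℝ := (volume (sec Ω θ s)).toReal

section
variable {Ω : Set E2} {r0 Rm K : ℝ}

lemma sec_closed (θ : E2) (s : ℝ) : IsClosed (sec Ω θ s) :=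
  isClosed_closure.preimage ((fr_continuous θ).comp (by fun_prop : Continuous fun τ : ℝ => (s, τ)))

lemma Dom.sec_bdd (h : Dom Ω r0 Rm K) {θ : E2} (hθ : ‖θ‖ = 1) (s : ℝ) :
    sec Ω θ s ⊆ Icc (-Rm) Rm := by
  intro τ hτ
  have := (abs_le_norm_fr θ hθ s τ).trans (h.norm_le_closure hτ)
  exact abs_le.1 this

lemma Dom.sec_convex (h : Dom Ω r0 Rm K) (θ : E2) (s : ℝ) : Convex ℝ (sec Ω θ s) := by
  intro τ hτ τ' hτ' a b ha hb hab
  have := h.conv.closure hτ hτ' ha hb hab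
  rw [fr_combo, ← add_mul, hab, one_mul] at this
  exact this

lemma Dom.sec_eq (h : Dom Ω r0 Rm K) {θ : E2} (hθ : ‖θ‖ = 1) {s : ℝ}
    (hne : (sec Ω θ s).Nonempty) : ∃ f g, f ≤ g ∧ sec Ω θ s = Icc f g := by
  have hc : IsCompact (sec Ω θ s) := isCompact_Icc.of_isClosed_subset (sec_closed θ s) (h.sec_bdd hθ s)
  obtain ⟨f, hf, hfm⟩ := hc.exists_isMinOn hne continuousOn_id
  obtain ⟨g, hg, hgm⟩ := hc.exists_isMaxOn hne continuousOn_id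
  refine ⟨f, g, hfm hg, ?_⟩
  apply Subset.antisymm
  · exact fun x hx => ⟨hfm hx, hgm hx⟩
  · exact (h.sec_convex θ s).ordConnected.out hf hg

lemma chord_eq {θ : E2} {s f g : ℝ} (hfg : f ≤ g) (hs : sec Ω θ s = Icc f g) :
    chord Ω θ s = g - f := by
  rw [chord, hs, Real.volume_Icc, ENNReal.toReal_ofReal (by linarith)]

lemma chord_empty {θ : E2} {s : ℝ} (hs : sec Ω θ s = ∅) : chord Ω θ s = 0 := by
  rw [chord, hs]; simp

lemma chord_nonneg (θ : E2) (s : ℝ) : 0 ≤ chord Ω θ s := ENNReal.toReal_nonneg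

lemma Dom.chord_zero_of_lt (h : Dom Ω r0 Rm K) {θ : E2} (hθ : ‖θ‖ = 1) {s : ℝ}
    (hs : suppFn Ω θ < s) : chord Ω θ s = 0 := by
  apply chord_empty
  rw [Set.eq_empty_iff_forall_notMem]
  intro τ hτ
  have := h.inner_le_closure hτ θ
  rw [inner_fr θ hθ] at this
  linarith

lemma chord_neg (θ : E2) (s : ℝ) : chord Ω (-θ) s = chord Ω θ (-s) := by
  have : sec Ω (-θ) s = (fun x => -x) ⁻¹' sec Ω θ (-s) := by
    ext τ
    simp only [sec, mem_ofPred_eq, mem_preimage]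
    have : fr (-θ) s τ = fr θ (-s) (-τ) := by
      have hp : perp (-θ) = -perp θ := by
        ext i; fin_cases i <;> simp [perp]
      simp only [fr, hp]; module
    rw [this]
  rw [chord, chord, this]
  congr 1
  exact Measure.measure_preimage_neg volume _

lemma Dom.chord_le (h : Dom Ω r0 Rm K) {θ : E2} (hθ : ‖θ‖ = 1) (s : ℝ) :
    chord Ω θ s ≤ 2 * Rm := by
  have := measure_mono (μ := volume) (h.sec_bdd hθ s)
  rw [Real.volume_Icc] at this
  have := ENNReal.toReal_mono (by simp) this
  rw [ENNReal.toReal_ofReal (by linarith [h.Rm_pos])] at this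
  rw [chord]; linarith

/-- A chord at depth `u` joins two boundary points of the cap of depth `u`. -/
lemma Dom.chord_le_cap (h : Dom Ω r0 Rm K) {θ : E2} (hθ : ‖θ‖ = 1) (u : ℝ) :
    chord Ω θ (suppFn Ω θ - u) ≤ capDiam Ω θ u := by
  set s := suppFn Ω θ - u with hs
  rcases (sec Ω θ s).eq_empty_or_nonempty with he | hne
  · rw [chord_empty he]; exact capDiam_nonneg _ _
  obtain ⟨f, g, hfg, hse⟩ := h.sec_eq hθ hne
  rw [chord_eq hfg hse]
  have hcont : Continuous fun τ : ℝ => fr θ s τ :=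
    (fr_continuous θ).comp (by fun_prop : Continuous fun τ : ℝ => (s, τ))
  have hfr : ∀ τ ∈ Icc f g, fr θ s τ ∈ Ω → τ ∈ Ioo f g := by
    intro τ _ hΩ
    have hop : IsOpen ((fun τ : ℝ => fr θ s τ) ⁻¹' Ω) := h.isOpen.preimage hcont
    have hsub : (fun τ : ℝ => fr θ s τ) ⁻¹' Ω ⊆ Icc f g := by
      rw [← hse]; intro x hx; exact subset_closure hx
    have := hop.subset_interior_iff.2 hsub hΩ
    rwa [interior_Icc] at this
  have hmem : ∀ τ ∈ Icc f g, τ ∉ Ioo f g →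
      fr θ s τ ∈ {x ∈ frontier Ω | suppFn Ω θ - u ≤ ⟪x, θ⟫} := by
    intro τ hτ hno
    refine ⟨?_, by rw [inner_fr θ hθ]⟩
    rw [h.isOpen.frontier_eq]
    exact ⟨by rw [← hse] at hτ; exact hτ, fun hh => hno (hfr τ hτ hh)⟩
  have := Metric.dist_le_diam_of_mem (h.cap_bounded θ u)
    (hmem g ⟨hfg, le_rfl⟩ (by simp)) (hmem f ⟨le_rfl, hfg⟩ (by simp))
  rw [dist_eq_norm, fr_sub, norm_smul, norm_perp, hθ, mul_one, Real.norm_eq_abs,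
    abs_of_nonneg (by linarith)] at this
  exact this

lemma Dom.chord_le_sqrt (h : Dom Ω r0 Rm K) {θ : E2} (hθ : ‖θ‖ = 1) {u : ℝ} (hu : 0 ≤ u) :
    chord Ω θ (suppFn Ω θ - u) ≤ K * √u := by
  have h1 : ∀ δ, u < δ → chord Ω θ (suppFn Ω θ - u) ≤ K * √δ := fun δ hδ =>
    (h.chord_le_cap hθ u).trans ((h.cap_mono θ hδ.le).trans (h.cap θ hθ δ (by linarith)))
  have hc : Filter.Tendsto (fun δ => K * √δ) (nhdsWithin u (Ioi u)) (nhds (K * √u)) := by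
    have : ContinuousAt (fun δ => K * √δ) u := by fun_prop
    exact this.tendsto.mono_left nhdsWithin_le_nhds
  refine ge_of_tendsto hc ?_
  filter_upwards [self_mem_nhdsWithin] with δ hδ
  exact h1 δ hδ

lemma Dom.sec_nonempty (h : Dom Ω r0 Rm K) {θ : E2} (hθ : ‖θ‖ = 1) {s : ℝ}
    (hs : s ∈ Icc (-suppFn Ω (-θ)) (suppFn Ω θ)) : (sec Ω θ s).Nonempty := by
  obtain ⟨x, hx, hxe⟩ := h.exists_supp θ
  obtain ⟨y, hy, hye⟩ := h.exists_supp (-θ)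
  have hcon : IsPreconnected (closure Ω) := h.conv.closure.isPreconnected
  have him := hcon.image (fun x => ⟪x, θ⟫) (by fun_prop)
  have hsub := him.ordConnected.out (x := ⟪y, θ⟫) ⟨y, hy, rfl⟩ (y := ⟪x, θ⟫) ⟨x, hx, rfl⟩
  rw [inner_neg_right] at hye
  obtain ⟨w, hw, hwe⟩ := hsub (a := s) ⟨by linarith [hs.1], by linarith [hs.2]⟩
  obtain ⟨τ, hτ⟩ := exists_fr θ hθ w
  simp only at hwe
  rw [hwe] at hτ
  exact ⟨τ, by rw [sec, mem_ofPred_eq, ← hτ]; exact hw⟩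

lemma Dom.chord_concave (h : Dom Ω r0 Rm K) {θ : E2} (hθ : ‖θ‖ = 1) :
    ConcaveOn ℝ (Icc (-suppFn Ω (-θ)) (suppFn Ω θ)) (chord Ω θ) := by
  refine ⟨convex_Icc _ _, fun s hs s' hs' a b ha hb hab => ?_⟩
  obtain ⟨f, g, hfg, hse⟩ := h.sec_eq hθ (h.sec_nonempty hθ hs)
  obtain ⟨f', g', hfg', hse'⟩ := h.sec_eq hθ (h.sec_nonempty hθ hs')
  rw [chord_eq hfg hse, chord_eq hfg' hse']
  simp only [smul_eq_mul]
  have hmem : ∀ τ ∈ Icc f g, ∀ τ' ∈ Icc f' g', a * τ + b * τ' ∈ sec Ω θ (a * s + b * s') := by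
    intro τ hτ τ' hτ'
    rw [← hse] at hτ
    rw [← hse'] at hτ'
    have := h.conv.closure hτ hτ' ha hb hab
    rwa [fr_combo] at this
  have m1 := hmem f ⟨le_rfl, hfg⟩ f' ⟨le_rfl, hfg'⟩
  have m2 := hmem g ⟨hfg, le_rfl⟩ g' ⟨hfg', le_rfl⟩
  obtain ⟨F, G, hFG, hSE⟩ := h.sec_eq hθ ⟨_, m1⟩
  rw [chord_eq hFG hSE]
  rw [hSE] at m1 m2
  linarith [m1.1, m2.2]

lemma Dom.chord_zero_ge (h : Dom Ω r0 Rm K) {θ : E2} (hθ : ‖θ‖ = 1) : 2 * r0 ≤ chord Ω θ 0 := by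
  have hr := h.r0_pos
  have hsub : Ioo (-r0) r0 ⊆ sec Ω θ 0 := by
    intro τ hτ
    apply subset_closure
    apply h.ball_sub
    rw [mem_ball_zero_iff]
    apply lt_of_pow_lt_pow_left₀ 2 hr.le
    rw [norm_fr_sq θ hθ]
    nlinarith [hτ.1, hτ.2]
  have := measure_mono (μ := volume) hsub
  have hfin : volume (sec Ω θ 0) ≠ ⊤ :=
    ((measure_mono (h.sec_bdd hθ 0)).trans_lt (by simp)).ne
  have := ENNReal.toReal_mono hfin this
  rw [Real.volume_Ioo, ENNReal.toReal_ofReal (by linarith)] at this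
  rw [chord]; linarith

end

lemma concave_incr {B : ℝ → ℝ} {W : ℝ} (h : ConcaveOn ℝ (Icc 0 W) B) (h0 : B 0 = 0) {x η : ℝ}
    (hx : 0 ≤ x) (hη : 0 ≤ η) (hW : x + η ≤ W) : B (x + η) - B x ≤ B η := by
  rcases (add_nonneg hx hη).eq_or_lt with h1 | h1
  · have : x = 0 := by linarith
    have : η = 0 := by linarith
    subst_vars; simp [h0]
  have hc := h.2
  have e : η / (x + η) + x / (x + η) = 1 := by field_simp; ring
  have a1 := @hc 0 ⟨le_rfl, by linarith⟩ (x + η) ⟨h1.le, hW⟩ (η / (x + η)) (x / (x + η))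
    (by positivity) (by positivity) e
  have a2 := @hc 0 ⟨le_rfl, by linarith⟩ (x + η) ⟨h1.le, hW⟩ (x / (x + η)) (η / (x + η))
    (by positivity) (by positivity) (by rw [add_comm]; exact e)
  simp only [smul_eq_mul, h0, mul_zero, zero_add, div_mul_cancel₀ _ h1.ne'] at a1 a2
  have e3 : x / (x + η) * B (x + η) + η / (x + η) * B (x + η) = B (x + η) := by
    rw [← add_mul, add_comm, e, one_mul]
  linarith

section
variable {Ω : Set E2} {r0 Rm K : ℝ}

lemma Dom.profile (h : Dom Ω r0 Rm K) {θ : E2} (hθ : ‖θ‖ = 1) {p : ℕ} (hp : 4 * Rm / r0 ≤ p) :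
    Profile (fun u => chord Ω θ (suppFn Ω θ - u)) (suppFn Ω θ + suppFn Ω (-θ)) K (2 * Rm)
      (2 * r0 / Rm) p := by
  have hr := h.r0_pos
  have hR := h.Rm_pos
  have hθ' : ‖-θ‖ = 1 := by rw [norm_neg, hθ]
  set b := suppFn Ω θ with hb
  set b' := suppFn Ω (-θ) with hb'
  have b1 : r0 ≤ b := by simpa [hθ] using h.le_supp θ
  have b2 : b ≤ Rm := by simpa [hθ] using h.supp_le θ
  have b1' : r0 ≤ b' := by simpa [hθ] using h.le_supp (-θ)
  have b2' : b' ≤ Rm := by simpa [hθ] using h.supp_le (-θ)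
  set W := b + b' with hW
  set B : ℝ → ℝ := fun u => chord Ω θ (b - u) with hB
  have hrev : ∀ u, B (W - u) = chord Ω (-θ) (b' - u) := by
    intro u
    rw [chord_neg]; simp only [hB]; congr 1; rw [hW]; ring
  have hle1 : ∀ u, 0 ≤ u → B u ≤ K * √u := fun u hu => h.chord_le_sqrt hθ hu
  have hle2 : ∀ u, 0 ≤ u → B (W - u) ≤ K * √u := fun u hu => by
    rw [hrev]; exact h.chord_le_sqrt hθ' hu
  have hB0 : ∀ u, 0 ≤ B u := fun u => chord_nonneg _ _
  have z1 : B 0 = 0 := le_antisymm (by simpa using hle1 0 le_rfl) (hB0 0)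
  have z2 : B W = 0 := le_antisymm (by simpa using hle2 0 le_rfl) (hB0 W)
  have hconc : ConcaveOn ℝ (Icc 0 W) B := by
    refine ⟨convex_Icc 0 W, fun x hx y hy s t hs ht hst => ?_⟩
    have := (h.chord_concave hθ).2 (x := b - x) ⟨by linarith [hx.2], by linarith [hx.1]⟩ (y := b - y)
      ⟨by linarith [hy.2], by linarith [hy.1]⟩ hs ht hst
    refine this.trans (le_of_eq ?_)
    simp only [hB, smul_eq_mul]
    congr 1
    linear_combination hst * b
  have hconc' : ConcaveOn ℝ (Icc 0 W) fun u => B (W - u) := by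
    refine ⟨convex_Icc 0 W, fun x hx y hy s t hs ht hst => ?_⟩
    have := hconc.2 (x := W - x) ⟨by linarith [hx.2], by linarith [hx.1]⟩ (y := W - y)
      ⟨by linarith [hy.2], by linarith [hy.1]⟩ hs ht hst
    simp only [smul_eq_mul] at this ⊢
    refine this.trans (le_of_eq ?_)
    congr 1
    linear_combination hst * W
  have hpos : (0 : ℝ) < p := lt_of_lt_of_le (by positivity) hp
  have hWp : W / p ≤ r0 / 2 := by
    rw [div_le_iff₀ hpos]
    rw [div_le_iff₀ hr] at hp
    nlinarith
  have hlow : ∀ (B : ℝ → ℝ) (b : ℝ), ConcaveOn ℝ (Icc 0 W) B → B 0 = 0 → r0 ≤ b → b ≤ Rm → b ≤ W →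
      2 * r0 ≤ B b → ∀ u ∈ Icc 0 (W / p), 2 * r0 / Rm * u ≤ B u := by
    intro B b hconc z1 b1 b2 bW hBb u hu
    have hb0 : 0 < b := by linarith
    have hub : u ≤ b := by linarith [hu.2]
    have hc := hconc.2
    have := @hc 0 ⟨le_rfl, by linarith⟩ b ⟨hb0.le, bW⟩ (1 - u / b) (u / b)
      (by rw [sub_nonneg, div_le_one hb0]; exact hub) (div_nonneg hu.1 hb0.le) (by ring)
    simp only [smul_eq_mul, z1, mul_zero, zero_add, div_mul_cancel₀ _ hb0.ne'] at this
    refine le_trans ?_ this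
    rw [div_mul_eq_mul_div, div_mul_eq_mul_div, div_le_div_iff₀ hR hb0]
    have hu0 := hu.1
    have hBb0 : 0 ≤ B b := by linarith
    calc 2 * r0 * u * b ≤ B b * u * Rm := by gcongr
      _ = u * B b * Rm := by ring
  refine ⟨z1, z2, hconc, fun u _ => hB0 u, fun u _ => h.chord_le hθ _, ?_, ?_, ?_⟩
  · have key : ∀ x ∈ Icc 0 W, ∀ y ∈ Icc 0 W, x ≤ y → |B x - B y| ≤ K * √(y - x) := by
      intro x hx y hy hxy
      have e1 := concave_incr hconc z1 (x := x) (η := y - x) hx.1 (by linarith) (by linarith [hy.2])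
      have e2 := concave_incr hconc' (by simpa using z2) (x := W - y) (η := y - x) (by linarith [hy.2])
        (by linarith) (by linarith [hx.1])
      have e3 := hle1 (y - x) (by linarith)
      have e4 := hle2 (y - x) (by linarith)
      simp only [add_sub_cancel] at e1
      rw [show W - (W - y + (y - x)) = x by ring, show W - (W - y) = y by ring] at e2
      rw [abs_le]
      constructor <;> linarith
    intro x hx y hy
    rcases le_total x y with hxy | hxy
    · rw [abs_sub_comm x y, abs_of_nonneg (show 0 ≤ y - x by linarith)]
      exact key x hx y hy hxy
    · rw [abs_sub_comm (B x), abs_of_nonneg (show 0 ≤ x - y by linarith)]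
      exact key y hy x hx hxy
  · refine hlow B b hconc z1 b1 b2 (by linarith) ?_
    simp only [hB, sub_self]
    exact h.chord_zero_ge hθ
  · refine hlow _ b' hconc' (by simpa using z2) b1' b2' (by linarith) ?_
    rw [hrev, sub_self]
    exact h.chord_zero_ge hθ'

end

/-! ### Fourier integrals over the domain -/

/-- The frame `θ, θ^⊥` as a linear isometry of the plane. -/
def frIso (θ : E2) (hθ : ‖θ‖ = 1) : E2 →ₗᵢ[ℝ] E2 where
  toFun x := fr θ (x 0) (x 1)
  map_add' x y := by simp only [fr, PiLp.add_apply]; module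
  map_smul' a x := by simp only [fr, PiLp.smul_apply, smul_eq_mul, RingHom.id_apply]; module
  norm_map' x := by
    have : ‖fr θ (x 0) (x 1)‖ ^ 2 = ‖x‖ ^ 2 := by rw [norm_fr_sq θ hθ, norm_sq_E2]
    exact (sq_eq_sq₀ (norm_nonneg _) (norm_nonneg _)).1 this

lemma toLp_mp : MeasurePreserving
    ((MeasurableEquiv.finTwoArrow (α := ℝ)).symm.trans (MeasurableEquiv.toLp 2 (Fin 2 → ℝ))) := by
  have h1 := (volume_preserving_finTwoArrow ℝ).symm
  have h2 := PiLp.volume_preserving_toLp (ι := Fin 2)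
  exact h2.comp h1

lemma integral_E2 (g : E2 → ℂ) : ∫ x, g x = ∫ q : ℝ × ℝ, g !₂[q.1, q.2] := by
  rw [← toLp_mp.integral_comp' g]
  rfl

lemma integrable_E2 (g : E2 → ℂ) (hg : Integrable g) :
    Integrable (fun q : ℝ × ℝ => g !₂[q.1, q.2]) :=
  (toLp_mp.integrable_comp_emb (MeasurableEquiv.measurableEmbedding _)).2 hg

lemma integral_frame (θ : E2) (hθ : ‖θ‖ = 1) (g : E2 → ℂ) (hg : Integrable g) :
    ∫ x, g x = ∫ s : ℝ, ∫ τ : ℝ, g (fr θ s τ) := by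
  set L := (frIso θ hθ).toLinearIsometryEquiv rfl with hL
  have hLx : ∀ x, L x = fr θ (x 0) (x 1) := fun x => rfl
  have hmp := L.measurePreserving
  have h1 : ∫ x, g x = ∫ x, g (L x) :=
    (hmp.integral_comp (L.toHomeomorph.measurableEmbedding) g).symm
  have hg1 : Integrable fun x => g (L x) :=
    (hmp.integrable_comp_emb (L.toHomeomorph.measurableEmbedding)).2 hg
  have hg2 := integrable_E2 _ hg1
  rw [h1, integral_E2]
  rw [show (volume : Measure (ℝ × ℝ)) = (volume : Measure ℝ).prod volume from rfl] at hg2 ⊢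
  rw [integral_prod _ hg2]
  rfl

section
variable {Ω : Set E2} {r0 Rm K : ℝ}

lemma Dom.vol_lt_top (h : Dom Ω r0 Rm K) : volume Ω < ⊤ := h.isBounded.measure_lt_top

lemma continuous_ee_inner (lam : ℝ) (θ : E2) : Continuous fun x : E2 => ee (-(lam * ⟪x, θ⟫)) := by
  fun_prop

lemma Dom.fourier_slice (h : Dom Ω r0 Rm K) {θ : E2} (hθ : ‖θ‖ = 1) (lam : ℝ) :
    ∫ x in Ω, ee (-(lam * ⟪x, θ⟫)) = ee (-(lam * suppFn Ω θ)) *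
      ∫ u in (0 : ℝ)..(suppFn Ω θ + suppFn Ω (-θ)),
        (chord Ω θ (suppFn Ω θ - u) : ℂ) * ee (lam * u) := by
  set b := suppFn Ω θ with hb
  set b' := suppFn Ω (-θ) with hb'
  have b1 : 0 ≤ b := le_trans (by have := h.r0_pos; positivity) (h.le_supp θ)
  have b1' : 0 ≤ b' := le_trans (by have := h.r0_pos; positivity) (h.le_supp (-θ))
  have hcl : (closure Ω : Set E2) =ᵐ[volume] Ω := by
    have h1 := closure_ae_eq_of_null_frontier (h.conv.addHaar_frontier volume)
    exact h1
  have hint : IntegrableOn (fun x : E2 => ee (-(lam * ⟪x, θ⟫))) (closure Ω) :=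
    (continuous_ee_inner lam θ).continuousOn.integrableOn_compact h.isCompact_closure
  have hmeas : MeasurableSet (closure Ω) := isClosed_closure.measurableSet
  rw [← setIntegral_congr_set hcl, ← integral_indicator hmeas,
    integral_frame θ hθ _ ((integrable_indicator_iff hmeas).2 hint)]
  have hin : ∀ s : ℝ, ∫ τ : ℝ, (closure Ω).indicator (fun x : E2 => ee (-(lam * ⟪x, θ⟫))) (fr θ s τ)
      = (chord Ω θ s : ℂ) * ee (-(lam * s)) := by
    intro s
    have : (fun τ : ℝ => (closure Ω).indicator (fun x : E2 => ee (-(lam * ⟪x, θ⟫))) (fr θ s τ))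
        = (sec Ω θ s).indicator fun _ => ee (-(lam * s)) := by
      ext τ
      simp only [indicator, sec, mem_ofPred_eq, inner_fr θ hθ]
      congr
    rw [this, integral_indicator_const _ (sec_closed θ s).measurableSet, Complex.real_smul]
    rfl
  simp_rw [hin]
  have hsupp : ∀ s, s ∉ Icc (-b') b → (chord Ω θ s : ℂ) * ee (-(lam * s)) = 0 := by
    intro s hs
    rw [mem_Icc, not_and_or, not_le, not_le] at hs
    rcases hs with hs | hs
    · have : chord Ω θ s = 0 := by
        have := h.chord_zero_of_lt (θ := -θ) (by rw [norm_neg, hθ]) (s := -s) (by linarith)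
        rwa [chord_neg, neg_neg] at this
      rw [this]; simp
    · rw [h.chord_zero_of_lt hθ hs]; simp
  rw [← setIntegral_eq_integral_of_forall_compl_eq_zero hsupp, integral_Icc_eq_integral_Ioc,
    ← intervalIntegral.integral_of_le (by linarith)]
  have hsub := intervalIntegral.integral_comp_sub_left (a := 0) (b := b + b')
    (fun s => (chord Ω θ s : ℂ) * ee (-(lam * s))) b
  rw [sub_zero, show b - (b + b') = -b' by ring] at hsub
  rw [← hsub, ← intervalIntegral.integral_const_mul]
  congr 1
  ext u
  have : ee (-(lam * (b - u))) = ee (-(lam * b)) * ee (lam * u) := by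
    rw [← ee_add]; congr 1; ring
  rw [this]; ring

set_option maxHeartbeats 800000 in
/-- The kink expansion of the Fourier integrals over the domain, with frequencies up to `Λ`:
in every direction `θ` there are kinks of mass `α θ j` at depths `v θ j` under the supporting
line, and the Fourier integral is the sum of the contributions of the two opposite tips. -/
lemma Dom.kink_expansion (h : Dom Ω r0 Rm K) : ∃ C : ℝ, 0 < C ∧ ∀ Λ : ℝ, 1 ≤ Λ →
    ∃ (q : ℕ) (α v : E2 → ℕ → ℝ), ∀ θ : E2, ‖θ‖ = 1 →
      (∀ j ∈ Finset.range q, 0 ≤ α θ j ∧ 0 < v θ j ∧ v θ j ≤ suppFn Ω θ / 2) ∧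
      (∑ j ∈ Finset.range q, α θ j * v θ j ≤ C) ∧
      (∀ u : ℝ, 1 / Λ ≤ u → ∑ j ∈ Finset.range q, α θ j * min (v θ j) u ≤ C * capDiam Ω θ u) ∧
      (∀ lam : ℝ, 0 < lam → lam ≤ Λ →
        ‖(4 * Real.pi ^ 2 * lam ^ 2 : ℝ) * (∫ x in Ω, ee (-(lam * ⟪x, θ⟫))) -
          ee (-(lam * suppFn Ω θ)) * ∑ j ∈ Finset.range q,
            (α θ j : ℂ) * (ee (lam * v θ j) - 1) -
          ee (lam * suppFn Ω (-θ)) * ∑ j ∈ Finset.range q,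
            (α (-θ) j : ℂ) * (ee (-(lam * v (-θ) j)) - 1)‖ ≤ C) := by
  have hr := h.r0_pos
  have hR := h.Rm_pos
  have hK := h.K_nonneg
  obtain ⟨p, hp0⟩ := exists_nat_ge (max (4 * Rm / r0) 3)
  have hp1 : 4 * Rm / r0 ≤ p := (le_max_left _ _).trans hp0
  have hp3R : (3 : ℝ) ≤ p := (le_max_right _ _).trans hp0
  have hp3 : 3 ≤ p := by exact_mod_cast hp3R
  have hppos : (0 : ℝ) < p := by linarith
  set c := 2 * r0 / Rm with hc
  have hcpos : 0 < c := by positivity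
  set S := 2 * Rm * p / (2 * r0) with hS
  have hSpos : 0 < S := by positivity
  set C := 1 + 4 * Rm + 4 * S + 2 * (1 + S / c) with hC
  refine ⟨C, by positivity, fun Λ hΛ => ?_⟩
  have hΛ0 : 0 < Λ := by linarith
  have hpi := Real.pi_pos
  -- the resolution `τ ^ 2` is so small that the discretization error is at most `1`
  set T := 4 * Real.pi ^ 2 * Λ ^ 2 * (2 * Rm * (K + 2 * Rm * (2 * Real.pi * Λ))) +
    2 * Real.pi ^ 4 * Λ ^ 4 * (2 * Rm * (2 * Rm)) + Real.pi * Λ with hT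
  have hTpos : 0 < T := by positivity
  set τ := 1 / (1 + T) with hτ
  have hτpos : 0 < τ := by positivity
  have hτT : τ * T ≤ 1 := by rw [hτ, one_div_mul_eq_div, div_le_one (by positivity)]; linarith
  have hτ1 : τ ≤ 1 := by rw [hτ, div_le_one (by positivity)]; linarith
  obtain ⟨q0, hq0⟩ := exists_nat_ge (2 * Rm / τ ^ 2)
  set q := q0 + 1 with hq
  have hq1 : 1 ≤ q := by omega
  have hqR : 2 * Rm / τ ^ 2 ≤ q := by rw [hq]; push_cast; linarith
  have hqpos : (0 : ℝ) < q := by exact_mod_cast hq1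
  set W : E2 → ℝ := fun θ => suppFn Ω θ + suppFn Ω (-θ) with hW
  set σ : E2 → ℝ := fun θ => W θ / (p * q : ℕ) with hσ
  set B : E2 → ℝ → ℝ := fun θ u => chord Ω θ (suppFn Ω θ - u) with hB
  refine ⟨q, fun θ j => kink (B θ) (σ θ) j, fun θ j => (j + 1) * σ θ, fun θ hθ => ?_⟩
  have hθ' : ‖-θ‖ = 1 := by rw [norm_neg, hθ]
  have prof := h.profile hθ hp1
  have b1 : r0 ≤ suppFn Ω θ := by simpa [hθ] using h.le_supp θ
  have b2 : suppFn Ω θ ≤ Rm := by simpa [hθ] using h.supp_le θ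
  have b1' : r0 ≤ suppFn Ω (-θ) := by simpa [hθ] using h.le_supp (-θ)
  have b2' : suppFn Ω (-θ) ≤ Rm := by simpa [hθ] using h.supp_le (-θ)
  have hW1 : 2 * r0 ≤ W θ := by simp only [hW]; linarith
  have hW2 : W θ ≤ 2 * Rm := by simp only [hW]; linarith
  have hW0 : 0 < W θ := by linarith
  have hσ0 : 0 < σ θ := by simp only [hσ]; push_cast; positivity
  have hWσ : (p * q : ℕ) * σ θ = W θ := by
    simp only [hσ]; push_cast; field_simp
  have hWp : W θ / p ≤ r0 / 2 := by
    rw [div_le_iff₀ hppos]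
    rw [div_le_iff₀ hr] at hp1
    nlinarith
  have hστ : σ θ ≤ τ ^ 2 := by
    simp only [hσ]
    push_cast
    rw [div_le_iff₀ (by positivity)]
    rw [div_le_iff₀ (by positivity)] at hqR
    have hp1' : (1 : ℝ) ≤ p := by linarith
    calc W θ ≤ 1 * (q * τ ^ 2) := by linarith
      _ ≤ p * (q * τ ^ 2) := by gcongr
      _ = _ := by ring
  have hστ1 : σ θ ≤ τ := hστ.trans (by nlinarith)
  have hSW : 2 * Rm * p / W θ ≤ S := by rw [hS]; gcongr
  have hBm : 0 ≤ 2 * Rm := by positivity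
  refine ⟨fun j hj => ⟨?_, by positivity, ?_⟩, ?_, ?_, ?_⟩
  · apply prof.kink_nonneg hσ0
    change _ ≤ W θ
    rw [← hWσ]
    gcongr
    have := Finset.mem_range.1 hj
    have : 3 * q ≤ p * q := Nat.mul_le_mul_right _ hp3
    omega
  · have : (j : ℝ) + 1 ≤ q := by exact_mod_cast Finset.mem_range.1 hj
    calc ((j : ℝ) + 1) * σ θ ≤ q * σ θ := by gcongr
      _ = W θ / p := by rw [← hWσ]; push_cast; field_simp
      _ ≤ suppFn Ω θ / 2 := by linarith
  · refine (prof.kink_moment hW0 hBm hp3 hσ0 hq1 hWσ).trans ?_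
    rw [hC]
    have : 0 ≤ S / c := by positivity
    linarith
  · intro u hu
    have hσu : σ θ ≤ u := by
      refine le_trans ?_ hu
      rw [le_div_iff₀ hΛ0]
      have : Λ ≤ T := by
        rw [hT]
        have : Λ ≤ Real.pi * Λ := by nlinarith [Real.pi_gt_three]
        have : 0 ≤ 4 * Real.pi ^ 2 * Λ ^ 2 * (2 * Rm * (K + 2 * Rm * (2 * Real.pi * Λ))) := by
          positivity
        have : 0 ≤ 2 * Real.pi ^ 4 * Λ ^ 4 * (2 * Rm * (2 * Rm)) := by positivity
        linarith
      calc σ θ * Λ ≤ τ * T := by gcongr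
        _ ≤ 1 := hτT
    obtain ⟨x, hx, hxW, hsum⟩ := prof.kink_min hW0 hBm hp3 hcpos hσ0 hq1 hWσ hσu
    refine hsum.trans ?_
    have h1 : chord Ω θ (suppFn Ω θ - x) ≤ capDiam Ω θ u :=
      (h.chord_le_cap hθ x).trans (h.cap_mono θ hx.2)
    refine mul_le_mul ?_ h1 (chord_nonneg _ _) (by positivity)
    have : 2 * (1 + 2 * Rm * p / W θ / c) ≤ 2 * (1 + S / c) := by gcongr
    refine this.trans ?_
    rw [hC]; linarith
  · intro lam hl hlΛ
    have hsmall : Real.pi * (lam * σ θ) ≤ 1 := by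
      have : Real.pi * Λ ≤ T := by
        rw [hT]
        have : 0 ≤ 4 * Real.pi ^ 2 * Λ ^ 2 * (2 * Rm * (K + 2 * Rm * (2 * Real.pi * Λ))) := by
          positivity
        have : 0 ≤ 2 * Real.pi ^ 4 * Λ ^ 4 * (2 * Rm * (2 * Rm)) := by positivity
        linarith
      calc Real.pi * (lam * σ θ) ≤ Real.pi * (Λ * τ) := by gcongr
        _ = τ * (Real.pi * Λ) := by ring
        _ ≤ τ * T := by gcongr
        _ ≤ 1 := hτT
    have hexp := prof.expansion hW0 hBm hK hp3 hσ0 hq1 hWσ hl hsmall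
    rw [h.fourier_slice hθ]
    have hσn : σ (-θ) = σ θ := by simp only [hσ, hW, neg_neg]; rw [add_comm]
    have hBn : B (-θ) = fun u => chord Ω θ (suppFn Ω θ - (W θ - u)) := by
      ext u
      simp only [hB, hW]
      rw [chord_neg]; congr 1; ring
    beta_reduce
    rw [hσn, hBn]
    set I := ∫ u in (0 : ℝ)..(suppFn Ω θ + suppFn Ω (-θ)),
        (chord Ω θ (suppFn Ω θ - u) : ℂ) * ee (lam * u)
    have hfac : ee (lam * suppFn Ω (-θ)) = ee (-(lam * suppFn Ω θ)) * ee (lam * W θ) := by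
      rw [← ee_add]; congr 1; simp only [hW]; ring
    rw [hfac]
    rw [show ∀ A D E F G H : ℂ, A * (D * E) - D * F - D * G * H = D * (A * E - F - G * H) by
      intros; ring, norm_mul, norm_ee, one_mul]
    refine hexp.trans ?_
    have t1 : 4 * Real.pi ^ 2 * lam ^ 2 * (W θ * (K * √(σ θ) + 2 * Rm * (2 * Real.pi * (lam * σ θ))))
        ≤ 4 * Real.pi ^ 2 * Λ ^ 2 * (2 * Rm * (K * τ + 2 * Rm * (2 * Real.pi * (Λ * τ)))) := by
      have hs : √(σ θ) ≤ τ := Real.sqrt_le_left hτpos.le |>.2 hστ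
      gcongr
    have t2 : 2 * Real.pi ^ 4 * lam ^ 4 * σ θ ^ 2 * (W θ * (2 * Rm)) ≤
        2 * Real.pi ^ 4 * Λ ^ 4 * τ * (2 * Rm * (2 * Rm)) := by
      have : σ θ ^ 2 ≤ τ := by nlinarith
      gcongr
    have t3 : 4 * Real.pi ^ 2 * Λ ^ 2 * (2 * Rm * (K * τ + 2 * Rm * (2 * Real.pi * (Λ * τ)))) +
        2 * Real.pi ^ 4 * Λ ^ 4 * τ * (2 * Rm * (2 * Rm)) ≤ 1 := by
      refine le_trans ?_ hτT
      rw [hT]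
      have : 0 ≤ τ * (Real.pi * Λ) := by positivity
      linarith
    have : 0 ≤ S / c := by positivity
    rw [hC]
    linarith

end

/-! ### Lattice point counts -/

lemma ek_apply (k : Fin 2 → ℤ) (i : Fin 2) : ek k i = k i := rfl

lemma ek_neg (k : Fin 2 → ℤ) : ek (-k) = -ek k := by
  ext i; simp [ek_apply]

lemma ek_zero : ek 0 = 0 := by
  ext i; simp [ek_apply]

lemma one_le_norm_ek {k : Fin 2 → ℤ} (hk : k ≠ 0) : 1 ≤ ‖ek k‖ := by
  have h1 : (1 : ℤ) ≤ k 0 ^ 2 + k 1 ^ 2 := by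
    by_contra hcon
    apply hk
    have h0 : k 0 = 0 := by nlinarith [sq_nonneg (k 0), sq_nonneg (k 1)]
    have h1 : k 1 = 0 := by nlinarith [sq_nonneg (k 0), sq_nonneg (k 1)]
    ext i; fin_cases i <;> simp [h0, h1]
  have h2 : (1 : ℝ) ≤ ‖ek k‖ ^ 2 := by
    rw [norm_sq_E2, ek_apply, ek_apply]
    have h3 := (Int.cast_le (R := ℝ)).2 h1
    push_cast at h3
    exact h3
  nlinarith [norm_nonneg (ek k)]

/-- The unit square of the points whose coordinates have integer parts `k`. -/
def cube (k : Fin 2 → ℤ) : Set E2 := {ξ | ∀ i, ξ i ∈ Ico (k i : ℝ) (k i + 1)}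

lemma cube_eq (k : Fin 2 → ℤ) : cube k = (MeasurableEquiv.toLp 2 (Fin 2 → ℝ)).symm ⁻¹'
    (Set.pi univ fun i => Ico (k i : ℝ) (k i + 1)) := by
  ext ξ; simp [cube]

lemma cube_meas (k : Fin 2 → ℤ) : MeasurableSet (cube k) := by
  rw [cube_eq]
  exact (MeasurableEquiv.measurable _) (MeasurableSet.univ_pi fun i => measurableSet_Ico)

lemma volume_cube (k : Fin 2 → ℤ) : volume (cube k) = 1 := by
  have h2 := (PiLp.volume_preserving_toLp (ι := Fin 2)).symm (MeasurableEquiv.toLp 2 (Fin 2 → ℝ))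
  rw [cube_eq, h2.measure_preimage_equiv, Real.volume_pi_Ico]
  simp

lemma cube_disjoint {k l : Fin 2 → ℤ} (h : k ≠ l) : Disjoint (cube k) (cube l) := by
  rw [Set.disjoint_left]
  intro ξ h1 h2
  apply h
  ext i
  rw [← Int.floor_eq_iff.2 ⟨(h1 i).1, (h1 i).2⟩, ← Int.floor_eq_iff.2 ⟨(h2 i).1, (h2 i).2⟩]

lemma cube_dist {k : Fin 2 → ℤ} {ξ : E2} (h : ξ ∈ cube k) : ‖ξ - ek k‖ ≤ 2 := by
  have : ‖ξ - ek k‖ ^ 2 ≤ 2 ^ 2 := by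
    rw [norm_sq_E2]
    simp only [PiLp.sub_apply, ek_apply]
    have h0 := h 0
    have h1 := h 1
    nlinarith [h0.1, h0.2, h1.1, h1.2]
  exact abs_le_of_sq_le_sq' this (by norm_num) |>.2

lemma card_le_volume (Ks : Finset (Fin 2 → ℤ)) (A : Set E2) (h : ∀ k ∈ Ks, cube k ⊆ A) :
    (Ks.card : ℝ≥0∞) ≤ volume A := by
  calc (Ks.card : ℝ≥0∞) = ∑ k ∈ Ks, volume (cube k) := by simp [volume_cube]
    _ = volume (⋃ k ∈ Ks, cube k) := by
        rw [measure_biUnion_finset]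
        · intro k _ l _ hkl; exact cube_disjoint hkl
        · intro k _; exact cube_meas k
    _ ≤ volume A := measure_mono (iUnion₂_subset h)

section
variable {Ω : Set E2} {r0 Rm K : ℝ}

lemma volume_smul_E2 (A : Set E2) {t : ℝ} : volume (t • A) = ENNReal.ofReal (t ^ 2) * volume A := by
  rw [Measure.addHaar_smul]
  simp

lemma Dom.count (h : Dom Ω r0 Rm K) : ∃ C : ℝ, 0 < C ∧ ∀ (Ks : Finset (Fin 2 → ℤ)) (r z : ℝ),
    0 ≤ r → 0 ≤ z →
    ((Ks.filter fun k => |suppFn Ω (ek k) - r| ≤ 1 + z).card : ℝ) ≤ C * (1 + z) * (1 + r + z) := by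
  have hr := h.r0_pos
  have hR := h.Rm_pos
  set U : ℝ → Set E2 := fun s => {ξ | suppFn Ω ξ ≤ s} with hU
  have hUs : ∀ s : ℝ, 0 < s → U s = s • U 1 := by
    intro s hs
    ext ξ
    rw [mem_smul_set_iff_inv_smul_mem₀ hs.ne']
    simp only [hU, mem_ofPred_eq]
    rw [h.supp_smul ξ (by positivity), inv_mul_le_one₀ hs]
  have hUm : ∀ s, MeasurableSet (U s) := fun s =>
    (isClosed_le h.supp_continuous continuous_const).measurableSet
  have hfin : volume (U 1) ≠ ⊤ := by
    have : U 1 ⊆ Metric.closedBall 0 (1 / r0) := by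
      intro ξ hξ
      rw [mem_closedBall_zero_iff, le_div_iff₀ hr]
      have h1 := h.le_supp ξ
      have h2 : suppFn Ω ξ ≤ 1 := hξ
      linarith
    exact ((measure_mono this).trans_lt measure_closedBall_lt_top).ne
  set V := (volume (U 1)).toReal with hV
  have hV0 : 0 ≤ V := ENNReal.toReal_nonneg
  have hUv : ∀ s : ℝ, 0 < s → volume (U s) = ENNReal.ofReal (s ^ 2 * V) := by
    intro s hs
    rw [hUs s hs, volume_smul_E2, ENNReal.ofReal_mul (by positivity), hV, ENNReal.ofReal_toReal hfin]
  refine ⟨4 * (2 + 2 * Rm) ^ 2 * (V + 1), by positivity, fun Ks r z hr0 hz => ?_⟩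
  set y := 2 + z + 2 * Rm with hy
  have hy0 : 0 < y := by positivity
  have hcube : ∀ k ∈ Ks.filter fun k => |suppFn Ω (ek k) - r| ≤ 1 + z,
      cube k ⊆ {ξ | suppFn Ω ξ ≤ r + y ∧ r - y < suppFn Ω ξ} := by
    intro k hk ξ hξ
    have hk2 := abs_le.1 (Finset.mem_filter.1 hk).2
    have d := cube_dist hξ
    have e1 := h.supp_lip ξ (ek k)
    have e2 := h.supp_lip (ek k) ξ
    rw [norm_sub_rev] at e2
    have : Rm * ‖ξ - ek k‖ ≤ Rm * 2 := by gcongr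
    constructor <;> linarith [hk2.1, hk2.2]
  have hcard := card_le_volume _ _ hcube
  set n := (Ks.filter fun k => |suppFn Ω (ek k) - r| ≤ 1 + z).card
  have hmain : (n : ℝ) ≤ 4 * y * (r + y) * V := by
    rcases le_or_gt r y with hry | hry
    · have : (n : ℝ≥0∞) ≤ ENNReal.ofReal ((r + y) ^ 2 * V) := by
        rw [← hUv _ (by positivity)]
        exact hcard.trans (measure_mono fun ξ hξ => hξ.1)
      have h1 := ENNReal.toReal_mono (by simp) this
      rw [ENNReal.toReal_natCast, ENNReal.toReal_ofReal (by positivity)] at h1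
      refine h1.trans ?_
      gcongr
      nlinarith
    · have h2 : (n : ℝ≥0∞) ≤ ENNReal.ofReal ((r + y) ^ 2 * V) - ENNReal.ofReal ((r - y) ^ 2 * V) := by
        rw [← hUv _ (by positivity), ← hUv _ (by linarith)]
        refine hcard.trans ?_
        have : {ξ : E2 | suppFn Ω ξ ≤ r + y ∧ r - y < suppFn Ω ξ} = U (r + y) \ U (r - y) := by
          ext ξ; simp [hU]
        rw [this, measure_sdiff]
        · intro ξ hξ
          simp only [hU, mem_ofPred_eq] at hξ ⊢
          linarith
        · exact (hUm _).nullMeasurableSet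
        · rw [hUv _ (by linarith)]; simp
      rw [← ENNReal.ofReal_sub _ (by positivity)] at h2
      have h1 := ENNReal.toReal_mono (by simp) h2
      have e : (r + y) ^ 2 * V - (r - y) ^ 2 * V = 4 * y * r * V := by ring
      rw [ENNReal.toReal_natCast, e, ENNReal.toReal_ofReal (by positivity)] at h1
      refine h1.trans ?_
      gcongr
      linarith
  refine hmain.trans ?_
  have e1 : y ≤ (2 + 2 * Rm) * (1 + z) := by rw [hy]; nlinarith
  have e2 : r + y ≤ (2 + 2 * Rm) * (1 + r + z) := by rw [hy]; nlinarith
  calc 4 * y * (r + y) * V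
      ≤ 4 * ((2 + 2 * Rm) * (1 + z)) * ((2 + 2 * Rm) * (1 + r + z)) * (V + 1) := by
        gcongr; linarith
    _ = _ := by ring

lemma exists_dyadic {x : ℝ} (hx : 1 ≤ x) {L : ℕ} (hL : 1 ≤ L) (hxL : x ≤ 2 ^ L) :
    ∃ l < L, (2 : ℝ) ^ l ≤ x ∧ x ≤ 2 ^ (l + 1) := by
  induction L, hL using Nat.le_induction with
  | base => exact ⟨0, by norm_num, by simpa using hx, by simpa using hxL⟩
  | succ L hL ih =>
    rcases le_or_gt x (2 ^ L) with h | h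
    · obtain ⟨l, h1, h2⟩ := ih h
      exact ⟨l, by omega, h2⟩
    · exact ⟨L, by omega, h.le, hxL⟩

/-- Dyadic decomposition of a sum over lattice points with respect to the support function. -/
lemma Dom.dyadic (h : Dom Ω r0 Rm K) : ∃ C : ℝ, 0 < C ∧ ∀ (Ks : Finset (Fin 2 → ℤ)) (L : ℕ)
    (Y : (Fin 2 → ℤ) → ℝ) (Yl : ℕ → ℝ), 1 ≤ L → (∀ k ∈ Ks, 1 ≤ suppFn Ω (ek k)) →
    (∀ k ∈ Ks, suppFn Ω (ek k) ≤ 2 ^ L) → (∀ l, 0 ≤ Yl l) →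
    (∀ k ∈ Ks, ∀ l < L, 2 ^ l ≤ suppFn Ω (ek k) → suppFn Ω (ek k) ≤ 2 ^ (l + 1) → Y k ≤ Yl l) →
    ∑ k ∈ Ks, (1 / ‖ek k‖ ^ 3) * Y k ≤ C * ∑ l ∈ Finset.range L, (1 / 2 ^ l) * Yl l := by
  obtain ⟨C2, hC2, hcount⟩ := h.count
  have hR := h.Rm_pos
  refine ⟨Rm ^ 3 * (C2 * 9), by positivity, fun Ks L Y Yl hL h1 h2 hY hYl => ?_⟩
  classical
  have hstep : ∀ k ∈ Ks, (1 / ‖ek k‖ ^ 3) * Y k ≤ ∑ l ∈ Finset.range L,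
      if |suppFn Ω (ek k) - 0| ≤ 1 + 2 ^ (l + 1) then (Rm / 2 ^ l) ^ 3 * Yl l else 0 := by
    intro k hk
    obtain ⟨l, hl, ha, hb⟩ := exists_dyadic (h1 k hk) hL (h2 k hk)
    have hpos : (0 : ℝ) < 2 ^ l := by positivity
    have hn : 2 ^ l / Rm ≤ ‖ek k‖ := by
      rw [div_le_iff₀ hR]
      linarith [h.supp_le (ek k)]
    have hn0 : 0 < ‖ek k‖ := lt_of_lt_of_le (by positivity) hn
    refine le_trans ?_ (Finset.single_le_sum (f := fun l => if |suppFn Ω (ek k) - 0| ≤ 1 + 2 ^ (l + 1)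
      then (Rm / 2 ^ l) ^ 3 * Yl l else 0) (fun l _ => ?_) (Finset.mem_range.2 hl))
    · rw [if_pos (by rw [sub_zero, abs_of_nonneg (by linarith)]; linarith)]
      calc (1 / ‖ek k‖ ^ 3) * Y k ≤ (1 / ‖ek k‖ ^ 3) * Yl l := by
            gcongr; exact hYl k hk l hl ha hb
        _ ≤ (1 / (2 ^ l / Rm) ^ 3) * Yl l := by
            gcongr
            exact hY l
        _ = _ := by
            congr 1
            rw [div_pow, div_pow]; field_simp
    · have := hY l
      split_ifs <;> positivity
  refine (Finset.sum_le_sum hstep).trans ?_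
  rw [Finset.sum_comm, Finset.mul_sum]
  refine Finset.sum_le_sum fun l _ => ?_
  rw [← Finset.sum_filter, Finset.sum_const, nsmul_eq_mul]
  have hc := hcount Ks 0 (2 ^ (l + 1)) le_rfl (by positivity)
  have h1l : (1 : ℝ) ≤ 2 ^ l := one_le_pow₀ (by norm_num)
  have hY := hY l
  calc _ ≤ (C2 * (1 + 2 ^ (l + 1)) * (1 + 0 + 2 ^ (l + 1))) * ((Rm / 2 ^ l) ^ 3 * Yl l) := by
        gcongr
    _ ≤ (C2 * (3 * 2 ^ l) * (3 * 2 ^ l)) * ((Rm / 2 ^ l) ^ 3 * Yl l) := by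
        have : (1 : ℝ) + 2 ^ (l + 1) ≤ 3 * 2 ^ l := by rw [pow_succ]; linarith
        have h3 : (1 : ℝ) + 0 + 2 ^ (l + 1) ≤ 3 * 2 ^ l := by linarith
        gcongr
    _ = _ := by field_simp; ring

/-- `∑ |k|⁻²` over lattice points grows at most logarithmically. -/
lemma Dom.sum_inv_sq (h : Dom Ω r0 Rm K) : ∃ C : ℝ, 0 < C ∧ ∀ (Ks : Finset (Fin 2 → ℤ)) (L : ℕ),
    1 ≤ L → (∀ k ∈ Ks, k ≠ 0) → (∀ k ∈ Ks, suppFn Ω (ek k) ≤ 2 ^ L) →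
    ∑ k ∈ Ks, 1 / ‖ek k‖ ^ 2 ≤ C * L := by
  obtain ⟨C2, hC2, hcount⟩ := h.count
  obtain ⟨C, hC, hdy⟩ := h.dyadic
  have hr := h.r0_pos
  refine ⟨C2 + 1 / r0 * (C * 2), by positivity, fun Ks L hL h0 h2 => ?_⟩
  classical
  have hL' : (1 : ℝ) ≤ L := by exact_mod_cast hL
  rw [← Finset.sum_filter_add_sum_filter_not Ks (fun k => |suppFn Ω (ek k) - 0| ≤ 1 + 0)]
  have hA : ∑ k ∈ Ks with |suppFn Ω (ek k) - 0| ≤ 1 + 0, 1 / ‖ek k‖ ^ 2 ≤ C2 := by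
    calc _ ≤ ∑ k ∈ Ks with |suppFn Ω (ek k) - 0| ≤ 1 + 0, (1 : ℝ) := by
          refine Finset.sum_le_sum fun k hk => ?_
          have := one_le_norm_ek (h0 k (Finset.mem_filter.1 hk).1)
          rw [div_le_one (by positivity)]
          exact one_le_pow₀ this
      _ ≤ C2 := by
          have := hcount Ks 0 0 le_rfl le_rfl
          simp only [Finset.sum_const, nsmul_eq_mul, mul_one]
          linarith
  have hB : ∑ k ∈ Ks with ¬ |suppFn Ω (ek k) - 0| ≤ 1 + 0, 1 / ‖ek k‖ ^ 2 ≤ 1 / r0 * (C * 2) * L := by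
    have key := hdy (Ks.filter fun k => ¬ |suppFn Ω (ek k) - 0| ≤ 1 + 0) L (fun k => suppFn Ω (ek k))
      (fun l => 2 ^ (l + 1)) hL ?_ ?_ (fun l => by positivity) (fun k _ l _ _ h => h)
    · have e : ∑ l ∈ Finset.range L, (1 / 2 ^ l : ℝ) * 2 ^ (l + 1) = 2 * L := by
        rw [Finset.sum_congr rfl (g := fun _ => (2 : ℝ))]
        · simp [mul_comm]
        · intro l _; rw [pow_succ]; field_simp
      rw [e] at key
      calc _ ≤ ∑ k ∈ Ks with ¬ |suppFn Ω (ek k) - 0| ≤ 1 + 0,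
            1 / r0 * (1 / ‖ek k‖ ^ 3 * suppFn Ω (ek k)) := by
            refine Finset.sum_le_sum fun k hk => ?_
            have h1 := one_le_norm_ek (h0 k (Finset.mem_filter.1 hk).1)
            have h3 := h.le_supp (ek k)
            have hn : 0 < ‖ek k‖ := by linarith
            calc 1 / ‖ek k‖ ^ 2 = 1 / r0 * (1 / ‖ek k‖ ^ 3 * (r0 * ‖ek k‖)) := by field_simp
              _ ≤ _ := by gcongr
        _ ≤ 1 / r0 * (C * (2 * L)) := by rw [← Finset.mul_sum]; gcongr
        _ = _ := by ring
    · intro k hk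
      have h1 := (Finset.mem_filter.1 hk).2
      have h3 := h.le_supp (ek k)
      rw [sub_zero, abs_of_nonneg (le_trans (by positivity) h3)] at h1
      linarith
    · intro k hk
      exact h2 k (Finset.mem_filter.1 hk).1
  nlinarith
end

/-! ### A nonnegative trigonometric kernel with small tails -/

lemma four_mul_abs_le_norm_ee_sub_one {x : ℝ} (hx : |x| ≤ 1 / 2) : 4 * |x| ≤ ‖ee x - 1‖ := by
  have hpi := Real.pi_pos
  have h1 : ‖ee x - 1‖ = ‖2 * Real.sin (2 * Real.pi * x / 2)‖ := by
    rw [← Complex.norm_exp_I_mul_ofReal_sub_one, ee, mul_comm]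
  have e : 2 * Real.pi * x / 2 = Real.pi * x := by ring
  have h2 := Real.mul_abs_le_abs_sin (x := Real.pi * x) (by
    rw [abs_mul, abs_of_pos hpi]; nlinarith)
  rw [h1, e, norm_mul, Real.norm_eq_abs, Real.norm_eq_abs, abs_of_pos (by norm_num : (0:ℝ) < 2)]
  rw [abs_mul, abs_of_pos hpi] at h2
  have : 2 / Real.pi * (Real.pi * |x|) = 2 * |x| := by field_simp
  linarith

/-- The geometric sum `∑_{j<N} e(jx)`. -/
def geo (N : ℕ) (x : ℝ) : ℂ := ∑ j ∈ Finset.range N, ee (j * x)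

lemma continuous_geo (N : ℕ) : Continuous (geo N) := by
  unfold geo; fun_prop

lemma norm_geo_le {N : ℕ} {x : ℝ} (h0 : x ≠ 0) (hx : |x| ≤ 1 / 2) : ‖geo N x‖ ≤ 1 / (2 * |x|) := by
  have hx0 : 0 < |x| := abs_pos.2 h0
  have h1 := four_mul_abs_le_norm_ee_sub_one hx
  have h2 : geo N x * (ee x - 1) = ee (N * x) - 1 := by
    unfold geo
    simp only [ee_nat_mul]
    exact geom_sum_mul _ _
  have h3 : ‖geo N x‖ * ‖ee x - 1‖ ≤ 2 := by
    rw [← norm_mul, h2]; exact norm_ee_sub_one_le_two _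
  rw [le_div_iff₀ (by positivity)]
  nlinarith [norm_nonneg (geo N x)]

lemma le_norm_geo {N : ℕ} {x : ℝ} (hx : |x| ≤ 1 / (16 * N)) : (N : ℝ) / 2 ≤ ‖geo N x‖ := by
  rcases Nat.eq_zero_or_pos N with rfl | hN
  · simp [geo]
  have hN' : (0 : ℝ) < N := by exact_mod_cast hN
  have h1 : ‖geo N x - N‖ ≤ N * (1 / 2) := by
    have : geo N x - N = ∑ j ∈ Finset.range N, (ee (j * x) - 1) := by
      simp [geo]
    rw [this]
    refine (norm_sum_le _ _).trans ?_
    refine (Finset.sum_le_card_nsmul _ _ (1 / 2) fun j hj => ?_).trans (by simp)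
    have hj' : (j : ℝ) ≤ N := by exact_mod_cast (Finset.mem_range.1 hj).le
    have hxN : N * |x| ≤ 1 / 16 := by
      rw [le_div_iff₀ (by positivity)] at hx
      linarith
    calc ‖ee (j * x) - 1‖ ≤ 2 * Real.pi * |j * x| := norm_ee_sub_one_le _
      _ = 2 * Real.pi * (j * |x|) := by rw [abs_mul, Nat.abs_cast]
      _ ≤ 2 * 4 * (1 / 16) := by
          have := Real.pi_le_four
          have := mul_le_mul_of_nonneg_right hj' (abs_nonneg x)
          gcongr
          linarith
      _ = 1 / 2 := by norm_num
  have h2 : (N : ℝ) = ‖(N : ℂ)‖ := by simp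
  have h3 : ‖(N : ℂ)‖ ≤ ‖geo N x‖ + ‖geo N x - N‖ := by
    have := norm_sub_le (geo N x) (geo N x - N)
    simpa using this
  linarith

lemma integral_ee_int (n : ℤ) : ∫ x in (-1 / 2 : ℝ)..(1 / 2), ee (n * x) = if n = 0 then 1 else 0 := by
  split_ifs with hn
  · subst hn; simp; norm_num
  · have hc : (2 * Real.pi * n * Complex.I : ℂ) ≠ 0 := by
      simp [hn, Real.pi_ne_zero]
    have := integral_exp_mul_complex (a := (-1 / 2 : ℝ)) (b := 1 / 2) hc
    have e : ∀ x : ℝ, ee (n * x) = Complex.exp (2 * Real.pi * n * Complex.I * x) := by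
      intro x; unfold ee; congr 1; push_cast; ring
    simp only [e]
    rw [this, ← e, ← e]
    have : ee (n * (1 / 2)) = ee (n * (-1 / 2)) := by
      have h1 : (n : ℝ) * (1 / 2) = n + n * (-1 / 2) := by ring
      rw [h1, ee_add, ee_int, one_mul]
    rw [this]; simp

/-- `|∑_{j<N} e(jx)|^{2m}` is a trigonometric polynomial of degree at most `mN`. -/
lemma geo_pow_expand (N m : ℕ) : ∃ c : ℤ → ℂ, ∀ x : ℝ, ((‖geo N x‖ ^ (2 * m) : ℝ) : ℂ) =
    ∑ j ∈ Finset.Icc (-(m * N : ℕ) : ℤ) (m * N : ℕ), c j * ee (-(j * x)) := by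
  classical
  set S := Fintype.piFinset (fun _ : Fin m => Finset.range N) with hS
  set d : (Fin m → ℕ) × (Fin m → ℕ) → ℤ := fun p => (∑ i, (p.2 i : ℤ)) - ∑ i, (p.1 i : ℤ) with hd
  have hpow : ∀ x : ℝ, geo N x ^ m = ∑ p ∈ S, ee ((∑ i, (p i : ℝ)) * x) := by
    intro x
    have h1 : geo N x ^ m = ∏ _i : Fin m, geo N x := by simp
    rw [h1]
    unfold geo
    rw [Finset.prod_univ_sum]
    refine Finset.sum_congr rfl fun p _ => ?_
    rw [Finset.sum_mul]
    have : ∀ s : Finset (Fin m), ee (∑ i ∈ s, (p i : ℝ) * x) = ∏ i ∈ s, ee (p i * x) := by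
      intro s
      induction s using Finset.induction_on with
      | empty => simp
      | insert a s ha ih => rw [Finset.sum_insert ha, Finset.prod_insert ha, ee_add, ih]
    exact (this _).symm
  have hmaps : ∀ p ∈ S ×ˢ S, d p ∈ Finset.Icc (-(m * N : ℕ) : ℤ) (m * N : ℕ) := by
    intro p hp
    have hb : ∀ q ∈ S, 0 ≤ ∑ i, (q i : ℤ) ∧ ∑ i, (q i : ℤ) ≤ (m * N : ℕ) := by
      intro q hq
      refine ⟨Finset.sum_nonneg fun i _ => by positivity, ?_⟩
      have : ∑ i, (q i : ℤ) ≤ ∑ _i : Fin m, (N : ℤ) := Finset.sum_le_sum fun i _ => by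
        have := Finset.mem_range.1 (Fintype.mem_piFinset.1 hq i)
        exact_mod_cast this.le
      simpa using this
    have h1 := hb _ (Finset.mem_product.1 hp).1
    have h2 := hb _ (Finset.mem_product.1 hp).2
    rw [Finset.mem_Icc]
    simp only [hd]
    omega
  refine ⟨fun j => ∑ p ∈ S ×ˢ S with d p = j, 1, fun x => ?_⟩
  have h1 : ((‖geo N x‖ ^ (2 * m) : ℝ) : ℂ) = geo N x ^ m * (starRingEnd ℂ) (geo N x ^ m) := by
    rw [Complex.mul_conj, Complex.normSq_eq_norm_sq, norm_pow, ← pow_mul, mul_comm m 2]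
  rw [h1, hpow, map_sum, Finset.sum_mul_sum, ← Finset.sum_product',
    ← Finset.sum_fiberwise_of_maps_to hmaps]
  refine Finset.sum_congr rfl fun j _ => ?_
  rw [Finset.sum_mul]
  refine Finset.sum_congr rfl fun p hp => ?_
  rw [conj_ee, ← ee_add, one_mul, ← (Finset.mem_filter.1 hp).2]
  congr 1
  simp only [hd]
  push_cast
  ring

/-- Kernel concentrated on `|x| ≤ R^{-1/2}` modulo `1`, of degree `O(R^{2/3})`. -/
lemma exists_kernel : ∃ C : ℝ, 0 < C ∧ ∀ R : ℝ, 1 ≤ R → ∃ (D : ℕ) (c : ℤ → ℂ) (κ : ℝ → ℝ),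
    (D : ℝ) ≤ C * R ^ (2 / 3 : ℝ) ∧ c 0 = 1 ∧ (∀ j ∈ Finset.Icc (-(D : ℤ)) D, ‖c j‖ ≤ 1) ∧
    Continuous κ ∧ (∀ x, 0 ≤ κ x) ∧ (∀ (x : ℝ) (k : ℤ), κ (x + k) = κ x) ∧
    ∫ x in Ioc (-1 / 2 : ℝ) (1 / 2), κ x = 1 ∧
    ∫ x in Ioc (-1 / 2 : ℝ) (1 / 2) \ Icc (-(1 / √R)) (1 / √R), κ x ≤ C / (R * √R) ∧
    ∀ x, (κ x : ℂ) = ∑ j ∈ Finset.Icc (-(D : ℤ)) D, c j * ee (-(j * x)) := by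
  refine ⟨16, by norm_num, fun R hR => ?_⟩
  have hR0 : 0 < R := by linarith
  set N := ⌈R ^ (2 / 3 : ℝ)⌉₊ with hN
  set A := R ^ (2 / 3 : ℝ) with hA
  have hA1 : 1 ≤ A := Real.one_le_rpow hR (by norm_num)
  have hN1 : A ≤ N := Nat.le_ceil _
  have hN2 : (N : ℝ) ≤ 2 * A := by
    have := Nat.ceil_lt_add_one (by linarith : 0 ≤ A)
    linarith
  have hNpos : (0 : ℝ) < N := by linarith
  obtain ⟨b, hb⟩ := geo_pow_expand N 7
  set f : ℝ → ℝ := fun x => ‖geo N x‖ ^ (2 * 7) with hf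
  have hfc : Continuous f := (continuous_geo N).norm.pow _
  have hf0 : ∀ x, 0 ≤ f x := fun x => by positivity
  set Z := ∫ x in (-1 / 2 : ℝ)..(1 / 2), f x with hZ
  have hZlow : (1 / (8 * N)) * ((N : ℝ) / 2) ^ 14 ≤ Z := by
    have hle : 1 / (16 * (N : ℝ)) ≤ 1 / 2 := by
      rw [div_le_div_iff₀ (by positivity) (by norm_num)]; linarith
    have h1 : ∫ x in (-(1 / (16 * N)) : ℝ)..(1 / (16 * N)), ((N : ℝ) / 2) ^ 14 ≤
        ∫ x in (-(1 / (16 * N)) : ℝ)..(1 / (16 * N)), f x := by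
      refine intervalIntegral.integral_mono_on (by
        have : 0 < 1 / (16 * (N : ℝ)) := by positivity
        linarith) (by simp) (hfc.intervalIntegrable _ _) fun x hx => ?_
      have := le_norm_geo (N := N) (abs_le.2 hx)
      simp only [hf]
      gcongr
    have h2 : ∫ x in (-(1 / (16 * N)) : ℝ)..(1 / (16 * N)), f x ≤ Z := by
      refine intervalIntegral.integral_mono_interval (by linarith) (by
        have : 0 < 1 / (16 * (N : ℝ)) := by positivity
        linarith) hle (Filter.Eventually.of_forall hf0) (hfc.intervalIntegrable _ _)
    refine le_trans (le_of_eq ?_) (h1.trans h2)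
    rw [intervalIntegral.integral_const, smul_eq_mul]
    field_simp
    ring
  have hZpos : 0 < Z := lt_of_lt_of_le (by positivity) hZlow
  set κ : ℝ → ℝ := fun x => f x / Z with hκ
  have hκc : Continuous κ := hfc.div_const _
  have hκ0 : ∀ x, 0 ≤ κ x := fun x => div_nonneg (hf0 x) hZpos.le
  have hκint : ∫ x in (-1 / 2 : ℝ)..(1 / 2), κ x = 1 := by
    simp only [hκ]
    rw [intervalIntegral.integral_div, div_self hZpos.ne']
  have hexp : ∀ x, (κ x : ℂ) = ∑ j ∈ Finset.Icc (-((7 * N : ℕ) : ℤ)) (7 * N : ℕ),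
      (b j / Z) * ee (-(j * x)) := by
    intro x
    simp only [hκ]
    rw [Complex.ofReal_div, hb, Finset.sum_div]
    exact Finset.sum_congr rfl fun j _ => by ring
  have hcoef : ∀ j ∈ Finset.Icc (-((7 * N : ℕ) : ℤ)) (7 * N : ℕ),
      b j / Z = ∫ x in (-1 / 2 : ℝ)..(1 / 2), (κ x : ℂ) * ee (j * x) := by
    intro j hj
    have h1 : ∀ x : ℝ, (κ x : ℂ) * ee (j * x) = ∑ i ∈ Finset.Icc (-((7 * N : ℕ) : ℤ)) (7 * N : ℕ),
        (b i / Z) * ee ((j - i : ℤ) * x) := by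
      intro x
      rw [hexp, Finset.sum_mul]
      refine Finset.sum_congr rfl fun i _ => ?_
      rw [mul_assoc, ← ee_add]
      congr 2
      push_cast
      ring
    simp only [h1]
    rw [intervalIntegral.integral_finsetSum]
    · simp only [intervalIntegral.integral_const_mul, integral_ee_int]
      rw [Finset.sum_eq_single_of_mem j hj]
      · simp
      · intro i _ hi
        rw [if_neg (by omega), mul_zero]
    · intro i _
      exact Continuous.intervalIntegrable (by fun_prop) _ _
  refine ⟨7 * N, fun j => b j / Z, κ, ?_, ?_, ?_, hκc, hκ0, ?_, ?_, ?_, hexp⟩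
  · push_cast; linarith
  · change b 0 / Z = 1
    rw [hcoef 0 (by simp)]
    simp only [Int.cast_zero, zero_mul, ee_zero, mul_one]
    rw [intervalIntegral.integral_ofReal, hκint]; simp
  · intro j hj
    change ‖b j / Z‖ ≤ 1
    rw [hcoef j hj]
    refine le_trans ?_ hκint.le
    refine (intervalIntegral.norm_integral_le_integral_norm (by norm_num)).trans (le_of_eq ?_)
    refine intervalIntegral.integral_congr fun x _ => ?_
    simp [abs_of_nonneg (hκ0 x)]
  · intro x k
    simp only [hκ, hf]
    congr 3
    unfold geo
    refine Finset.sum_congr rfl fun j _ => ?_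
    have : (j : ℝ) * (x + k) = j * x + ((j * k : ℤ) : ℝ) := by push_cast; ring
    rw [this, ee_add, ee_int, mul_one]
  · rwa [intervalIntegral.integral_of_le (by norm_num)] at hκint
  · have hs : 0 < √R := Real.sqrt_pos.2 hR0
    have hbound : ∀ x ∈ Ioc (-1 / 2 : ℝ) (1 / 2) \ Icc (-(1 / √R)) (1 / √R),
        ‖κ x‖ ≤ 16 / (R * √R) := by
      intro x hx
      have hx1 : |x| ≤ 1 / 2 := abs_le.2 ⟨by linarith [hx.1.1], hx.1.2⟩
      have hx2 : 1 / √R < |x| := by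
        by_contra hcon
        exact hx.2 (abs_le.1 (not_lt.1 hcon))
      have hx0 : x ≠ 0 := by
        rintro rfl
        rw [abs_zero] at hx2
        have : 0 < 1 / √R := by positivity
        linarith
      have h1 : ‖geo N x‖ ≤ √R / 2 := by
        refine (norm_geo_le hx0 hx1).trans ?_
        rw [div_lt_iff₀ hs] at hx2
        rw [div_le_div_iff₀ (by positivity) (by norm_num)]
        linarith
      rw [Real.norm_eq_abs, abs_of_nonneg (hκ0 x)]
      simp only [hκ, hf]
      have hsR : √R = R ^ (1 / 2 : ℝ) := Real.sqrt_eq_rpow R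
      calc ‖geo N x‖ ^ (2 * 7) / Z ≤ (√R / 2) ^ 14 / ((1 / (8 * N)) * ((N : ℝ) / 2) ^ 14) := by
            gcongr
        _ = 8 * √R ^ 14 / N ^ 13 := by field_simp
        _ ≤ 8 * √R ^ 14 / A ^ 13 := by gcongr
        _ ≤ 16 / (R * √R) := by
            rw [div_le_div_iff₀ (by positivity) (by positivity)]
            have e1 : √R ^ 14 * (R * √R) = R ^ (17 / 2 : ℝ) := by
              rw [hsR, ← Real.rpow_natCast, ← Real.rpow_mul hR0.le]
              nth_rw 2 [← Real.rpow_one R]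
              rw [← Real.rpow_add hR0, ← Real.rpow_add hR0]
              norm_num
            have e2 : A ^ 13 = R ^ (26 / 3 : ℝ) := by
              rw [hA, ← Real.rpow_natCast, ← Real.rpow_mul hR0.le]
              norm_num
            have e3 : R ^ (17 / 2 : ℝ) ≤ R ^ (26 / 3 : ℝ) :=
              Real.rpow_le_rpow_of_exponent_le hR (by norm_num)
            rw [mul_assoc, e1, e2]
            have : 0 ≤ R ^ (26 / 3 : ℝ) := by positivity
            linarith
    have hvol : volume (Ioc (-1 / 2 : ℝ) (1 / 2) \ Icc (-(1 / √R)) (1 / √R)) ≤ 1 := by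
      refine (measure_mono sdiff_subset).trans ?_
      rw [Real.volume_Ioc]; norm_num
    have := norm_setIntegral_le_of_norm_le_const (μ := volume) (hvol.trans_lt (by simp)) hbound
    refine (le_abs_self _).trans (this.trans ?_)
    have h2 : volume.real (Ioc (-1 / 2 : ℝ) (1 / 2) \ Icc (-(1 / √R)) (1 / √R)) ≤ 1 := by
      unfold Measure.real
      exact ENNReal.toReal_le_of_le_ofReal (by norm_num) (by simpa using hvol)
    have : 0 ≤ 16 / (R * √R) := by positivity
    nlinarith

/-! ### Comparing the lattice count with a smoothed area -/

/-- The product kernel on the plane. -/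
def ker2 (κ : ℝ → ℝ) (x : E2) : ℝ := κ (x 0) * κ (x 1)

/-- The translate by `k` of the product set `A × B`. -/
def box (k : Fin 2 → ℤ) (A B : Set ℝ) : Set E2 := {ξ | ξ 0 - k 0 ∈ A ∧ ξ 1 - k 1 ∈ B}

lemma continuous_ker2 {κ : ℝ → ℝ} (hκ : Continuous κ) : Continuous (ker2 κ) := by
  unfold ker2; fun_prop

lemma box_meas (k : Fin 2 → ℤ) {A B : Set ℝ} (hA : MeasurableSet A) (hB : MeasurableSet B) :
    MeasurableSet (box k A B) := by
  have h0 : Measurable fun ξ : E2 => ξ 0 - k 0 := by fun_prop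
  have h1 : Measurable fun ξ : E2 => ξ 1 - k 1 := by fun_prop
  exact (h0 hA).inter (h1 hB)

lemma setIntegral_shift {κ : ℝ → ℝ} (hper : ∀ (x : ℝ) (k : ℤ), κ (x + k) = κ x) (A : Set ℝ) (k : ℤ) :
    ∫ x in {x : ℝ | x - k ∈ A}, κ x = ∫ x in A, κ x := by
  have h1 := (measurePreserving_sub_right (volume : Measure ℝ) (k : ℝ)).setIntegral_preimage_emb
    (MeasurableEquiv.subRight (k : ℝ)).measurableEmbedding κ A
  have h2 : ∀ x : ℝ, κ (x - k) = κ x := fun x => by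
    rw [← hper (x - k) k, sub_add_cancel]
  simp only [h2] at h1
  exact h1

lemma integral_box {κ : ℝ → ℝ} (hper : ∀ (x : ℝ) (k : ℤ), κ (x + k) = κ x) (k : Fin 2 → ℤ)
    (A B : Set ℝ) :
    ∫ ξ in box k A B, ker2 κ ξ = (∫ x in A, κ x) * ∫ x in B, κ x := by
  rw [← setIntegral_shift hper A (k 0), ← setIntegral_shift hper B (k 1), ← setIntegral_prod_mul]
  rw [← toLp_mp.setIntegral_preimage_emb (MeasurableEquiv.measurableEmbedding _)]
  rfl

section
variable {Ω : Set E2} {r0 Rm K : ℝ}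

lemma Dom.mem_smul_add (h : Dom Ω r0 Rm K) {x y : E2} {t s : ℝ} (hx : x ∈ t • Ω) (ht : 0 ≤ t)
    (hs : 0 < s) (hy : ‖y - x‖ < s * r0) : y ∈ (t + s) • Ω := by
  have h1 : y - x ∈ s • Ω := by
    rw [mem_smul_set_iff_inv_smul_mem₀ hs.ne']
    apply h.ball_sub
    rw [mem_ball_zero_iff, norm_smul, norm_inv, Real.norm_eq_abs, abs_of_pos hs,
      inv_mul_lt_iff₀ hs]
    exact hy
  rw [h.conv.add_smul ht hs.le]
  exact ⟨x, hx, y - x, h1, by simp⟩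

lemma Dom.finite_lattice (h : Dom Ω r0 Rm K) (t : ℝ) : {k : Fin 2 → ℤ | ek k ∈ t • Ω}.Finite := by
  obtain ⟨M, hM⟩ := exists_nat_gt (|t| * Rm)
  refine ((Fintype.piFinset fun _ : Fin 2 => Finset.Icc (-(M : ℤ)) M).finite_toSet).subset ?_
  rintro k ⟨x, hx, hxk⟩
  have hn : ‖ek k‖ ≤ |t| * Rm := by
    rw [← hxk]
    simp only [norm_smul, Real.norm_eq_abs]
    gcongr
    exact (h.norm_lt hx).le
  rw [Finset.mem_coe, Fintype.mem_piFinset]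
  intro i
  have h1 : |(k i : ℝ)| ≤ ‖ek k‖ := by
    have := PiLp.norm_apply_le (ek k) i
    simpa [ek_apply] using this
  have h2 := abs_le.1 (h1.trans (hn.trans hM.le))
  rw [Finset.mem_Icc]
  exact ⟨by exact_mod_cast h2.1, by exact_mod_cast h2.2⟩

lemma Dom.latticeCount_eq (h : Dom Ω r0 Rm K) (t : ℝ) :
    latticeCount (t • Ω) = (h.finite_lattice t).toFinset.card := by
  unfold latticeCount
  exact Nat.card_eq_card_finite_toFinset (h.finite_lattice t)

lemma Dom.latticeCount_le (h : Dom Ω r0 Rm K) : ∃ C : ℝ, 0 < C ∧ ∀ t : ℝ, 1 ≤ t →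
    (latticeCount (t • Ω) : ℝ) ≤ C * t ^ 2 := by
  have hR := h.Rm_pos
  set B : Set E2 := Metric.closedBall 0 (Rm + 2)
  have hB : volume B ≠ ⊤ := measure_closedBall_lt_top.ne
  refine ⟨(volume B).toReal + 1, by positivity, fun t ht => ?_⟩
  rw [h.latticeCount_eq]
  have hc := card_le_volume (h.finite_lattice t).toFinset (t • B) (by
    intro k hk ξ hξ
    have hk' : ek k ∈ t • Ω := by simpa using hk
    obtain ⟨x, hx, hxk⟩ := hk'
    rw [mem_smul_set_iff_inv_smul_mem₀ (by linarith)]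
    rw [mem_closedBall_zero_iff, norm_smul, norm_inv, Real.norm_eq_abs, abs_of_pos (by linarith),
      inv_mul_le_iff₀ (by linarith)]
    have h1 := cube_dist hξ
    have h2 : ‖ek k‖ ≤ t * Rm := by
      rw [← hxk]
      simp only [norm_smul, Real.norm_eq_abs]
      rw [abs_of_pos (by linarith)]
      gcongr
      exact (h.norm_lt hx).le
    have h3 : ‖ξ‖ ≤ ‖ξ - ek k‖ + ‖ek k‖ := by
      have := norm_add_le (ξ - ek k) (ek k)
      simpa using this
    nlinarith)
  rw [volume_smul_E2] at hc
  have := ENNReal.toReal_mono (ENNReal.mul_ne_top (by simp) hB) hc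
  rw [ENNReal.toReal_natCast, ENNReal.toReal_mul, ENNReal.toReal_ofReal (by positivity)] at this
  nlinarith [sq_nonneg t]

lemma norm_lt_of_coord {ξ : E2} {k : Fin 2 → ℤ} {ε : ℝ} (hε : 0 < ε)
    (h0 : ξ 0 - k 0 ∈ Icc (-ε) ε) (h1 : ξ 1 - k 1 ∈ Icc (-ε) ε) : ‖ξ - ek k‖ < 2 * ε := by
  have : ‖ξ - ek k‖ ^ 2 < (2 * ε) ^ 2 := by
    rw [norm_sq_E2]
    simp only [PiLp.sub_apply, ek_apply]
    have e0 := sq_le_sq' h0.1 h0.2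
    have e1 := sq_le_sq' h1.1 h1.2
    nlinarith
  exact lt_of_pow_lt_pow_left₀ 2 (by positivity) this

/-- Up to the tails of the kernel, the number of lattice points in `tΩ` lies between the integrals
of the kernel over a slightly smaller and a slightly larger dilate of `Ω`. -/
lemma Dom.sandwich (h : Dom Ω r0 Rm K) {κ : ℝ → ℝ} {ε τ t : ℝ} (hε : 0 < ε)
    (hκ : Continuous κ) (hκ0 : ∀ x, 0 ≤ κ x) (hper : ∀ (x : ℝ) (k : ℤ), κ (x + k) = κ x)
    (hmass : ∫ x in Ioc (-1 / 2 : ℝ) (1 / 2), κ x = 1)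
    (htail : ∫ x in Ioc (-1 / 2 : ℝ) (1 / 2) \ Icc (-ε) ε, κ x ≤ τ) (ht : 2 / r0 * ε ≤ t) :
    (latticeCount (t • Ω) : ℝ) ≤ (∫ x in (t + 2 / r0 * ε) • Ω, ker2 κ x) +
        2 * τ * latticeCount (t • Ω) ∧
    ∫ x in (t - 2 / r0 * ε) • Ω, ker2 κ x ≤ latticeCount (t • Ω) +
        2 * τ * latticeCount ((t + 2 / r0) • Ω) := by
  classical
  have hr := h.r0_pos
  set I := Ioc (-1 / 2 : ℝ) (1 / 2) with hI
  set J := I ∩ Icc (-ε) ε with hJ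
  have hτ : 0 ≤ τ := le_trans (integral_nonneg hκ0) htail
  have hIm : MeasurableSet I := measurableSet_Ioc
  have hJm : MeasurableSet J := hIm.inter measurableSet_Icc
  have hbm : ∀ k, MeasurableSet (box k I I) := fun k => box_meas k hIm hIm
  have hcm : ∀ k, MeasurableSet (box k J J) := fun k => box_meas k hJm hJm
  have hk0 : ∀ x, 0 ≤ ker2 κ x := fun x => mul_nonneg (hκ0 _) (hκ0 _)
  have hbdd : ∀ k, Bornology.IsBounded (box k I I) := by
    intro k
    refine (Metric.isBounded_iff_subset_closedBall (ek k)).2 ⟨2 * 1, fun ξ hξ => ?_⟩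
    rw [Metric.mem_closedBall, dist_eq_norm]
    refine (norm_lt_of_coord one_pos ?_ ?_).le
    · exact ⟨by linarith [hξ.1.1], by linarith [hξ.1.2]⟩
    · exact ⟨by linarith [hξ.2.1], by linarith [hξ.2.2]⟩
  have hint : ∀ s : Set E2, Bornology.IsBounded s → IntegrableOn (ker2 κ) s := by
    intro s hs
    obtain ⟨M, hM⟩ := (Metric.isBounded_iff_subset_closedBall 0).1 hs
    exact ((continuous_ker2 hκ).continuousOn.integrableOn_compact (isCompact_closedBall 0 M)).mono_set hM
  have hΩb : ∀ s : ℝ, IntegrableOn (ker2 κ) (s • Ω) := fun s => hint _ (h.isBounded.smul₀ s)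
  have hΩm : ∀ s : ℝ, 0 < s → MeasurableSet (s • Ω) := fun s hs =>
    (h.isOpen.smul₀ hs.ne').measurableSet
  have hb1 : ∀ k, ∫ ξ in box k I I, ker2 κ ξ = 1 := by
    intro k; rw [integral_box hper, hmass, one_mul]
  have hbI : ∀ k, IntegrableOn (ker2 κ) (box k I I) := fun k => hint _ (hbdd k)
  have hJI : ∀ k, box k J J ⊆ box k I I := fun k ξ hξ => ⟨hξ.1.1, hξ.2.1⟩
  have hsub1 : ∀ k, box k (I \ Icc (-ε) ε) I ⊆ box k I I := fun k ξ hξ => ⟨hξ.1.1, hξ.2⟩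
  have hsub2 : ∀ k, box k I (I \ Icc (-ε) ε) ⊆ box k I I := fun k ξ hξ => ⟨hξ.1, hξ.2.1⟩
  have htl : ∀ k, ∫ ξ in box k I I \ box k J J, ker2 κ ξ ≤ 2 * τ := by
    intro k
    have hs : box k I I \ box k J J ⊆ box k (I \ Icc (-ε) ε) I ∪ box k I (I \ Icc (-ε) ε) := by
      rintro ξ ⟨⟨ha, hb⟩, hc⟩
      by_cases h1 : ξ 0 - k 0 ∈ Icc (-ε) ε
      · right
        refine ⟨ha, hb, fun h2 => hc ⟨⟨ha, h1⟩, ⟨hb, h2⟩⟩⟩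
      · left
        exact ⟨⟨ha, h1⟩, hb⟩
    have hm1 := box_meas k (hIm.diff (measurableSet_Icc (a := -ε) (b := ε))) hIm
    have hm2 := box_meas k hIm (hIm.diff (measurableSet_Icc (a := -ε) (b := ε)))
    have hi1 := (hbI k).mono_set (hsub1 k)
    have hi2 := (hbI k).mono_set (hsub2 k)
    have hle : ∀ ξ, (box k I I \ box k J J).indicator (ker2 κ) ξ ≤
        (box k (I \ Icc (-ε) ε) I).indicator (ker2 κ) ξ +
        (box k I (I \ Icc (-ε) ε)).indicator (ker2 κ) ξ := by
      intro ξ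
      have n1 : 0 ≤ (box k (I \ Icc (-ε) ε) I).indicator (ker2 κ) ξ :=
        indicator_nonneg (fun x _ => hk0 x) ξ
      have n2 : 0 ≤ (box k I (I \ Icc (-ε) ε)).indicator (ker2 κ) ξ :=
        indicator_nonneg (fun x _ => hk0 x) ξ
      by_cases hξ : ξ ∈ box k I I \ box k J J
      · rw [indicator_of_mem hξ]
        rcases hs hξ with h1 | h1
        · rw [indicator_of_mem h1]; linarith
        · rw [indicator_of_mem (s := box k I (I \ Icc (-ε) ε)) h1]; linarith
      · rw [indicator_of_notMem hξ]; linarith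
    rw [← integral_indicator ((hbm k).diff (hcm k))]
    have hmono := integral_mono
      (((integrable_indicator_iff ((hbm k).diff (hcm k))).2 ((hbI k).mono_set sdiff_subset)))
      (((integrable_indicator_iff hm1).2 hi1).add ((integrable_indicator_iff hm2).2 hi2)) hle
    refine hmono.trans ?_
    simp only [Pi.add_apply]
    rw [integral_add ((integrable_indicator_iff hm1).2 hi1) ((integrable_indicator_iff hm2).2 hi2),
      integral_indicator hm1, integral_indicator hm2, integral_box hper, integral_box hper, hmass]
    linarith
  have hcore : ∀ k, 1 - 2 * τ ≤ ∫ ξ in box k J J, ker2 κ ξ := by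
    intro k
    have := setIntegral_sdiff (hcm k) (hbI k) (hJI k)
    have h2 := hb1 k
    have h3 := htl k
    linarith
  have hdisj : ∀ k l : Fin 2 → ℤ, k ≠ l → Disjoint (box k I I) (box l I I) := by
    intro k l hkl
    rw [Set.disjoint_left]
    intro ξ h1 h2
    apply hkl
    have e : ∀ m : Fin 2 → ℤ, ξ ∈ box m I I → ∀ i, ⌈ξ i - 1 / 2⌉ = m i := by
      intro m hm i
      rw [Int.ceil_eq_iff]
      fin_cases i
      · exact ⟨by simp; linarith [hm.1.1], by simp; linarith [hm.1.2]⟩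
      · exact ⟨by simp; linarith [hm.2.1], by simp; linarith [hm.2.2]⟩
    ext i
    rw [← e k h1, ← e l h2]
  have hcover : ∀ ξ : E2, ∃ k, ξ ∈ box k I I := by
    intro ξ
    refine ⟨fun i => ⌈ξ i - 1 / 2⌉, ?_⟩
    have e : ∀ i, ξ i - (⌈ξ i - 1 / 2⌉ : ℤ) ∈ I := by
      intro i
      have h1 := Int.le_ceil (ξ i - 1 / 2)
      have h2 := Int.ceil_lt_add_one (ξ i - 1 / 2)
      exact ⟨by linarith, by linarith⟩
    exact ⟨e 0, e 1⟩
  have hC1 : 0 < 2 / r0 * ε := by positivity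
  have ht0 : 0 < t := hC1.trans_le ht
  set S := (h.finite_lattice t).toFinset with hS
  have hSm : ∀ k, k ∈ S ↔ ek k ∈ t • Ω := fun k => by simp [hS]
  constructor
  · rw [h.latticeCount_eq, ← hS]
    have hU : (⋃ k ∈ S, box k J J) ⊆ (t + 2 / r0 * ε) • Ω := by
      refine iUnion₂_subset fun k hk ξ hξ => ?_
      refine h.mem_smul_add ((hSm k).1 hk) ht0.le hC1 ?_
      have := norm_lt_of_coord hε hξ.1.2 hξ.2.2
      calc _ < 2 * ε := this
        _ = _ := by field_simp
    have h1 : ∑ k ∈ S, ∫ ξ in box k J J, ker2 κ ξ ≤ ∫ x in (t + 2 / r0 * ε) • Ω, ker2 κ x := by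
      rw [← integral_biUnion_finset S (fun k _ => hcm k)
        (fun k _ l _ hkl => (hdisj k l hkl).mono (hJI k) (hJI l))
        (fun k _ => (hbI k).mono_set (hJI k))]
      exact setIntegral_mono_set (hΩb _) (Filter.Eventually.of_forall hk0)
        (Filter.Eventually.of_forall hU)
    have h2 : ∑ k ∈ S, (1 - 2 * τ) ≤ ∑ k ∈ S, ∫ ξ in box k J J, ker2 κ ξ :=
      Finset.sum_le_sum fun k _ => hcore k
    rw [Finset.sum_const, nsmul_eq_mul] at h2
    linarith
  · set s := t - 2 / r0 * ε with hs
    have hsnn : 0 ≤ s := by linarith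
    rcases hsnn.eq_or_lt with hs0 | hspos
    · rw [← hs0]
      have : ∫ x in (0 : ℝ) • Ω, ker2 κ x = 0 := by
        apply setIntegral_measure_zero
        rw [volume_smul_E2]; simp
      rw [this]; positivity
    set S' := (h.finite_lattice (t + 2 / r0)).toFinset with hS'
    have hSm' : ∀ k, k ∈ S' ↔ ek k ∈ (t + 2 / r0) • Ω := fun k => by simp [hS']
    rw [h.latticeCount_eq, h.latticeCount_eq, ← hS, ← hS']
    have hU : s • Ω = ⋃ k ∈ S', (s • Ω ∩ box k I I) := by
      ext ξ
      simp only [mem_iUnion, mem_inter_iff, exists_prop]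
      constructor
      · intro hξ
        obtain ⟨k, hk⟩ := hcover ξ
        refine ⟨k, ?_, hξ, hk⟩
        rw [hSm']
        have hd : ‖ek k - ξ‖ < (2 / r0 * ε + 2 / r0) * r0 := by
          rw [norm_sub_rev]
          have : ‖ξ - ek k‖ < 2 * 1 := norm_lt_of_coord one_pos
            ⟨by linarith [hk.1.1], by linarith [hk.1.2]⟩
            ⟨by linarith [hk.2.1], by linarith [hk.2.2]⟩
          have e : (2 / r0 * ε + 2 / r0) * r0 = 2 * ε + 2 := by field_simp
          linarith
        have := h.mem_smul_add hξ hspos.le (by positivity) hd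
        rwa [hs, show t - 2 / r0 * ε + (2 / r0 * ε + 2 / r0) = t + 2 / r0 by ring] at this
      · rintro ⟨k, _, h1, _⟩
        exact h1
    have hsm := hΩm s hspos
    have h1 : ∫ x in s • Ω, ker2 κ x = ∑ k ∈ S', ∫ x in s • Ω ∩ box k I I, ker2 κ x := by
      conv_lhs => rw [hU]
      exact integral_biUnion_finset S' (fun k _ => hsm.inter (hbm k))
        (fun k _ l _ hkl => (hdisj k l hkl).mono inter_subset_right inter_subset_right)
        (fun k _ => (hbI k).mono_set inter_subset_right)
    have h2 : ∀ k ∈ S', ∫ x in s • Ω ∩ box k I I, ker2 κ x ≤ (if k ∈ S then 1 else 0) + 2 * τ := by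
      intro k _
      split_ifs with hk
      · have : ∫ x in s • Ω ∩ box k I I, ker2 κ x ≤ ∫ x in box k I I, ker2 κ x :=
          setIntegral_mono_set (hbI k) (Filter.Eventually.of_forall hk0)
            (Filter.Eventually.of_forall fun x hx => hx.2)
        rw [hb1] at this
        linarith
      · rw [zero_add]
        refine le_trans ?_ (htl k)
        refine setIntegral_mono_set ((hbI k).mono_set sdiff_subset)
          (Filter.Eventually.of_forall hk0) (Filter.Eventually.of_forall ?_)
        rintro ξ ⟨ha, hb⟩
        refine ⟨hb, fun hc => hk ((hSm k).2 ?_)⟩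
        have := norm_lt_of_coord hε hc.1.2 hc.2.2
        rw [norm_sub_rev] at this
        have h3 := h.mem_smul_add ha hspos.le hC1 (this.trans_eq (by field_simp))
        rwa [hs, sub_add_cancel] at h3
    rw [h1]
    refine (Finset.sum_le_sum h2).trans ?_
    rw [Finset.sum_add_distrib, Finset.sum_const, nsmul_eq_mul, ← Finset.sum_filter,
      Finset.sum_const, nsmul_eq_mul, mul_one, mul_comm (2 * τ)]
    gcongr
    intro k hk
    exact (Finset.mem_filter.1 hk).2
end

/-! ### Mean squares of the near and far kink sums -/

/-- Mean square bound for a family of frequencies by the number of close pairs, weighted by the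
moduli of the coefficients. -/
lemma mean_sq_le_pairs : ∃ C : ℝ, 0 < C ∧ ∀ {ι : Type} (s : Finset ι) (b : ι → ℂ) (β ν : ι → ℝ)
    (R h : ℝ), 1 ≤ h → (∀ i ∈ s, ‖b i‖ ≤ β i) →
    (1 / h) * ∫ t in R..(R + h), ‖∑ i ∈ s, b i * ee (-(ν i * t))‖ ^ 2 ≤
      C * ∑ i ∈ s, ∑ j ∈ s, if |ν i - ν j| ≤ 1 then β i * β j else 0 := by
  obtain ⟨C, hC, H⟩ := large_sieve
  refine ⟨C, hC, fun {ι} s b β ν R h hh hb => (H s b ν R h (by linarith)).trans ?_⟩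
  have hβ : ∀ i ∈ s, 0 ≤ β i := fun i hi => (norm_nonneg _).trans (hb i hi)
  gcongr
  refine (integral_sq_le_pairs s β (fun i => h * ν i) hβ _ fun x => ?_).trans ?_
  · refine (norm_sum_le _ _).trans (Finset.sum_le_sum fun i hi => ?_)
    rw [norm_mul, norm_mul, norm_ee, mul_one, Complex.norm_real, Real.norm_eq_abs,
      abs_of_nonneg (sieveBump_nonneg _)]
    refine mul_le_mul (hb i hi) ?_ (sieveBump_nonneg _) (hβ i hi)
    split_ifs with hx
    · exact sieveBump_le_one _
    · exact (sieveBump_eq_zero (by linarith)).le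
  · refine Finset.sum_le_sum fun i hi => Finset.sum_le_sum fun j hj => ?_
    have hp := mul_nonneg (hβ i hi) (hβ j hj)
    by_cases h1 : |ν i - ν j| ≤ 1
    · rw [if_pos h1]
      split_ifs <;> linarith
    · rw [if_neg h1, if_neg]
      rw [← mul_sub, abs_mul, abs_of_nonneg (by linarith)]
      push Not at h1 ⊢
      nlinarith

/-- Mean square bound for differences of nearby frequencies, where the cancellation between
`e(-(ρ - vn)t)` and `e(-ρt)` is used. -/
lemma near_mean : ∃ C : ℝ, 0 < C ∧ ∀ {Z : Type} (Ks : Finset Z) (T : Z → Finset ℕ) (n ρ : Z → ℝ)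
    (α v : Z → ℕ → ℝ) (b : Z → ℂ) (R h : ℝ), 1 ≤ h → h ≤ R →
    (∀ k ∈ Ks, 0 < n k) → (∀ k ∈ Ks, ‖b k‖ ≤ 1 / n k ^ 2) →
    (∀ k ∈ Ks, ∀ i ∈ T k, 0 ≤ α k i) → (∀ k ∈ Ks, ∀ i ∈ T k, 0 ≤ v k i) →
    (∀ k ∈ Ks, ∀ i ∈ T k, h * (v k i * n k) ≤ 1 / 4) →
    (1 / h) * ∫ t in R..(R + h), ‖∑ p ∈ Ks.sigma T, b p.1 * (α p.1 p.2 *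
        (ee (-((ρ p.1 - v p.1 p.2 * n p.1) * t)) - ee (-(ρ p.1 * t))))‖ ^ 2 ≤
      C * ∑ k ∈ Ks, ∑ k' ∈ Ks, if |ρ k - ρ k'| ≤ 1 / h then
        ((1 / n k ^ 2) * ∑ i ∈ T k, α k i * min (R * (v k i * n k)) 1) *
        ((1 / n k' ^ 2) * ∑ i ∈ T k', α k' i * min (R * (v k' i * n k')) 1) else 0 := by
  obtain ⟨C, hC, H⟩ := large_sieve
  obtain ⟨L, hL, hLip⟩ := sieveBump_lipschitz
  have hpi := Real.pi_pos
  set C' := 2 * Real.pi + 2 + L with hC'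
  refine ⟨C * C' ^ 2, by positivity, fun {Z} Ks T n ρ α v b R h hh hhR hn hb hα hv hhv => ?_⟩
  have hRpos : 0 < R := by linarith
  have hhpos : 0 < h := by linarith
  set cf : (Σ _ : Z, ℕ) × Bool → ℂ := fun p =>
    b p.1.1 * α p.1.1 p.1.2 * (if p.2 then 1 else -1) with hcf
  set ν : (Σ _ : Z, ℕ) × Bool → ℝ := fun p =>
    ρ p.1.1 - (if p.2 then v p.1.1 p.1.2 * n p.1.1 else 0) with hν
  have key := H (Ks.sigma T ×ˢ Finset.univ) cf ν R h (by linarith)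
  have e1 : ∀ t : ℝ, ∑ p ∈ Ks.sigma T ×ˢ (Finset.univ : Finset Bool), cf p * ee (-(ν p * t)) =
      ∑ p ∈ Ks.sigma T, b p.1 * (α p.1 p.2 *
        (ee (-((ρ p.1 - v p.1 p.2 * n p.1) * t)) - ee (-(ρ p.1 * t)))) := by
    intro t
    rw [Finset.sum_product]
    refine Finset.sum_congr rfl fun p _ => ?_
    simp only [Fintype.univ_bool, hcf, hν]
    simp
    ring
  simp only [e1] at key
  refine key.trans ?_
  rw [mul_assoc]
  gcongr
  set g : Z → ℝ := fun k => (1 / n k ^ 2) * ∑ i ∈ T k, α k i * min (R * (v k i * n k)) 1 with hg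
  have hg0 : ∀ k ∈ Ks, 0 ≤ g k := by
    intro k hk
    have := hn k hk
    refine mul_nonneg (by positivity) (Finset.sum_nonneg fun i hi => mul_nonneg (hα k hk i hi) ?_)
    have := hv k hk i hi
    positivity
  refine (integral_sq_le_pairs Ks (fun k => C' * g k) (fun k => h * ρ k)
    (fun k hk => by have := hg0 k hk; positivity) _ fun x => ?_).trans (le_of_eq ?_)
  · rw [Finset.sum_product]
    refine (norm_sum_le _ _).trans ?_
    rw [Finset.sum_sigma]
    refine Finset.sum_le_sum fun k hk => ?_
    have hnk := hn k hk
    simp only [hg]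
    rw [Finset.mul_sum, Finset.mul_sum, Finset.sum_mul]
    refine Finset.sum_le_sum fun i hi => ?_
    have hvi := hv k hk i hi
    have hαi := hα k hk i hi
    set w := v k i * n k with hw
    have hw0 : 0 ≤ w := mul_nonneg hvi hnk.le
    have hhw := hhv k hk i hi
    rw [← hw] at hhw
    simp only [Fintype.univ_bool, hcf, hν]
    set φ1 := sieveBump (x - h * (ρ k - w)) with hφ1
    set φ2 := sieveBump (x - h * ρ k) with hφ2
    have e2 : ee (-((ρ k - w) * R)) = ee (-(ρ k * R)) * ee (R * w) := by
      rw [← ee_add]; congr 1; ring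
    have e3 : ∑ y ∈ ({true, false} : Finset Bool),
        b k * (α k i : ℂ) * (if y = true then 1 else -1) *
          ee (-((ρ k - if y = true then w else 0) * R)) *
          ((sieveBump (x - h * (ρ k - if y = true then w else 0)) : ℝ) : ℂ) =
        b k * (α k i : ℂ) * ee (-(ρ k * R)) * ((ee (R * w) - 1) * φ1 + ((φ1 - φ2 : ℝ) : ℂ)) := by
      rw [Finset.sum_pair (by decide)]
      simp only [if_true, Bool.false_eq_true, if_false, sub_zero]
      rw [e2, ← hφ1, ← hφ2]
      push_cast
      ring
    rw [e3, norm_mul, norm_mul, norm_mul, norm_ee, mul_one, Complex.norm_real, Real.norm_eq_abs,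
      abs_of_nonneg hαi]
    have hφ1n : 0 ≤ φ1 := sieveBump_nonneg _
    have hφ2n : 0 ≤ φ2 := sieveBump_nonneg _
    have hφ11 : φ1 ≤ 1 := sieveBump_le_one _
    have hφ21 : φ2 ≤ 1 := sieveBump_le_one _
    set m := min (R * w) 1 with hm
    have hm0 : 0 ≤ m := le_min (by positivity) zero_le_one
    have hmain : ‖(ee (R * w) - 1) * φ1 + ((φ1 - φ2 : ℝ) : ℂ)‖ ≤
        C' * m * (if |x - h * ρ k| ≤ 1 / 2 then (1 : ℝ) else 0) := by
      split_ifs with hx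
      · have a1 : ‖ee (R * w) - 1‖ ≤ (2 * Real.pi + 1) * m := by
          rcases min_cases (R * w) 1 with ⟨h1, h2⟩ | ⟨h1, h2⟩
          · rw [hm, h1]
            have := norm_ee_sub_one_le (R * w)
            rw [abs_of_nonneg (by positivity)] at this
            nlinarith [mul_nonneg hRpos.le hw0]
          · rw [hm, h1]
            have := norm_ee_sub_one_le_two (R * w)
            have := Real.pi_gt_three
            linarith
        have a2 : |φ1 - φ2| ≤ (L + 1) * m := by
          rcases min_cases (R * w) 1 with ⟨h1, h2⟩ | ⟨h1, h2⟩
          · rw [hm, h1]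
            have : |φ1 - φ2| ≤ _ := hLip (x - h * (ρ k - w)) (x - h * ρ k)
            have e : x - h * (ρ k - w) - (x - h * ρ k) = h * w := by ring
            rw [e, abs_of_nonneg (by positivity : 0 ≤ h * w)] at this
            have h5 : h * w ≤ R * w := by gcongr
            have h6 : L * (h * w) ≤ L * (R * w) := by gcongr
            linarith [mul_nonneg hRpos.le hw0]
          · rw [hm, h1]
            rw [abs_le]
            constructor <;> linarith
        calc _ ≤ ‖ee (R * w) - 1‖ * ‖(φ1 : ℂ)‖ + ‖((φ1 - φ2 : ℝ) : ℂ)‖ := by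
              rw [← norm_mul]; exact norm_add_le _ _
          _ ≤ ((2 * Real.pi + 1) * m) * 1 + (L + 1) * m := by
              rw [Complex.norm_real, Complex.norm_real, Real.norm_eq_abs, Real.norm_eq_abs]
              gcongr
              rw [abs_of_nonneg hφ1n]; exact hφ11
          _ = C' * m * 1 := by rw [hC']; ring
      · have hx' : 1 / 2 < |x - h * ρ k| := not_le.1 hx
        have z2 : φ2 = 0 := sieveBump_eq_zero (by linarith)
        have z1 : φ1 = 0 := by
          apply sieveBump_eq_zero
          have e : x - h * (ρ k - w) = (x - h * ρ k) + h * w := by ring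
          rw [e]
          have h6 := abs_sub_abs_le_abs_sub (x - h * ρ k) (-(h * w))
          rw [abs_neg, abs_of_nonneg (by positivity : 0 ≤ h * w), sub_neg_eq_add] at h6
          linarith
        rw [z1, z2]; simp
    calc _ ≤ (1 / n k ^ 2) * α k i * (C' * m * (if |x - h * ρ k| ≤ 1 / 2 then (1 : ℝ) else 0)) := by
          gcongr
          exact hb k hk
      _ = _ := by ring
  · rw [Finset.mul_sum]
    refine Finset.sum_congr rfl fun k _ => ?_
    rw [Finset.mul_sum]
    refine Finset.sum_congr rfl fun k' _ => ?_
    have : (|h * ρ k - h * ρ k'| ≤ 1) ↔ (|ρ k - ρ k'| ≤ 1 / h) := by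
      rw [← mul_sub, abs_mul, abs_of_nonneg (by linarith : 0 ≤ h), le_div_iff₀ (by linarith), mul_comm]
    simp only [this]
    split_ifs
    · ring
    · simp

/-! ### Deep kinks -/

/-- The direction of a lattice vector. -/
def dir (k : Fin 2 → ℤ) : E2 := (‖ek k‖)⁻¹ • ek k

lemma norm_dir {k : Fin 2 → ℤ} (hk : k ≠ 0) : ‖dir k‖ = 1 := by
  have := one_le_norm_ek hk
  rw [dir, norm_smul, norm_inv, norm_norm, inv_mul_cancel₀ (by linarith)]

lemma dir_neg (k : Fin 2 → ℤ) : dir (-k) = -dir k := by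
  rw [dir, dir, ek_neg, norm_neg, smul_neg]

lemma norm_smul_dir (k : Fin 2 → ℤ) : ‖ek k‖ • dir k = ek k := by
  by_cases hk : k = 0
  · subst hk; simp [ek_zero]
  · have := one_le_norm_ek hk
    rw [dir, smul_inv_smul₀ (by linarith)]

/-- Admissible families of kinks: `α θ j ≥ 0` is the mass of a kink at depth `v θ j` below the
support line of `Ω` with normal `θ`, and the masses are controlled by the cap diameters. -/
structure Kinks (Ω : Set E2) (C Λ : ℝ) (q : ℕ) (α v : E2 → ℕ → ℝ) : Prop where
  nonneg : ∀ θ : E2, ‖θ‖ = 1 → ∀ j ∈ Finset.range q, 0 ≤ α θ j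
  pos : ∀ θ : E2, ‖θ‖ = 1 → ∀ j ∈ Finset.range q, 0 < v θ j
  le_half : ∀ θ : E2, ‖θ‖ = 1 → ∀ j ∈ Finset.range q, v θ j ≤ suppFn Ω θ / 2
  mom : ∀ θ : E2, ‖θ‖ = 1 → ∑ j ∈ Finset.range q, α θ j * v θ j ≤ C
  cap : ∀ θ : E2, ‖θ‖ = 1 → ∀ u : ℝ, 1 / Λ ≤ u →
    ∑ j ∈ Finset.range q, α θ j * min (v θ j) u ≤ C * capDiam Ω θ u

section
variable {Ω : Set E2} {r0 Rm K : ℝ}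

lemma Dom.supp_dir (h : Dom Ω r0 Rm K) (k : Fin 2 → ℤ) :
    ‖ek k‖ * suppFn Ω (dir k) = suppFn Ω (ek k) := by
  rw [← h.supp_smul _ (norm_nonneg _), norm_smul_dir]

lemma norm_sub_sq_le (x y : ℂ) : ‖x - y‖ ^ 2 ≤ 2 * ‖x‖ ^ 2 + 2 * ‖y‖ ^ 2 := by
  have := norm_sub_le x y
  nlinarith [norm_nonneg x, norm_nonneg y, norm_nonneg (x - y), sq_nonneg (‖x‖ - ‖y‖)]

lemma norm_add_sq_le' (x y : ℂ) : ‖x + y‖ ^ 2 ≤ 2 * ‖x‖ ^ 2 + 2 * ‖y‖ ^ 2 := by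
  have := norm_sub_sq_le x (-y)
  simpa using this

lemma mean_mono {f g1 g2 : ℝ → ℝ} {R h : ℝ} (hh : 0 < h) (hf : ∀ t, f t ≤ 2 * g1 t + 2 * g2 t)
    (hf0 : ∀ t, 0 ≤ f t) (h1 : Continuous g1) (h2 : Continuous g2) :
    (1 / h) * ∫ t in R..(R + h), f t ≤
      2 * ((1 / h) * ∫ t in R..(R + h), g1 t) + 2 * ((1 / h) * ∫ t in R..(R + h), g2 t) := by
  have : ∫ t in R..(R + h), f t ≤ ∫ t in R..(R + h), (2 * g1 t + 2 * g2 t) := by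
    rw [intervalIntegral.integral_of_le (by linarith), intervalIntegral.integral_of_le (by linarith)]
    refine integral_mono_of_nonneg (Filter.Eventually.of_forall hf0) ?_
      (Filter.Eventually.of_forall hf)
    exact ((h1.const_mul 2).add (h2.const_mul 2)).integrableOn_Ioc
  rw [intervalIntegral.integral_add, intervalIntegral.integral_const_mul,
    intervalIntegral.integral_const_mul] at this
  · calc _ ≤ (1 / h) * (2 * ∫ t in R..(R + h), g1 t) + (1 / h) * (2 * ∫ t in R..(R + h), g2 t) := by
          rw [← mul_add]; gcongr
      _ = _ := by ring
  · exact (h1.const_mul 2).intervalIntegrable _ _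
  · exact (h2.const_mul 2).intervalIntegrable _ _

/-- Kinks at depth at least `M/(R|k|)` contribute `O(R)` to the mean square. -/
lemma Dom.far_top (h : Dom Ω r0 Rm K) (C : ℝ) (hC : 0 < C) : ∃ C' : ℝ, 0 < C' ∧
    ∀ (Ks : Finset (Fin 2 → ℤ)) (b : (Fin 2 → ℤ) → ℂ) (R' R hh M Λ : ℝ) (L q : ℕ)
      (α v : E2 → ℕ → ℝ),
    Kinks Ω C Λ q α v → 1 ≤ hh → 0 < R → 4 ≤ M → 1 ≤ L → (L : ℝ) ≤ M →
    (∀ k ∈ Ks, k ≠ 0) → (∀ k ∈ Ks, ‖b k‖ ≤ 1 / ‖ek k‖ ^ 2) →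
    (∀ k ∈ Ks, suppFn Ω (ek k) ≤ 2 ^ L) → (∀ k ∈ Ks, ‖ek k‖ * M ≤ R) →
    (∀ k ∈ Ks, R * ‖ek k‖ ≤ Λ) →
    (1 / hh) * ∫ t in R'..(R' + hh), ‖∑ p ∈ Ks.sigma
        (fun k => (Finset.range q).filter fun j => M / (R * ‖ek k‖) ≤ v (dir k) j),
        b p.1 * (α (dir p.1) p.2 * (ee (-((suppFn Ω (ek p.1) - v (dir p.1) p.2 * ‖ek p.1‖) * t)) -
          ee (-(suppFn Ω (ek p.1) * t))))‖ ^ 2 ≤ C' * R := by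
  obtain ⟨Cs, hCs, hsum⟩ := h.sum_inv_sq
  obtain ⟨C2, hC2, hcount⟩ := h.count
  obtain ⟨C3, hC3, hmean⟩ := mean_sq_le_pairs
  have hr := h.r0_pos
  have hRm := h.Rm_pos
  have hK := h.K_nonneg
  set c0 := min r0 1 with hc0
  set A := max Rm 1 with hA
  have hc0pos : 0 < c0 := lt_min hr one_pos
  have hApos : 1 ≤ A := le_max_right _ _
  set B := 2 * (3 * A * C2 * (4 * A / c0) ^ 2) with hB
  have hBpos : 0 < B := by positivity
  refine ⟨4 * (C3 * (B * ((C * K) ^ 2 * Cs + C * K * C * Cs))) + 1, by positivity, ?_⟩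
  intro Ks b R' R hh M Λ L q α v kd hh1 hR hM hL hLM hk0 hb hρL hnM hΛ
  set T : (Fin 2 → ℤ) → Finset ℕ :=
    fun k => (Finset.range q).filter fun j => M / (R * ‖ek k‖) ≤ v (dir k) j with hT
  set Q := C * K * √(R / M) with hQ
  have hMpos : 0 < M := by linarith
  have hn1 : ∀ k ∈ Ks, 1 ≤ ‖ek k‖ := fun k hk => one_le_norm_ek (hk0 k hk)
  have hTr : ∀ k, T k ⊆ Finset.range q := fun k => Finset.filter_subset _ _
  have hmass : ∀ k ∈ Ks, ∑ i ∈ T k, α (dir k) i ≤ Q * √‖ek k‖ := by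
    intro k hk
    have hn := hn1 k hk
    have hd := norm_dir (hk0 k hk)
    set V := M / (R * ‖ek k‖) with hV
    have hVpos : 0 < V := by positivity
    have hΛpos : 0 < Λ := lt_of_lt_of_le (by positivity) (hΛ k hk)
    have hVΛ : 1 / Λ ≤ V := by
      rw [hV, div_le_div_iff₀ hΛpos (by positivity)]
      nlinarith [hΛ k hk]
    have e1 : V * ∑ i ∈ T k, α (dir k) i ≤ C * (K * √V) := by
      calc V * ∑ i ∈ T k, α (dir k) i = ∑ i ∈ T k, α (dir k) i * min (v (dir k) i) V := by
            rw [Finset.mul_sum]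
            refine Finset.sum_congr rfl fun i hi => ?_
            rw [min_eq_right (Finset.mem_filter.1 hi).2, mul_comm]
        _ ≤ ∑ i ∈ Finset.range q, α (dir k) i * min (v (dir k) i) V := by
            refine Finset.sum_le_sum_of_subset_of_nonneg (hTr k) fun i hi _ => ?_
            exact mul_nonneg (kd.nonneg _ hd i hi) (le_min (kd.pos _ hd i hi).le hVpos.le)
        _ ≤ C * capDiam Ω (dir k) V := kd.cap _ hd V hVΛ
        _ ≤ C * (K * √V) := by gcongr; exact h.cap _ hd V hVpos
    have e2 : √V * √V = V := Real.mul_self_sqrt hVpos.le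
    have hsV : 0 < √V := Real.sqrt_pos.2 hVpos
    have e3 : √V * (√(R / M) * √‖ek k‖) = 1 := by
      rw [← Real.sqrt_mul (by positivity), ← Real.sqrt_mul hVpos.le]
      rw [show V * (R / M * ‖ek k‖) = 1 by rw [hV]; field_simp]
      simp
    have e4 : √V * ∑ i ∈ T k, α (dir k) i ≤ C * K := by
      have : √V * (√V * ∑ i ∈ T k, α (dir k) i) ≤ √V * (C * K) := by
        rw [← mul_assoc, e2]; linarith
      exact le_of_mul_le_mul_left this hsV
    have : √V * ∑ i ∈ T k, α (dir k) i ≤ √V * (Q * √‖ek k‖) := by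
      calc _ ≤ C * K := e4
        _ = C * K * (√V * (√(R / M) * √‖ek k‖)) := by rw [e3, mul_one]
        _ = _ := by rw [hQ]; ring
    exact le_of_mul_le_mul_left this hsV
  have hmom : ∀ k ∈ Ks, ∑ i ∈ T k, α (dir k) i * v (dir k) i ≤ C := by
    intro k hk
    have hd := norm_dir (hk0 k hk)
    refine le_trans ?_ (kd.mom _ hd)
    refine Finset.sum_le_sum_of_subset_of_nonneg (hTr k) fun i hi _ => ?_
    exact mul_nonneg (kd.nonneg _ hd i hi) (kd.pos _ hd i hi).le
  have hS1 := hsum Ks L hL hk0 hρL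
  have hS2 : ∑ k ∈ Ks, √‖ek k‖ / ‖ek k‖ ^ 2 ≤ √(R / M) * (Cs * L) := by
    calc _ ≤ ∑ k ∈ Ks, √(R / M) * (1 / ‖ek k‖ ^ 2) := by
          refine Finset.sum_le_sum fun k hk => ?_
          have hn := hn1 k hk
          rw [div_eq_mul_one_div]
          gcongr
          rw [le_div_iff₀ hMpos]
          exact hnM k hk
      _ ≤ _ := by rw [← Finset.mul_sum]; gcongr
  have hfin : Q ^ 2 * ∑ k ∈ Ks, 1 / ‖ek k‖ ^ 2 + Q * C * ∑ k ∈ Ks, √‖ek k‖ / ‖ek k‖ ^ 2 ≤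
      ((C * K) ^ 2 * Cs + C * K * C * Cs) * R := by
    have hq : √(R / M) * √(R / M) = R / M := Real.mul_self_sqrt (by positivity)
    have hQ0 : 0 ≤ Q := by positivity
    calc _ ≤ Q ^ 2 * (Cs * L) + Q * C * (√(R / M) * (Cs * L)) := by gcongr
      _ = ((C * K) ^ 2 * Cs + C * K * C * Cs) * ((√(R / M) * √(R / M)) * L) := by rw [hQ]; ring
      _ ≤ _ := by
          rw [hq]
          gcongr
          rw [div_mul_eq_mul_div, div_le_iff₀ hMpos]
          gcongr
  have hone : ∀ y : (Fin 2 → ℤ) → ℕ → ℝ, (∀ k ∈ Ks, ∀ i ∈ T k, 0 ≤ y k i) →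
      (∀ k ∈ Ks, ∀ i ∈ T k, y k i ≤ v (dir k) i * ‖ek k‖) →
      (1 / hh) * ∫ t in R'..(R' + hh), ‖∑ p ∈ Ks.sigma T, (b p.1 * α (dir p.1) p.2) *
        ee (-((suppFn Ω (ek p.1) - y p.1 p.2) * t))‖ ^ 2 ≤
      C3 * (B * ((C * K) ^ 2 * Cs + C * K * C * Cs)) * R := by
    intro y hy0 hyv
    have m1 := hmean (Ks.sigma T) (fun p => b p.1 * α (dir p.1) p.2)
      (fun p => α (dir p.1) p.2 / ‖ek p.1‖ ^ 2) (fun p => suppFn Ω (ek p.1) - y p.1 p.2) R' hh hh1 (by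
        intro p hp
        rw [Finset.mem_sigma] at hp
        have ha := kd.nonneg _ (norm_dir (hk0 _ hp.1)) _ (hTr _ hp.2)
        rw [norm_mul, Complex.norm_real, Real.norm_eq_abs, abs_of_nonneg ha, div_eq_mul_one_div,
          mul_comm]
        gcongr
        exact hb _ hp.1)
    refine m1.trans ?_
    have m2 := far_pairs Ks T (fun k => ‖ek k‖) (fun k => suppFn Ω (ek k)) (fun k => α (dir k))
      (fun k => v (dir k)) y c0 A C C2 Q hc0pos (min_le_right _ _) hApos hC.le hC2.le (by positivity)
      hn1
      (fun k _ => le_trans (by gcongr; exact min_le_left _ _) (h.le_supp (ek k)))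
      (fun k _ => (h.supp_le (ek k)).trans (by gcongr; exact le_max_left _ _))
      (fun k hk i hi => kd.nonneg _ (norm_dir (hk0 _ hk)) _ (hTr _ hi)) hy0 hyv
      (fun k hk i hi => (hyv k hk i hi).trans (by
        have h1 := kd.le_half _ (norm_dir (hk0 _ hk)) _ (hTr _ hi)
        have h2 := h.supp_dir k
        have h3 := hn1 k hk
        nlinarith))
      hmass hmom (hcount Ks)
    rw [mul_assoc C3, mul_assoc B]
    gcongr
    refine m2.trans ?_
    rw [hB]
    gcongr
  have t1 := hone (fun k i => v (dir k) i * ‖ek k‖)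
    (fun k hk i hi => by
      have := (kd.pos _ (norm_dir (hk0 _ hk)) _ (hTr _ hi)).le
      positivity) (fun _ _ _ _ => le_rfl)
  have t2 := hone (fun k i => 0) (fun k hk i hi => le_rfl)
    (fun k hk i hi => by
      have := (kd.pos _ (norm_dir (hk0 _ hk)) _ (hTr _ hi)).le
      positivity)
  refine (mean_mono (by linarith) (g1 := fun t => ‖∑ p ∈ Ks.sigma T, (b p.1 * α (dir p.1) p.2) *
        ee (-((suppFn Ω (ek p.1) - v (dir p.1) p.2 * ‖ek p.1‖) * t))‖ ^ 2)
      (g2 := fun t => ‖∑ p ∈ Ks.sigma T, (b p.1 * α (dir p.1) p.2) *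
        ee (-((suppFn Ω (ek p.1) - 0) * t))‖ ^ 2) (fun t => ?_) (fun t => by positivity)
      (by fun_prop) (by fun_prop)).trans ?_
  · refine le_trans (le_of_eq ?_) (norm_sub_sq_le _ _)
    rw [← Finset.sum_sub_distrib]
    congr 2
    refine Finset.sum_congr rfl fun p _ => ?_
    rw [sub_zero]
    ring
  · nlinarith
end

/-! ### The weighted lattice sums and the nearby kinks -/

section
variable {Ω : Set E2} {r0 Rm K : ℝ}

lemma wSum_nonneg (s r δ hh : ℝ) : 0 ≤ wSum Ω s r δ hh :=
  tsum_nonneg fun k => by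
    split_ifs
    · exact div_nonneg (capDiam_nonneg _ _) (Real.sqrt_nonneg _)
    · exact le_rfl

/-- Only finitely many lattice points contribute to a weighted lattice sum, and each weight is
bounded by the curvature hypothesis. -/
lemma Dom.wSum_bounds (h : Dom Ω r0 Rm K) : ∃ C : ℝ, 0 < C ∧ ∀ r δ hh : ℝ, 0 ≤ r → 0 < δ →
    1 ≤ hh → wSum Ω 1 r δ hh ≤ C * (1 + r) ∧
    ∀ Ks : Finset (Fin 2 → ℤ), (∀ k ∈ Ks, k ≠ 0) →
      (∑ k ∈ Ks, if |suppFn Ω (ek k) - r| ≤ 1 / hh then capDiam Ω (dir k) δ / √δ else 0) ≤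
        wSum Ω 1 r δ hh := by
  obtain ⟨C2, hC2, hcount⟩ := h.count
  have hK := h.K_nonneg
  refine ⟨C2 * (K + 1), by positivity, fun r δ hh hr hδ hh1 => ?_⟩
  set f : (Fin 2 → ℤ) → ℝ := fun k => if k ≠ 0 ∧ |suppFn Ω ((1 : ℝ) • ek k) - r| ≤ 1 / hh then
    capDiam Ω ((‖ek k‖)⁻¹ • ek k) δ / √δ else 0 with hf
  have hsq : 0 < √δ := Real.sqrt_pos.2 hδ
  have hf0 : ∀ k, 0 ≤ f k := fun k => by
    rw [hf]; dsimp only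
    split_ifs
    · exact div_nonneg (capDiam_nonneg _ _) (Real.sqrt_nonneg _)
    · exact le_rfl
  have hinv : 1 / hh ≤ 1 := by rw [div_le_one (by linarith)]; exact hh1
  have hfK : ∀ k, f k ≤ if |suppFn Ω (ek k) - r| ≤ 1 + 0 then K else 0 := fun k => by
    rw [hf]; dsimp only
    rw [one_smul]
    by_cases hk : k ≠ 0 ∧ |suppFn Ω (ek k) - r| ≤ 1 / hh
    · rw [if_pos hk, if_pos (by linarith [hk.2]), div_le_iff₀ hsq]
      exact h.cap _ (norm_dir hk.1) δ hδ
    · rw [if_neg hk]; split_ifs <;> simp [hK]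
  have hsumle : ∀ Ks : Finset (Fin 2 → ℤ), ∑ k ∈ Ks, f k ≤ C2 * (K + 1) * (1 + r) := fun Ks => by
    calc ∑ k ∈ Ks, f k ≤ ∑ k ∈ Ks, if |suppFn Ω (ek k) - r| ≤ 1 + 0 then K else 0 :=
          Finset.sum_le_sum fun k _ => hfK k
      _ = ((Ks.filter fun k => |suppFn Ω (ek k) - r| ≤ 1 + 0).card : ℝ) * K := by
          rw [← Finset.sum_filter, Finset.sum_const, nsmul_eq_mul]
      _ ≤ (C2 * (1 + 0) * (1 + r + 0)) * (K + 1) := by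
          gcongr
          · exact hcount Ks r 0 hr le_rfl
          · linarith
      _ = _ := by ring
  have hsm : Summable f := summable_of_sum_le hf0 hsumle
  refine ⟨Real.tsum_le_of_sum_le hf0 hsumle, fun Ks hk0 => ?_⟩
  refine le_trans (le_of_eq ?_) (hsm.sum_le_tsum Ks fun k _ => hf0 k)
  refine Finset.sum_congr rfl fun k hk => ?_
  rw [one_smul]
  simp only [hk0 k hk, ne_eq, not_false_eq_true, true_and]
  rfl

/-- The supremum of the weighted lattice sums over a dyadic range of `r`. -/
def dyadicSup (Ω : Set E2) (R hh : ℝ) (l : ℕ) : ℝ :=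
  sSup ((fun r => wSum Ω 1 r (1 / (r * R)) hh) '' Icc ((2 : ℝ) ^ l) (2 ^ (l + 1)))

lemma dyadicSup_nonneg (R hh : ℝ) (l : ℕ) : 0 ≤ dyadicSup Ω R hh l :=
  Real.sSup_nonneg (by rintro _ ⟨r, _, rfl⟩; exact wSum_nonneg _ _ _ _)

lemma Dom.le_dyadicSup (h : Dom Ω r0 Rm K) {R hh r : ℝ} {l : ℕ} (hR : 0 < R) (hh1 : 1 ≤ hh)
    (h1 : 2 ^ l ≤ r) (h2 : r ≤ 2 ^ (l + 1)) :
    wSum Ω 1 r (1 / (r * R)) hh ≤ dyadicSup Ω R hh l := by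
  obtain ⟨C, hC, H⟩ := h.wSum_bounds
  refine le_csSup ⟨C * (1 + 2 ^ (l + 1)), ?_⟩ ⟨r, ⟨h1, h2⟩, rfl⟩
  rintro _ ⟨r', ⟨h3, h4⟩, rfl⟩
  have hr' : 0 < r' := lt_of_lt_of_le (by positivity) h3
  refine (H r' _ hh hr'.le (by positivity) hh1).1.trans ?_
  gcongr

set_option maxHeartbeats 1000000 in
/-- Kinks at depth below `M/(R|k|)`: the pairs of frequencies within `1/h` of each other are
counted by the weighted lattice sums. -/
lemma Dom.near_top (h : Dom Ω r0 Rm K) (C : ℝ) (hC : 0 < C) : ∃ C' : ℝ, 0 < C' ∧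
    ∀ (Ks : Finset (Fin 2 → ℤ)) (b : (Fin 2 → ℤ) → ℂ) (R' R hh M Λ : ℝ) (L q : ℕ)
      (α v : E2 → ℕ → ℝ),
    Kinks Ω C Λ q α v → 1 ≤ hh → 0 < R → 4 ≤ M → 1 ≤ L → hh * M ^ 2 ≤ R → R / 2 ≤ R' → R' ≤ 2 * R →
    (∀ k ∈ Ks, k ≠ 0) → (∀ k ∈ Ks, ‖b k‖ ≤ 1 / ‖ek k‖ ^ 2) →
    (∀ k ∈ Ks, suppFn Ω (ek k) ≤ 2 ^ L) →
    (∀ k ∈ Ks, R * ‖ek k‖ ≤ Λ) → (∀ k ∈ Ks, R * suppFn Ω (ek k) ≤ Λ) →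
    (1 / hh) * ∫ t in R'..(R' + hh), ‖∑ p ∈ Ks.sigma
        (fun k => (Finset.range q).filter fun j => ¬ M / (R * ‖ek k‖) ≤ v (dir k) j),
        b p.1 * (α (dir p.1) p.2 * (ee (-((suppFn Ω (ek p.1) - v (dir p.1) p.2 * ‖ek p.1‖) * t)) -
          ee (-(suppFn Ω (ek p.1) * t))))‖ ^ 2 ≤
      C' * (R + R * ∑ l ∈ Finset.range L, (1 / 2 ^ l) * dyadicSup Ω R hh l) := by
  obtain ⟨C1, hC1, hnear⟩ := near_mean
  obtain ⟨C2, hC2, hcount⟩ := h.count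
  obtain ⟨C3, hC3, hdy⟩ := h.dyadic
  obtain ⟨Cw, hCw, hw⟩ := h.wSum_bounds
  have hr := h.r0_pos
  have hRm := h.Rm_pos
  have hK := h.K_nonneg
  set A1 := C ^ 2 * K * (Rm + 1) ^ 2 / (r0 * √r0) with hA1
  have hsr : 0 < √r0 := Real.sqrt_pos.2 hr
  have hA1' : 0 ≤ A1 := by positivity
  set A2 := (C2 * 4) ^ 2 * (C * K) ^ 2 with hA2
  refine ⟨4 * C1 * (A2 + A1 * C3) + 1, by positivity, ?_⟩
  intro Ks b R' R hh M Λ L q α v kd hh1 hR hM hL hhM hR1 hR2 hk0 hb hρL hΛ hΛ'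
  set T : (Fin 2 → ℤ) → Finset ℕ :=
    fun k => (Finset.range q).filter fun j => ¬ M / (R * ‖ek k‖) ≤ v (dir k) j with hT
  have hMpos : 0 < M := by linarith
  have hn1 : ∀ k ∈ Ks, 1 ≤ ‖ek k‖ := fun k hk => one_le_norm_ek (hk0 k hk)
  have hTr : ∀ k, T k ⊆ Finset.range q := fun k => Finset.filter_subset _ _
  set g : (Fin 2 → ℤ) → ℝ := fun k =>
    (1 / ‖ek k‖ ^ 2) * ∑ i ∈ Finset.range q, α (dir k) i * min (R * (v (dir k) i * ‖ek k‖)) 1 with hg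
  have hterm0 : ∀ k ∈ Ks, ∀ i ∈ Finset.range q,
      0 ≤ α (dir k) i * min (R * (v (dir k) i * ‖ek k‖)) 1 := fun k hk i hi => by
    have h1 := kd.nonneg _ (norm_dir (hk0 k hk)) i hi
    have h2 := (kd.pos _ (norm_dir (hk0 k hk)) i hi).le
    exact mul_nonneg h1 (le_min (by positivity) zero_le_one)
  have hg0 : ∀ k ∈ Ks, 0 ≤ g k := fun k hk =>
    mul_nonneg (by positivity) (Finset.sum_nonneg (hterm0 k hk))
  have hgu : ∀ k ∈ Ks, ∀ B u : ℝ, 1 ≤ B → 0 < u → 1 / Λ ≤ u → 1 ≤ B * (R * ‖ek k‖ * u) →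
      g k ≤ R / ‖ek k‖ * B * C * capDiam Ω (dir k) u := by
    intro k hk B u hB hu hΛu hBu
    have hn := hn1 k hk
    have hd := norm_dir (hk0 k hk)
    have key : ∑ i ∈ Finset.range q, α (dir k) i * min (R * (v (dir k) i * ‖ek k‖)) 1 ≤
        (R * ‖ek k‖ * B) * (C * capDiam Ω (dir k) u) := by
      calc _ ≤ ∑ i ∈ Finset.range q, (R * ‖ek k‖ * B) * (α (dir k) i * min (v (dir k) i) u) := by
            refine Finset.sum_le_sum fun i hi => ?_
            have h1 := kd.nonneg _ hd i hi
            have h2 := kd.pos _ hd i hi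
            rw [mul_left_comm (R * ‖ek k‖ * B)]
            refine mul_le_mul_of_nonneg_left ?_ h1
            rcases le_total (v (dir k) i) u with hvu | hvu
            · rw [min_eq_left hvu]
              refine (min_le_left _ _).trans ?_
              have : 0 ≤ R * ‖ek k‖ * v (dir k) i := by positivity
              nlinarith
            · rw [min_eq_right hvu]
              refine (min_le_right _ _).trans ?_
              linarith
        _ ≤ _ := by
            rw [← Finset.mul_sum]
            gcongr
            exact kd.cap _ hd u hΛu
    calc g k ≤ (1 / ‖ek k‖ ^ 2) * ((R * ‖ek k‖ * B) * (C * capDiam Ω (dir k) u)) := by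
          rw [hg]; dsimp only; gcongr
      _ = _ := by field_simp
  have hga : ∀ k ∈ Ks, g k ≤ C * K * √R / (‖ek k‖ * √‖ek k‖) := by
    intro k hk
    have hn := hn1 k hk
    have hd := norm_dir (hk0 k hk)
    have hu : 0 < 1 / (R * ‖ek k‖) := by positivity
    refine (hgu k hk 1 (1 / (R * ‖ek k‖)) le_rfl hu
      (one_div_le_one_div_of_le (by positivity) (hΛ k hk)) (by
        rw [one_mul, mul_one_div_cancel (by positivity)])).trans ?_
    calc _ ≤ R / ‖ek k‖ * 1 * C * (K * √(1 / (R * ‖ek k‖))) := by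
          gcongr; exact h.cap _ hd _ hu
      _ = _ := by
          rw [Real.sqrt_div zero_le_one, Real.sqrt_one, Real.sqrt_mul hR.le]
          have e1 : √R * √R = R := Real.mul_self_sqrt hR.le
          have h3 : 0 < √R := Real.sqrt_pos.2 hR
          have h4 : 0 < √‖ek k‖ := Real.sqrt_pos.2 (by linarith)
          field_simp
          rw [Real.sq_sqrt hR.le, mul_comm]
  have hinv : 1 / hh ≤ 1 := by rw [div_le_one (by linarith)]; exact hh1
  set P : (Fin 2 → ℤ) → (Fin 2 → ℤ) → Prop :=
    fun k k' => |suppFn Ω (ek k) - suppFn Ω (ek k')| ≤ 1 / hh with hP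
  classical
  -- reduction to the sum of `g k * g k'` over close pairs
  have hred : (1 / hh) * ∫ t in R'..(R' + hh), ‖∑ p ∈ Ks.sigma T,
        b p.1 * (α (dir p.1) p.2 * (ee (-((suppFn Ω (ek p.1) - v (dir p.1) p.2 * ‖ek p.1‖) * t)) -
          ee (-(suppFn Ω (ek p.1) * t))))‖ ^ 2 ≤
      C1 * ∑ k ∈ Ks, ∑ k' ∈ Ks, if P k k' then (2 * g k) * (2 * g k') else 0 := by
    have hMR : hh ≤ R / 2 := by nlinarith [mul_le_mul hM hM (by norm_num) hMpos.le]
    refine (hnear Ks T (fun k => ‖ek k‖) (fun k => suppFn Ω (ek k)) (fun k => α (dir k))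
      (fun k => v (dir k)) b R' hh hh1 (by linarith) (fun k hk => by linarith [hn1 k hk]) hb
      (fun k hk i hi => kd.nonneg _ (norm_dir (hk0 k hk)) i (hTr k hi))
      (fun k hk i hi => (kd.pos _ (norm_dir (hk0 k hk)) i (hTr k hi)).le)
      (fun k hk i hi => ?_)).trans ?_
    · have h1 := (Finset.mem_filter.1 hi).2
      have hn := hn1 k hk
      push Not at h1
      rw [lt_div_iff₀ (by positivity)] at h1
      have h2 : R * (hh * (v (dir k) i * ‖ek k‖)) ≤ hh * M := by nlinarith
      have h3 : R * (hh * (v (dir k) i * ‖ek k‖)) * M ≤ R * 1 := by nlinarith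
      have h4 : (hh * (v (dir k) i * ‖ek k‖)) * M ≤ 1 :=
        le_of_mul_le_mul_left (by linarith) hR
      have h5 : 0 ≤ hh * (v (dir k) i * ‖ek k‖) := by
        have := (kd.pos _ (norm_dir (hk0 k hk)) i (hTr k hi)).le
        positivity
      nlinarith
    · have hG : ∀ k ∈ Ks, 0 ≤ (1 / ‖ek k‖ ^ 2) * ∑ i ∈ T k,
          α (dir k) i * min (R' * (v (dir k) i * ‖ek k‖)) 1 ∧
          (1 / ‖ek k‖ ^ 2) * ∑ i ∈ T k, α (dir k) i * min (R' * (v (dir k) i * ‖ek k‖)) 1 ≤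
            2 * g k := by
        intro k hk
        have hR'0 : 0 ≤ R' := by linarith
        constructor
        · refine mul_nonneg (by positivity) (Finset.sum_nonneg fun i hi => ?_)
          have h1 := kd.nonneg _ (norm_dir (hk0 k hk)) i (hTr k hi)
          have h2 := (kd.pos _ (norm_dir (hk0 k hk)) i (hTr k hi)).le
          exact mul_nonneg h1 (le_min (by positivity) zero_le_one)
        · rw [hg]; dsimp only
          rw [mul_left_comm]
          refine mul_le_mul_of_nonneg_left ?_ (by positivity)
          calc _ ≤ ∑ i ∈ T k, 2 * (α (dir k) i * min (R * (v (dir k) i * ‖ek k‖)) 1) := by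
                refine Finset.sum_le_sum fun i hi => ?_
                have h1 := kd.nonneg _ (norm_dir (hk0 k hk)) i (hTr k hi)
                have h2 := (kd.pos _ (norm_dir (hk0 k hk)) i (hTr k hi)).le
                rw [mul_left_comm 2]
                refine mul_le_mul_of_nonneg_left ?_ h1
                have h3 : 0 ≤ v (dir k) i * ‖ek k‖ := by positivity
                rcases le_total (R * (v (dir k) i * ‖ek k‖)) 1 with h4 | h4
                · rw [min_eq_left h4]
                  exact (min_le_left _ _).trans (by nlinarith)
                · rw [min_eq_right h4]
                  exact (min_le_right _ _).trans (by norm_num)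
            _ ≤ ∑ i ∈ Finset.range q, 2 * (α (dir k) i * min (R * (v (dir k) i * ‖ek k‖)) 1) :=
                Finset.sum_le_sum_of_subset_of_nonneg (hTr k) fun i hi _ =>
                  mul_nonneg zero_le_two (hterm0 k hk i hi)
            _ = _ := by rw [← Finset.mul_sum]
      gcongr with k hk k' hk'
      · split_ifs with hp
        · exact mul_le_mul (hG k hk).2 (hG k' hk').2 (hG k' hk').1
            (by linarith [hg0 k hk])
        · exact le_rfl
  refine hred.trans ?_
  -- pairs whose first frequency is at least one
  have hbig : ∀ k ∈ Ks, 1 ≤ suppFn Ω (ek k) → (∑ k' ∈ Ks, if P k k' then g k * g k' else 0) ≤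
      A1 * R * ((1 / ‖ek k‖ ^ 3) * wSum Ω 1 (suppFn Ω (ek k)) (1 / (suppFn Ω (ek k) * R)) hh) := by
    intro k hk h1ρ
    have hn := hn1 k hk
    set ρ := suppFn Ω (ek k) with hρ
    have hρpos : 0 < ρ := by linarith
    set u := 1 / (ρ * R) with hu
    have hupos : 0 < u := by positivity
    have hsu : 0 < √u := Real.sqrt_pos.2 hupos
    have hrn : r0 * ‖ek k‖ ≤ ρ := h.le_supp _
    have hone : ∀ k' ∈ Ks, P k k' → g k * g k' ≤
        A1 * R * (1 / ‖ek k‖ ^ 3) * (capDiam Ω (dir k') u / √u) := by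
      intro k' hk' hp
      have hn' := hn1 k' hk'
      have hρ' : ρ ≤ (Rm + 1) * ‖ek k'‖ := by
        have h1 := h.supp_le (ek k')
        have h2 := (abs_le.1 hp).2
        nlinarith
      have hb' : g k' ≤ R / ‖ek k'‖ * (Rm + 1) * C * capDiam Ω (dir k') u := by
        refine hgu k' hk' (Rm + 1) u (by linarith) hupos ?_ ?_
        · exact one_div_le_one_div_of_le (by positivity) (by rw [mul_comm]; exact hΛ' k hk)
        · rw [hu]
          rw [show (Rm + 1) * (R * ‖ek k'‖ * (1 / (ρ * R))) = (Rm + 1) * ‖ek k'‖ / ρ by field_simp]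
          rw [le_div_iff₀ hρpos]; linarith
      have hsR : 0 < √R := Real.sqrt_pos.2 hR
      have hsn : 0 < √‖ek k‖ := Real.sqrt_pos.2 (by linarith)
      have hsu' : √u ≤ 1 / (√R * (√r0 * √‖ek k‖)) := by
        rw [hu, Real.sqrt_div zero_le_one, Real.sqrt_one]
        rw [← Real.sqrt_mul hr.le, ← Real.sqrt_mul hR.le]
        refine one_div_le_one_div_of_le (Real.sqrt_pos.2 (by positivity)) (Real.sqrt_le_sqrt ?_)
        nlinarith
      have hinv' : R / ‖ek k'‖ ≤ R * ((Rm + 1) / (r0 * ‖ek k‖)) := by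
        rw [div_eq_mul_inv]
        gcongr
        rw [inv_eq_one_div, div_le_div_iff₀ (by linarith) (by positivity)]
        linarith
      have hcap : capDiam Ω (dir k') u = (capDiam Ω (dir k') u / √u) * √u := by
        field_simp
      have hW : 0 ≤ capDiam Ω (dir k') u / √u := div_nonneg (capDiam_nonneg _ _) hsu.le
      calc g k * g k' ≤ (C * K * √R / (‖ek k‖ * √‖ek k‖)) *
            (R / ‖ek k'‖ * (Rm + 1) * C * capDiam Ω (dir k') u) :=
            mul_le_mul (hga k hk) hb' (hg0 k' hk') (by positivity)
        _ = (C * K * √R / (‖ek k‖ * √‖ek k‖)) *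
            (R / ‖ek k'‖ * (Rm + 1) * C * ((capDiam Ω (dir k') u / √u) * √u)) := by rw [← hcap]
        _ ≤ (C * K * √R / (‖ek k‖ * √‖ek k‖)) *
            (R * ((Rm + 1) / (r0 * ‖ek k‖)) * (Rm + 1) * C * ((capDiam Ω (dir k') u / √u) *
              (1 / (√R * (√r0 * √‖ek k‖))))) := by
            gcongr
        _ = _ := by
            rw [hA1]
            have e1 : √‖ek k‖ ^ 2 = ‖ek k‖ := Real.sq_sqrt (norm_nonneg _)
            generalize capDiam Ω (dir k') u / √u = W
            field_simp
            rw [e1]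
    have hws := (hw ρ u hh hρpos.le hupos hh1).2 Ks hk0
    calc _ ≤ ∑ k' ∈ Ks, A1 * R * (1 / ‖ek k‖ ^ 3) *
          (if |suppFn Ω (ek k') - ρ| ≤ 1 / hh then capDiam Ω (dir k') u / √u else 0) := by
          refine Finset.sum_le_sum fun k' hk' => ?_
          by_cases hp : P k k'
          · rw [if_pos hp, if_pos (by rw [abs_sub_comm]; exact hp)]
            exact hone k' hk' hp
          · rw [if_neg hp, if_neg (by rw [abs_sub_comm]; exact hp), mul_zero]
      _ ≤ _ := by
          rw [← Finset.mul_sum, ← mul_assoc]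
          gcongr
  -- pairs whose first frequency is below one
  have hsmall : ∑ k ∈ Ks.filter (fun k => ¬ 1 ≤ suppFn Ω (ek k)),
      (∑ k' ∈ Ks, if P k k' then g k * g k' else 0) ≤ A2 * R := by
    set F := Ks.filter fun k => |suppFn Ω (ek k) - 0| ≤ 1 + 1 with hF
    have hFc : (F.card : ℝ) ≤ C2 * 4 := by
      have := hcount Ks 0 1 le_rfl zero_le_one
      rw [← hF] at this
      linarith
    have hgs : ∀ k ∈ Ks, g k ≤ C * K * √R := fun k hk => by
      refine (hga k hk).trans (div_le_self (by positivity) ?_)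
      have hn := hn1 k hk
      have : 1 ≤ √‖ek k‖ := Real.one_le_sqrt.2 hn
      nlinarith
    have hmem : ∀ k ∈ Ks, suppFn Ω (ek k) ≤ 2 → k ∈ F := fun k hk h2 => by
      have h3 := h.le_supp (ek k)
      have h4 : 0 ≤ suppFn Ω (ek k) := le_trans (by positivity) h3
      rw [hF, Finset.mem_filter]
      refine ⟨hk, ?_⟩
      rw [sub_zero, abs_of_nonneg h4]; linarith
    have hc0 : 0 ≤ (C * K * √R) * (C * K * √R) := by positivity
    calc _ ≤ ∑ k ∈ F, ∑ k' ∈ F, (C * K * √R) * (C * K * √R) := by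
          have hin : ∀ k ∈ Ks.filter (fun k => ¬ 1 ≤ suppFn Ω (ek k)),
              (∑ k' ∈ Ks, if P k k' then g k * g k' else 0) ≤
                ∑ k' ∈ F, (C * K * √R) * (C * K * √R) := by
            intro k hk
            obtain ⟨hk, hlt⟩ := Finset.mem_filter.1 hk
            push Not at hlt
            rw [hF, Finset.sum_filter]
            refine Finset.sum_le_sum fun k' hk' => ?_
            by_cases hp : P k k'
            · have h1 := (abs_le.1 hp).1
              have h2 := (Finset.mem_filter.1 (hmem k' hk' (by linarith))).2
              rw [if_pos hp, if_pos h2]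
              exact mul_le_mul (hgs k hk) (hgs k' hk') (hg0 k' hk') (by positivity)
            · rw [if_neg hp]
              split_ifs
              · exact hc0
              · exact le_rfl
          refine (Finset.sum_le_sum hin).trans
            (Finset.sum_le_sum_of_subset_of_nonneg (fun k hk => ?_) fun _ _ _ =>
              Finset.sum_nonneg fun _ _ => hc0)
          obtain ⟨hk, hlt⟩ := Finset.mem_filter.1 hk
          push Not at hlt
          exact hmem k hk (by linarith)
      _ = (F.card : ℝ) ^ 2 * (C * K) ^ 2 * (√R * √R) := by
          simp only [Finset.sum_const, nsmul_eq_mul]; ring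
      _ ≤ (C2 * 4) ^ 2 * (C * K) ^ 2 * (√R * √R) := by gcongr
      _ = _ := by rw [Real.mul_self_sqrt hR.le]
  have hdyad := hdy (Ks.filter fun k => 1 ≤ suppFn Ω (ek k)) L
    (fun k => wSum Ω 1 (suppFn Ω (ek k)) (1 / (suppFn Ω (ek k) * R)) hh)
    (dyadicSup Ω R hh) hL (fun k hk => (Finset.mem_filter.1 hk).2)
    (fun k hk => hρL k (Finset.mem_filter.1 hk).1) (dyadicSup_nonneg R hh)
    (fun k hk l _ h1 h2 => h.le_dyadicSup hR hh1 h1 h2)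
  set S := ∑ l ∈ Finset.range L, (1 / 2 ^ l) * dyadicSup Ω R hh l with hS
  have hS0 : 0 ≤ S := Finset.sum_nonneg fun l _ => mul_nonneg (by positivity) (dyadicSup_nonneg _ _ _)
  have hall : ∑ k ∈ Ks, ∑ k' ∈ Ks, (if P k k' then (2 * g k) * (2 * g k') else 0) ≤
      4 * (A1 * R * (C3 * S) + A2 * R) := by
    calc _ = 4 * ∑ k ∈ Ks, ∑ k' ∈ Ks, (if P k k' then g k * g k' else 0) := by
          rw [Finset.mul_sum]
          refine Finset.sum_congr rfl fun k _ => ?_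
          rw [Finset.mul_sum]
          refine Finset.sum_congr rfl fun k' _ => ?_
          split_ifs <;> ring
      _ ≤ _ := by
          rw [← Finset.sum_filter_add_sum_filter_not Ks (fun k => 1 ≤ suppFn Ω (ek k))]
          gcongr
          refine (Finset.sum_le_sum fun k hk => hbig k (Finset.mem_filter.1 hk).1
            (Finset.mem_filter.1 hk).2).trans ?_
          rw [← Finset.mul_sum]
          gcongr
  calc _ ≤ C1 * (4 * (A1 * R * (C3 * S) + A2 * R)) := by gcongr
    _ ≤ _ := by
      have : 0 ≤ A1 * C3 * R := by positivity
      have h2 : 0 ≤ A2 * (R * S) := by positivity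
      have h3 : 0 ≤ R + R * S := by positivity
      nlinarith [mul_nonneg hC1.le this, mul_nonneg hC1.le h2]
end

/-! ### Mean square of the exponential sums attached to the support points -/

/-- The main term in the Fourier transform of `tΩ` at `k` coming from the support point of `Ω` in
direction `k`, written through the kinks. -/
def topTerm (Ω : Set E2) (q : ℕ) (α v : E2 → ℕ → ℝ) (k : Fin 2 → ℤ) (t : ℝ) : ℂ :=
  ee (-(t * ‖ek k‖ * suppFn Ω (dir k))) *
    ∑ j ∈ Finset.range q, (α (dir k) j : ℂ) * (ee (t * ‖ek k‖ * v (dir k) j) - 1)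

/-- Weighted sum of the main terms over a finite set of frequencies. -/
def topSum (Ω : Set E2) (q : ℕ) (α v : E2 → ℕ → ℝ) (Ks : Finset (Fin 2 → ℤ))
    (b : (Fin 2 → ℤ) → ℂ) (t : ℝ) : ℂ :=
  ∑ k ∈ Ks, b k * topTerm Ω q α v k t

lemma continuous_topSum (Ω : Set E2) (q : ℕ) (α v : E2 → ℕ → ℝ) (Ks : Finset (Fin 2 → ℤ))
    (b : (Fin 2 → ℤ) → ℂ) : Continuous (topSum Ω q α v Ks b) := by
  unfold topSum topTerm
  fun_prop

section
variable {Ω : Set E2} {r0 Rm K : ℝ}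

lemma Dom.topSum_mean (h : Dom Ω r0 Rm K) (C : ℝ) (hC : 0 < C) : ∃ C' : ℝ, 0 < C' ∧
    ∀ (Ks : Finset (Fin 2 → ℤ)) (b : (Fin 2 → ℤ) → ℂ) (R' R hh M Λ : ℝ) (L q : ℕ)
      (α v : E2 → ℕ → ℝ),
    Kinks Ω C Λ q α v → 1 ≤ hh → 0 < R → 4 ≤ M → 1 ≤ L → (L : ℝ) ≤ M →
    hh * M ^ 2 ≤ R → R / 2 ≤ R' → R' ≤ 2 * R →
    (∀ k ∈ Ks, k ≠ 0) → (∀ k ∈ Ks, ‖b k‖ ≤ 1 / ‖ek k‖ ^ 2) →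
    (∀ k ∈ Ks, suppFn Ω (ek k) ≤ 2 ^ L) → (∀ k ∈ Ks, ‖ek k‖ * M ≤ R) →
    (∀ k ∈ Ks, R * ‖ek k‖ ≤ Λ) → (∀ k ∈ Ks, R * suppFn Ω (ek k) ≤ Λ) →
    (1 / hh) * ∫ t in R'..(R' + hh), ‖topSum Ω q α v Ks b t‖ ^ 2 ≤
      C' * (R + R * ∑ l ∈ Finset.range L, (1 / 2 ^ l) * dyadicSup Ω R hh l) := by
  obtain ⟨C1, hC1, H1⟩ := h.far_top C hC
  obtain ⟨C2, hC2, H2⟩ := h.near_top C hC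
  refine ⟨2 * C1 + 2 * C2, by positivity, ?_⟩
  intro Ks b R' R hh M Λ L q α v kd hh1 hR hM hL hLM hhM hR1 hR2 hk0 hb hρL hnM hΛ hΛ'
  have m1 := H1 Ks b R' R hh M Λ L q α v kd hh1 hR hM hL hLM hk0 hb hρL hnM hΛ
  have m2 := H2 Ks b R' R hh M Λ L q α v kd hh1 hR hM hL hhM hR1 hR2 hk0 hb hρL hΛ hΛ'
  set S := ∑ l ∈ Finset.range L, (1 / 2 ^ l) * dyadicSup Ω R hh l with hS
  have hS0 : 0 ≤ S :=
    Finset.sum_nonneg fun l _ => mul_nonneg (by positivity) (dyadicSup_nonneg _ _ _)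
  refine (mean_mono (by linarith) (fun t => ?_) (fun t => by positivity) (g1 := fun t =>
    ‖∑ p ∈ Ks.sigma
        (fun k => (Finset.range q).filter fun j => M / (R * ‖ek k‖) ≤ v (dir k) j),
        b p.1 * (α (dir p.1) p.2 * (ee (-((suppFn Ω (ek p.1) - v (dir p.1) p.2 * ‖ek p.1‖) * t)) -
          ee (-(suppFn Ω (ek p.1) * t))))‖ ^ 2) (g2 := fun t =>
    ‖∑ p ∈ Ks.sigma
        (fun k => (Finset.range q).filter fun j => ¬ M / (R * ‖ek k‖) ≤ v (dir k) j),
        b p.1 * (α (dir p.1) p.2 * (ee (-((suppFn Ω (ek p.1) - v (dir p.1) p.2 * ‖ek p.1‖) * t)) -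
          ee (-(suppFn Ω (ek p.1) * t))))‖ ^ 2) (by fun_prop) (by fun_prop)).trans ?_
  · refine le_trans (le_of_eq ?_) (norm_add_sq_le' _ _)
    congr 2
    rw [Finset.sum_sigma, Finset.sum_sigma, ← Finset.sum_add_distrib]
    refine Finset.sum_congr rfl fun k _ => ?_
    rw [Finset.sum_filter_add_sum_filter_not, topTerm, Finset.mul_sum, Finset.mul_sum]
    refine Finset.sum_congr rfl fun j _ => ?_
    dsimp only
    have e1 : ee (-((suppFn Ω (ek k) - v (dir k) j * ‖ek k‖) * t)) =
        ee (-(suppFn Ω (ek k) * t)) * ee (t * ‖ek k‖ * v (dir k) j) := by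
      rw [← ee_add]; congr 1; ring
    rw [e1, mul_assoc t, h.supp_dir k, mul_comm t]
    ring
  · have h4 : 0 ≤ R * S := by positivity
    nlinarith
end

/-! ### Fourier expansion of the smoothed lattice rest -/

lemma conj_topTerm (Ω : Set E2) (q : ℕ) (α v : E2 → ℕ → ℝ) (k : Fin 2 → ℤ) (t : ℝ) :
    (starRingEnd ℂ) (topTerm Ω q α v k t) = ee (t * ‖ek k‖ * suppFn Ω (dir k)) *
      ∑ j ∈ Finset.range q, (α (dir k) j : ℂ) * (ee (-(t * ‖ek k‖ * v (dir k) j)) - 1) := by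
  simp only [topTerm, map_mul, map_sum, map_sub, conj_ee, Complex.conj_ofReal, map_one, neg_neg]

/-- The nonzero frequencies of the two-dimensional kernel of degree `D`. -/
def freqs (D : ℕ) : Finset (Fin 2 → ℤ) :=
  (Fintype.piFinset fun _ : Fin 2 => Finset.Icc (-(D : ℤ)) D).erase 0

lemma mem_freqs {D : ℕ} {k : Fin 2 → ℤ} :
    k ∈ freqs D ↔ k ≠ 0 ∧ ∀ i, -(D : ℤ) ≤ k i ∧ k i ≤ D := by
  simp [freqs, Finset.mem_erase, Fintype.mem_piFinset]

lemma neg_mem_freqs {D : ℕ} {k : Fin 2 → ℤ} (hk : k ∈ freqs D) : -k ∈ freqs D := by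
  rw [mem_freqs] at hk ⊢
  refine ⟨neg_ne_zero.2 hk.1, fun i => ?_⟩
  have := hk.2 i
  simp only [Pi.neg_apply]
  omega

lemma norm_ek_freqs {D : ℕ} {k : Fin 2 → ℤ} (hk : k ∈ freqs D) : ‖ek k‖ ≤ 2 * D := by
  rw [mem_freqs] at hk
  have h1 : ∀ i, (k i : ℝ) ^ 2 ≤ (D : ℝ) ^ 2 := fun i => by
    have a1 : -(D : ℝ) ≤ (k i : ℝ) := by exact_mod_cast (hk.2 i).1
    have a2 : (k i : ℝ) ≤ D := by exact_mod_cast (hk.2 i).2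
    nlinarith
  have h2 := norm_sq_E2 (ek k)
  rw [ek_apply, ek_apply] at h2
  have h3 : (0 : ℝ) ≤ D := Nat.cast_nonneg D
  exact le_of_sq_le_sq (by nlinarith [h1 0, h1 1]) (by positivity)

lemma ker2_expand {D : ℕ} {c : ℤ → ℂ} {κ : ℝ → ℝ}
    (hκ : ∀ x, (κ x : ℂ) = ∑ j ∈ Finset.Icc (-(D : ℤ)) D, c j * ee (-(j * x))) (x : E2) :
    (ker2 κ x : ℂ) = ∑ k ∈ Fintype.piFinset (fun _ : Fin 2 => Finset.Icc (-(D : ℤ)) D),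
      c (k 0) * c (k 1) * ee (-⟪x, ek k⟫) := by
  have := Finset.prod_univ_sum (fun _ : Fin 2 => Finset.Icc (-(D : ℤ)) D)
    (fun i j => c j * ee (-(j * x i)))
  rw [Fin.prod_univ_two, ← hκ, ← hκ] at this
  rw [ker2, Complex.ofReal_mul, this]
  refine Finset.sum_congr rfl fun k _ => ?_
  rw [Fin.prod_univ_two, inner_E2, ek_apply, ek_apply,
    show -(x 0 * (k 0 : ℝ) + x 1 * (k 1 : ℝ)) = -((k 0 : ℝ) * x 0) + -((k 1 : ℝ) * x 1) by ring,
    ee_add]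
  ring

section
variable {Ω : Set E2} {r0 Rm K : ℝ}

lemma integral_smul_ee {t : ℝ} (ht : 0 < t) (k : Fin 2 → ℤ) :
    ∫ x in t • Ω, ee (-⟪x, ek k⟫) =
      ((t ^ 2 : ℝ) : ℂ) * ∫ x in Ω, ee (-(t * ‖ek k‖ * ⟪x, dir k⟫)) := by
  have h1 := Measure.setIntegral_comp_smul_of_pos (volume : Measure E2)
    (fun x => ee (-⟪x, ek k⟫)) Ω ht
  have h2 : ∀ x : E2, ee (-⟪t • x, ek k⟫) = ee (-(t * ‖ek k‖ * ⟪x, dir k⟫)) := fun x => by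
    congr 2
    conv_lhs => rw [← norm_smul_dir k]
    rw [real_inner_smul_left, real_inner_smul_right]; ring
  simp only [h2] at h1
  rw [h1, finrank_euclideanSpace, Fintype.card_fin, Complex.real_smul, ← mul_assoc,
    ← Complex.ofReal_mul, mul_inv_cancel₀ (by positivity), Complex.ofReal_one, one_mul]

/-- The Fourier expansion of the smoothed counting function minus its main term. -/
lemma Dom.smooth_expand (h : Dom Ω r0 Rm K) {D : ℕ} {c : ℤ → ℂ} {κ : ℝ → ℝ} (hc : c 0 = 1)
    (hκ : ∀ x, (κ x : ℂ) = ∑ j ∈ Finset.Icc (-(D : ℤ)) D, c j * ee (-(j * x))) {t : ℝ}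
    (ht : 0 < t) :
    (((∫ x in t • Ω, ker2 κ x) - t ^ 2 * (volume Ω).toReal : ℝ) : ℂ) =
      ∑ k ∈ freqs D, c (k 0) * c (k 1) *
        (((t ^ 2 : ℝ) : ℂ) * ∫ x in Ω, ee (-(t * ‖ek k‖ * ⟪x, dir k⟫))) := by
  have hfin : volume (t • Ω) < ⊤ := by
    rw [volume_smul_E2]
    exact ENNReal.mul_lt_top ENNReal.ofReal_lt_top h.vol_lt_top
  have hint : ∀ k, IntegrableOn (fun x : E2 => ee (-⟪x, ek k⟫)) (t • Ω) := fun k => by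
    refine Measure.integrableOn_of_bounded hfin.ne (M := 1) ?_ ?_
    · exact Continuous.aestronglyMeasurable (by fun_prop)
    · exact Filter.Eventually.of_forall fun x => (norm_ee _).le
  rw [Complex.ofReal_sub, ← integral_complex_ofReal]
  simp only [ker2_expand hκ]
  rw [integral_finsetSum _ fun k _ => (hint k).const_mul _]
  have h0 : (0 : Fin 2 → ℤ) ∈ Fintype.piFinset (fun _ : Fin 2 => Finset.Icc (-(D : ℤ)) D) := by
    simp [Fintype.mem_piFinset]
  rw [← Finset.add_sum_erase _ _ h0]
  simp only [integral_const_mul, integral_smul_ee ht]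
  rw [freqs]
  have : ∫ x in Ω, ee (-(t * ‖ek 0‖ * ⟪x, dir 0⟫)) = ((volume Ω).toReal : ℂ) := by
    simp [ek_zero, ee_zero, Measure.real]
  rw [this]
  simp [hc]

/-- Outside the exponential sums of the support points, the smoothed lattice rest is bounded by
`∑ |k|⁻²`. -/
lemma Dom.smooth_le (h : Dom Ω r0 Rm K) {D q : ℕ} {c : ℤ → ℂ} {κ : ℝ → ℝ} {C Λ : ℝ}
    {α v : E2 → ℕ → ℝ} (hc : c 0 = 1)
    (hc1 : ∀ j ∈ Finset.Icc (-(D : ℤ)) D, ‖c j‖ ≤ 1)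
    (hκ : ∀ x, (κ x : ℂ) = ∑ j ∈ Finset.Icc (-(D : ℤ)) D, c j * ee (-(j * x)))
    (hkink : ∀ θ : E2, ‖θ‖ = 1 → ∀ lam : ℝ, 0 < lam → lam ≤ Λ →
      ‖((4 * Real.pi ^ 2 * lam ^ 2 : ℝ) : ℂ) * (∫ x in Ω, ee (-(lam * ⟪x, θ⟫)))
        - ee (-(lam * suppFn Ω θ)) *
            ∑ j ∈ Finset.range q, (α θ j : ℂ) * (ee (lam * v θ j) - 1)
        - ee (lam * suppFn Ω (-θ)) *
            ∑ j ∈ Finset.range q, (α (-θ) j : ℂ) * (ee (-(lam * v (-θ) j)) - 1)‖ ≤ C) :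
    ∃ b b' : (Fin 2 → ℤ) → ℂ, (∀ k ∈ freqs D, ‖b k‖ ≤ 1 / ‖ek k‖ ^ 2) ∧
      (∀ k ∈ freqs D, ‖b' k‖ ≤ 1 / ‖ek k‖ ^ 2) ∧
      ∀ t : ℝ, 0 < t → (∀ k ∈ freqs D, t * ‖ek k‖ ≤ Λ) →
        |(∫ x in t • Ω, ker2 κ x) - t ^ 2 * (volume Ω).toReal| ≤
          ‖topSum Ω q α v (freqs D) b t‖ + ‖topSum Ω q α v (freqs D) b' t‖ +
            C * ∑ k ∈ freqs D, 1 / ‖ek k‖ ^ 2 := by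
  have hn1 : ∀ k ∈ freqs D, 1 ≤ ‖ek k‖ := fun k hk => one_le_norm_ek (mem_freqs.1 hk).1
  have hpi : 1 ≤ 4 * Real.pi ^ 2 := by nlinarith [Real.pi_gt_three]
  set b : (Fin 2 → ℤ) → ℂ := fun k => c (k 0) * c (k 1) / ((4 * Real.pi ^ 2 * ‖ek k‖ ^ 2 : ℝ) : ℂ)
    with hb
  have hbn : ∀ k ∈ freqs D, ‖b k‖ ≤ 1 / ‖ek k‖ ^ 2 := fun k hk => by
    have hn := hn1 k hk
    have hm := (mem_freqs.1 hk).2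
    have c0 := hc1 (k 0) (Finset.mem_Icc.2 (hm 0))
    have c1 := hc1 (k 1) (Finset.mem_Icc.2 (hm 1))
    rw [hb]; dsimp only
    rw [norm_div, norm_mul, Complex.norm_real, Real.norm_of_nonneg (by positivity)]
    have : ‖c (k 0)‖ * ‖c (k 1)‖ ≤ 1 := mul_le_one₀ c0 (norm_nonneg _) c1
    refine div_le_div₀ zero_le_one this (by positivity) ?_
    nlinarith [sq_nonneg ‖ek k‖]
  refine ⟨b, fun k => (starRingEnd ℂ) (b (-k)), hbn, fun k hk => ?_, fun t ht hΛ => ?_⟩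
  · dsimp only
    rw [RCLike.norm_conj]
    have := hbn _ (neg_mem_freqs hk)
    rwa [ek_neg, norm_neg] at this
  rw [← Real.norm_eq_abs, ← Complex.norm_real, h.smooth_expand hc hκ ht]
  -- the contribution of the opposite support point is the conjugate of the term at `-k`
  have hbot : ‖topSum Ω q α v (freqs D) (fun k => (starRingEnd ℂ) (b (-k))) t‖ =
      ‖∑ k ∈ freqs D, b k * (starRingEnd ℂ) (topTerm Ω q α v (-k) t)‖ := by
    rw [← RCLike.norm_conj, topSum, map_sum]
    congr 1
    refine Finset.sum_nbij' (fun k => -k) (fun k => -k) (fun k hk => neg_mem_freqs hk)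
      (fun k hk => neg_mem_freqs hk) (fun k _ => neg_neg k) (fun k _ => neg_neg k) fun k _ => ?_
    rw [map_mul, Complex.conj_conj, neg_neg]
  rw [hbot, topSum]
  have hterm : ∀ k ∈ freqs D, ‖c (k 0) * c (k 1) *
        (((t ^ 2 : ℝ) : ℂ) * ∫ x in Ω, ee (-(t * ‖ek k‖ * ⟪x, dir k⟫))) -
        (b k * topTerm Ω q α v k t + b k * (starRingEnd ℂ) (topTerm Ω q α v (-k) t))‖ ≤
      C * (1 / ‖ek k‖ ^ 2) := by
    intro k hk
    have hn := hn1 k hk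
    have hk0 := (mem_freqs.1 hk).1
    have hx := hkink (dir k) (norm_dir hk0) (t * ‖ek k‖) (by positivity) (hΛ k hk)
    have e : c (k 0) * c (k 1) *
        (((t ^ 2 : ℝ) : ℂ) * ∫ x in Ω, ee (-(t * ‖ek k‖ * ⟪x, dir k⟫))) =
        b k * (((4 * Real.pi ^ 2 * (t * ‖ek k‖) ^ 2 : ℝ) : ℂ) *
          ∫ x in Ω, ee (-(t * ‖ek k‖ * ⟪x, dir k⟫))) := by
      rw [hb]; dsimp only
      have h1 : (‖ek k‖ : ℂ) ≠ 0 := by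
        rw [Complex.ofReal_ne_zero]; linarith
      have h2 : (Real.pi : ℂ) ≠ 0 := by
        rw [Complex.ofReal_ne_zero]; exact Real.pi_ne_zero
      push_cast
      field_simp
    rw [e, conj_topTerm, topTerm, ek_neg, norm_neg, dir_neg, ← mul_add, ← mul_sub, norm_mul,
      mul_comm C, ← sub_sub]
    exact mul_le_mul (hbn k hk) hx (norm_nonneg _) (by positivity)
  have hsplit : ∑ k ∈ freqs D, c (k 0) * c (k 1) *
        (((t ^ 2 : ℝ) : ℂ) * ∫ x in Ω, ee (-(t * ‖ek k‖ * ⟪x, dir k⟫))) =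
      ∑ k ∈ freqs D, b k * topTerm Ω q α v k t +
      ∑ k ∈ freqs D, b k * (starRingEnd ℂ) (topTerm Ω q α v (-k) t) +
      ∑ k ∈ freqs D, (c (k 0) * c (k 1) *
        (((t ^ 2 : ℝ) : ℂ) * ∫ x in Ω, ee (-(t * ‖ek k‖ * ⟪x, dir k⟫))) -
        (b k * topTerm Ω q α v k t + b k * (starRingEnd ℂ) (topTerm Ω q α v (-k) t))) := by
    rw [Finset.sum_sub_distrib, Finset.sum_add_distrib]; ring
  rw [hsplit]
  refine (norm_add_le _ _).trans (add_le_add (norm_add_le _ _) ?_)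
  rw [Finset.mul_sum]
  exact (norm_sum_le _ _).trans (Finset.sum_le_sum hterm)
end

/-! ### The mean square of the lattice rest -/

/-- Every power bookkeeping condition needed below holds for large `R`; the second one uses
`log 2 > 2/3`. -/
lemma eventually_large (A B c : ℝ) : ∃ R0 : ℝ, 2 ≤ R0 ∧ ∀ R : ℝ, R0 ≤ R →
    4 ≤ Real.log R ∧ A * R ^ (2 / 3 : ℝ) ≤ 2 ^ ⌊Real.log R⌋₊ ∧
    B * R ^ (2 / 3 : ℝ) * Real.log R ≤ R ∧ c ≤ R ∧ Real.log R ≤ √R := by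
  have h1 : ∀ᶠ R : ℝ in Filter.atTop, 4 ≤ Real.log R :=
    Real.tendsto_log_atTop.eventually_ge_atTop 4
  have h2 : ∀ᶠ R : ℝ in Filter.atTop, 2 * A ≤ R ^ (Real.log 2 - 2 / 3) :=
    (tendsto_rpow_atTop (by linarith [Real.log_two_gt_d9])).eventually_ge_atTop _
  have h3 := (isLittleO_log_rpow_atTop (show (0 : ℝ) < 1 / 3 by norm_num)).def
    (show (0 : ℝ) < 1 / (|B| + 1) by positivity)
  have h4 := (isLittleO_log_rpow_atTop (show (0 : ℝ) < 1 / 2 by norm_num)).def one_pos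
  obtain ⟨R0, hR0⟩ := Filter.eventually_atTop.1
    (h1.and (h2.and (h3.and (h4.and (Filter.eventually_ge_atTop (max c 2))))))
  refine ⟨max R0 2, le_max_right _ _, fun R hR => ?_⟩
  obtain ⟨a1, a2, a3, a4, a5⟩ := hR0 R ((le_max_left _ _).trans hR)
  have hR2 : 2 ≤ R := (le_max_right _ _).trans hR
  have hRpos : 0 < R := by linarith
  refine ⟨a1, ?_, ?_, (le_max_left _ _).trans a5, ?_⟩
  · have e1 : R ^ Real.log 2 ≤ 2 * 2 ^ ⌊Real.log R⌋₊ := by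
      have e2 : R ^ Real.log 2 = (2 : ℝ) ^ Real.log R := by
        rw [Real.rpow_def_of_pos hRpos, Real.rpow_def_of_pos zero_lt_two, mul_comm]
      rw [e2, ← pow_succ', ← Real.rpow_natCast]
      refine Real.rpow_le_rpow_of_exponent_le one_le_two ?_
      push_cast
      exact (Nat.lt_floor_add_one _).le
    have e3 : R ^ Real.log 2 = R ^ (Real.log 2 - 2 / 3) * R ^ (2 / 3 : ℝ) := by
      rw [← Real.rpow_add hRpos]; congr 1; ring
    have e4 : 2 * A * R ^ (2 / 3 : ℝ) ≤ R ^ (Real.log 2 - 2 / 3) * R ^ (2 / 3 : ℝ) := by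
      gcongr
    linarith
  · rw [Real.norm_of_nonneg (by linarith), Real.norm_of_nonneg (by positivity)] at a3
    have e1 : R = R ^ (2 / 3 : ℝ) * R ^ (1 / 3 : ℝ) := by
      rw [← Real.rpow_add hRpos]; norm_num
    have e2 : (|B| + 1) * Real.log R ≤ R ^ (1 / 3 : ℝ) := by
      rw [one_div_mul_eq_div, le_div_iff₀ (by positivity)] at a3
      linarith
    have e3 : B * Real.log R ≤ (|B| + 1) * Real.log R := by
      gcongr; linarith [le_abs_self B]
    calc B * R ^ (2 / 3 : ℝ) * Real.log R = R ^ (2 / 3 : ℝ) * (B * Real.log R) := by ring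
      _ ≤ R ^ (2 / 3 : ℝ) * R ^ (1 / 3 : ℝ) := by gcongr; linarith
      _ = R := e1.symm
  · rw [Real.norm_of_nonneg (by linarith), Real.norm_of_nonneg (by positivity), one_mul,
      ← Real.sqrt_eq_rpow] at a4
    exact a4

lemma mean_le_of_le {f g : ℝ → ℝ} {R h : ℝ} (hh : 0 < h) (hf0 : ∀ t, 0 ≤ f t)
    (hg : Continuous g) (hfg : ∀ t, R ≤ t → t ≤ R + h → f t ≤ g t) :
    (1 / h) * ∫ t in R..(R + h), f t ≤ (1 / h) * ∫ t in R..(R + h), g t := by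
  refine mul_le_mul_of_nonneg_left ?_ (by positivity)
  rw [intervalIntegral.integral_of_le (by linarith), intervalIntegral.integral_of_le (by linarith)]
  refine integral_mono_of_nonneg (Filter.Eventually.of_forall hf0) hg.integrableOn_Ioc ?_
  refine (ae_restrict_iff' measurableSet_Ioc).2 (Filter.Eventually.of_forall fun t ht => ?_)
  exact hfg t ht.1.le ht.2

lemma mean_five {u1 u2 u3 u4 : ℝ → ℝ} {R h c : ℝ} (hh : 0 < h) (h1 : Continuous u1)
    (h2 : Continuous u2) (h3 : Continuous u3) (h4 : Continuous u4) :
    (1 / h) * ∫ t in R..(R + h), 5 * (u1 t + u2 t + u3 t + u4 t + c) =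
      5 * ((1 / h) * (∫ t in R..(R + h), u1 t) + (1 / h) * (∫ t in R..(R + h), u2 t) +
        (1 / h) * (∫ t in R..(R + h), u3 t) + (1 / h) * (∫ t in R..(R + h), u4 t) + c) := by
  have i1 : ∀ {u : ℝ → ℝ}, Continuous u → IntervalIntegrable u volume R (R + h) :=
    fun hu => hu.intervalIntegrable _ _
  rw [intervalIntegral.integral_const_mul, intervalIntegral.integral_add (i1 (by fun_prop))
      (i1 (by fun_prop)), intervalIntegral.integral_add (i1 (by fun_prop)) (i1 (by fun_prop)),
    intervalIntegral.integral_add (i1 (by fun_prop)) (i1 (by fun_prop)),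
    intervalIntegral.integral_add (i1 (by fun_prop)) (i1 (by fun_prop)),
    intervalIntegral.integral_const, smul_eq_mul, add_sub_cancel_left]
  field_simp

lemma sq_le_five (e a b c d f : ℝ) (h0 : |e| ≤ a + b + c + d + f) :
    e ^ 2 ≤ 5 * (a ^ 2 + b ^ 2 + c ^ 2 + d ^ 2 + f ^ 2) := by
  have h1 : e ^ 2 ≤ (a + b + c + d + f) ^ 2 := by
    rw [← sq_abs]; exact pow_le_pow_left₀ (abs_nonneg e) h0 2
  nlinarith [sq_nonneg (a - b), sq_nonneg (a - c), sq_nonneg (a - d), sq_nonneg (a - f),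
    sq_nonneg (b - c), sq_nonneg (b - d), sq_nonneg (b - f), sq_nonneg (c - d),
    sq_nonneg (c - f), sq_nonneg (d - f)]

section
variable {Ω : Set E2} {r0 Rm K : ℝ}

/-- The sandwich by smoothed counting functions at scale `R^{-1/2}`: for `t` comparable to `R` the
lattice rest is controlled by two smoothed rests up to `O(√R)`. -/
lemma Dom.rest_le (h : Dom Ω r0 Rm K) (Ck : ℝ) (hCk : 0 < Ck) : ∃ C : ℝ, 0 < C ∧
    ∀ (R t : ℝ) (κ : ℝ → ℝ), 1 ≤ R → 4 / r0 ≤ R → R ≤ t → t ≤ 2 * R →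
    Continuous κ → (∀ x, 0 ≤ κ x) → (∀ (x : ℝ) (k : ℤ), κ (x + k) = κ x) →
    ∫ x in Ioc (-1 / 2 : ℝ) (1 / 2), κ x = 1 →
    ∫ x in Ioc (-1 / 2 : ℝ) (1 / 2) \ Icc (-(1 / √R)) (1 / √R), κ x ≤ Ck / (R * √R) →
    |latticeRest Ω t| ≤
      |(∫ x in (t + 2 / r0 * (1 / √R)) • Ω, ker2 κ x) -
        (t + 2 / r0 * (1 / √R)) ^ 2 * (volume Ω).toReal| +
      |(∫ x in (t - 2 / r0 * (1 / √R)) • Ω, ker2 κ x) -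
        (t - 2 / r0 * (1 / √R)) ^ 2 * (volume Ω).toReal| + C * √R := by
  obtain ⟨Cl, hCl, hl⟩ := h.latticeCount_le
  have hr := h.r0_pos
  set V := (volume Ω).toReal with hV
  have hV0 : 0 ≤ V := ENNReal.toReal_nonneg
  refine ⟨V * (10 / r0) + 18 * Ck * Cl, by positivity, ?_⟩
  intro R t κ hR1 hR4 htR ht2 hκ hκ0 hper hmass htail
  have hRpos : 0 < R := by linarith
  have hsR : 0 < √R := Real.sqrt_pos.2 hRpos
  have hsR1 : 1 ≤ √R := Real.one_le_sqrt.2 hR1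
  have hε : 0 < 1 / √R := by positivity
  have hε1 : 1 / √R ≤ 1 := by rw [div_le_one hsR]; exact hsR1
  have hr4 : 2 / r0 ≤ R / 2 := by
    have : 4 / r0 = 2 * (2 / r0) := by ring
    linarith
  have hr2 : 0 < 2 / r0 := by positivity
  set s := 2 / r0 * (1 / √R) with hs
  have hs0 : 0 < s := by positivity
  have hs2 : s ≤ R / 2 := le_trans (by nlinarith) hr4
  have hRs : R * s = 2 / r0 * √R := by
    rw [hs]
    have : R = √R * √R := (Real.mul_self_sqrt hRpos.le).symm
    calc R * (2 / r0 * (1 / √R)) = √R * √R * (2 / r0 * (1 / √R)) := by rw [← this]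
      _ = _ := by field_simp
  obtain ⟨u1, u2⟩ := h.sandwich hε hκ hκ0 hper hmass htail (t := t) (by linarith)
  rw [← hs] at u1 u2
  set τ := Ck / (R * √R) with hτ
  have hτ0 : 0 < τ := by positivity
  have hτR : τ * R ^ 2 = Ck * √R := by
    have : R = √R * √R := (Real.mul_self_sqrt hRpos.le).symm
    rw [hτ]
    calc Ck / (R * √R) * R ^ 2 = Ck * (R / √R) := by field_simp
      _ = Ck * (√R * √R / √R) := by rw [← this]
      _ = _ := by field_simp
  have hN1 : (latticeCount (t • Ω) : ℝ) ≤ Cl * (9 * R ^ 2) := by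
    refine (hl t (by linarith)).trans ?_
    gcongr
    nlinarith
  have hN2 : (latticeCount ((t + 2 / r0) • Ω) : ℝ) ≤ Cl * (9 * R ^ 2) := by
    refine (hl _ (by linarith)).trans ?_
    gcongr
    have : t + 2 / r0 ≤ 3 * R := by linarith
    have h0 : 0 ≤ t + 2 / r0 := by linarith
    nlinarith
  have hE1 : 2 * τ * latticeCount (t • Ω) ≤ 18 * Ck * Cl * √R := by
    calc _ ≤ 2 * τ * (Cl * (9 * R ^ 2)) := by gcongr
      _ = 18 * Cl * (τ * R ^ 2) := by ring
      _ = _ := by rw [hτR]; ring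
  have hE2 : 2 * τ * latticeCount ((t + 2 / r0) • Ω) ≤ 18 * Ck * Cl * √R := by
    calc _ ≤ 2 * τ * (Cl * (9 * R ^ 2)) := by gcongr
      _ = 18 * Cl * (τ * R ^ 2) := by ring
      _ = _ := by rw [hτR]; ring
  have hA1 : (t + s) ^ 2 * V - t ^ 2 * V ≤ V * (10 / r0) * √R := by
    have : (t + s) ^ 2 - t ^ 2 ≤ 5 * (R * s) := by nlinarith
    calc _ = V * ((t + s) ^ 2 - t ^ 2) := by ring
      _ ≤ V * (5 * (R * s)) := by gcongr
      _ = _ := by rw [hRs]; ring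
  have hA2 : t ^ 2 * V - (t - s) ^ 2 * V ≤ V * (10 / r0) * √R := by
    have : t ^ 2 - (t - s) ^ 2 ≤ 5 * (R * s) := by nlinarith
    calc _ = V * (t ^ 2 - (t - s) ^ 2) := by ring
      _ ≤ V * (5 * (R * s)) := by gcongr
      _ = _ := by rw [hRs]; ring
  rw [latticeRest, ← hV, abs_le]
  have q1 := le_abs_self ((∫ x in (t + s) • Ω, ker2 κ x) - (t + s) ^ 2 * V)
  have q2 := neg_abs_le ((∫ x in (t - s) • Ω, ker2 κ x) - (t - s) ^ 2 * V)
  have q3 := abs_nonneg ((∫ x in (t + s) • Ω, ker2 κ x) - (t + s) ^ 2 * V)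
  have q4 := abs_nonneg ((∫ x in (t - s) • Ω, ker2 κ x) - (t - s) ^ 2 * V)
  constructor <;> linarith

set_option maxHeartbeats 1000000 in
/-- The mean square bound for large `R`. -/
lemma Dom.mean_large (h : Dom Ω r0 Rm K) : ∃ C R0 : ℝ, 0 < C ∧ 2 ≤ R0 ∧ ∀ R hh : ℝ, R0 ≤ R →
    1 ≤ Real.log R ∧ (1 ≤ hh → hh * (Real.log R) ^ 2 ≤ R →
    (1 / hh) * ∫ t in R..(R + hh), latticeRest Ω t ^ 2 ≤
      C * (R + R * ∑ l ∈ Finset.range ⌊Real.log R⌋₊, (1 / 2 ^ l) * dyadicSup Ω R hh l)) := by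
  obtain ⟨Ck, hCk, hker⟩ := exists_kernel
  obtain ⟨C, hC, hkink⟩ := h.kink_expansion
  obtain ⟨Ct, hCt, htop⟩ := h.topSum_mean C hC
  obtain ⟨Cs, hCs, hsum⟩ := h.sum_inv_sq
  obtain ⟨C5, hC5, hrest⟩ := h.rest_le Ck hCk
  have hr := h.r0_pos
  have hRm := h.Rm_pos
  obtain ⟨R0, hR02, hR0⟩ := eventually_large (Rm * (2 * Ck)) (2 * Ck) (4 / r0)
  set C6 := C5 + 2 * (C * Cs) with hC6
  have hC6pos : 0 < C6 := by positivity
  refine ⟨5 * (4 * Ct + C6 ^ 2), R0, by positivity, hR02, fun R hh hRR => ?_⟩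
  obtain ⟨e1, e2, e3, e4, e5⟩ := hR0 R hRR
  refine ⟨by linarith, fun hh1 hhM => ?_⟩
  have hR2 : 2 ≤ R := hR02.trans hRR
  have hRpos : 0 < R := by linarith
  have hsR : 0 < √R := Real.sqrt_pos.2 hRpos
  have hsR1 : 1 ≤ √R := Real.one_le_sqrt.2 (by linarith)
  set L := ⌊Real.log R⌋₊ with hL
  have hLM : (L : ℝ) ≤ Real.log R := Nat.floor_le (by linarith)
  have hL1 : 1 ≤ L := Nat.le_floor (by push_cast; linarith)
  obtain ⟨D, c, κ, hD, hc0, hc1, hκ, hκ0, hper, hmass, htail, hexp⟩ := hker R (by linarith)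
  have hn : ∀ k ∈ freqs D, ‖ek k‖ ≤ 2 * Ck * R ^ (2 / 3 : ℝ) := fun k hk => by
    have := norm_ek_freqs hk
    linarith
  have hk0 : ∀ k ∈ freqs D, k ≠ 0 := fun k hk => (mem_freqs.1 hk).1
  set Λ := 1 + (3 + Rm) * R * (2 * D) with hΛ
  have hD0 : (0 : ℝ) ≤ D := Nat.cast_nonneg D
  have hΛ1 : 1 ≤ Λ := by rw [hΛ]; linarith [show 0 ≤ (3 + Rm) * R * (2 * D) by positivity]
  obtain ⟨q, α, v, hkv⟩ := hkink Λ hΛ1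
  have kd : Kinks Ω C Λ q α v :=
    { nonneg := fun θ hθ j hj => ((hkv θ hθ).1 j hj).1
      pos := fun θ hθ j hj => ((hkv θ hθ).1 j hj).2.1
      le_half := fun θ hθ j hj => ((hkv θ hθ).1 j hj).2.2
      mom := fun θ hθ => (hkv θ hθ).2.1
      cap := fun θ hθ => (hkv θ hθ).2.2.1 }
  have hsc : ∀ a : ℝ, 0 ≤ a → a ≤ (3 + Rm) * R → ∀ k ∈ freqs D, a * ‖ek k‖ ≤ Λ := by
    intro a ha0 ha k hk
    have h1 := norm_ek_freqs hk
    calc a * ‖ek k‖ ≤ (3 + Rm) * R * (2 * D) := by gcongr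
      _ ≤ Λ := by rw [hΛ]; linarith
  have hρ : ∀ k ∈ freqs D, suppFn Ω (ek k) ≤ 2 ^ L := fun k hk => by
    calc suppFn Ω (ek k) ≤ Rm * ‖ek k‖ := h.supp_le _
      _ ≤ Rm * (2 * Ck * R ^ (2 / 3 : ℝ)) := by gcongr; exact hn k hk
      _ = Rm * (2 * Ck) * R ^ (2 / 3 : ℝ) := by ring
      _ ≤ _ := e2
  have hnM : ∀ k ∈ freqs D, ‖ek k‖ * Real.log R ≤ R := fun k hk => by
    refine le_trans ?_ e3
    gcongr
    exact hn k hk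
  have hΛa : ∀ k ∈ freqs D, R * ‖ek k‖ ≤ Λ := hsc R hRpos.le (by nlinarith)
  have hΛb : ∀ k ∈ freqs D, R * suppFn Ω (ek k) ≤ Λ := fun k hk => by
    have h1 := hsc (R * Rm) (by positivity) (by nlinarith) k hk
    have h2 := h.supp_le (ek k)
    nlinarith
  obtain ⟨b, b', hb, hb', hF⟩ := h.smooth_le (D := D) (q := q) (Λ := Λ) (α := α) (v := v) hc0 hc1
    hexp (fun θ hθ => (hkv θ hθ).2.2.2)
  set s := 2 / r0 * (1 / √R) with hs
  have hs0 : 0 < s := by positivity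
  have hs2 : s ≤ R / 2 := by
    have h1 : 1 / √R ≤ 1 := by rw [div_le_one hsR]; exact hsR1
    have h2 : 4 / r0 = 2 * (2 / r0) := by ring
    have h3 : 0 < 2 / r0 := by positivity
    nlinarith
  have hhR : hh ≤ R / 2 := by nlinarith [mul_le_mul e1 e1 (by norm_num) (by linarith)]
  set S := ∑ l ∈ Finset.range L, (1 / 2 ^ l) * dyadicSup Ω R hh l with hS
  have hS0 : 0 ≤ S :=
    Finset.sum_nonneg fun l _ => mul_nonneg (by positivity) (dyadicSup_nonneg _ _ _)
  set A := topSum Ω q α v (freqs D) b with hA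
  set B := topSum Ω q α v (freqs D) b' with hB
  have hAc : Continuous A := continuous_topSum _ _ _ _ _ _
  have hBc : Continuous B := continuous_topSum _ _ _ _ _ _
  have herr : C * ∑ k ∈ freqs D, 1 / ‖ek k‖ ^ 2 ≤ C * Cs * √R := by
    calc _ ≤ C * (Cs * L) := by gcongr; exact hsum _ L hL1 hk0 hρ
      _ ≤ C * (Cs * √R) := by gcongr; linarith
      _ = _ := by ring
  have hpt : ∀ t, R ≤ t → t ≤ R + hh → latticeRest Ω t ^ 2 ≤
      5 * (‖A (t + s)‖ ^ 2 + ‖B (t + s)‖ ^ 2 + ‖A (t + -s)‖ ^ 2 + ‖B (t + -s)‖ ^ 2 +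
        (C6 * √R) ^ 2) := by
    intro t ht1 ht2
    refine sq_le_five _ _ _ _ _ _ ?_
    have g0 := hrest R t κ (by linarith) e4 ht1 (by linarith) hκ hκ0 hper hmass htail
    rw [← hs] at g0
    have h3R : 3 * R ≤ (3 + Rm) * R := by gcongr; linarith
    have g1 := hF (t + s) (by linarith) (hsc _ (by linarith) (by linarith))
    have g2 := hF (t - s) (by linarith) (hsc _ (by linarith) (by linarith))
    rw [← sub_eq_add_neg]
    rw [hC6]
    linarith
  have hshift : ∀ (a : (Fin 2 → ℤ) → ℂ) (d : ℝ), (∀ k ∈ freqs D, ‖a k‖ ≤ 1 / ‖ek k‖ ^ 2) →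
      -(R / 2) ≤ d → d ≤ R / 2 →
      (1 / hh) * ∫ t in R..(R + hh), ‖topSum Ω q α v (freqs D) a (t + d)‖ ^ 2 ≤
        Ct * (R + R * S) := by
    intro a d ha hd1 hd2
    rw [intervalIntegral.integral_comp_add_right
      (fun t => ‖topSum Ω q α v (freqs D) a t‖ ^ 2) d, show R + hh + d = R + d + hh by ring]
    exact htop (freqs D) a (R + d) R hh (Real.log R) Λ L q α v kd hh1 hRpos e1 hL1 hLM hhM
      (by linarith) (by linarith) hk0 ha hρ hnM hΛa hΛb
  have m1 := hshift b s hb (by linarith) hs2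
  have m2 := hshift b' s hb' (by linarith) hs2
  have m3 := hshift b (-s) hb (by linarith) (by linarith)
  have m4 := hshift b' (-s) hb' (by linarith) (by linarith)
  refine (mean_le_of_le (by linarith) (fun t => sq_nonneg _) (by fun_prop) hpt).trans ?_
  rw [mean_five (by linarith) (by fun_prop) (by fun_prop) (by fun_prop) (by fun_prop)]
  have h5 : (C6 * √R) ^ 2 = C6 ^ 2 * R := by rw [mul_pow, Real.sq_sqrt hRpos.le]
  rw [h5]
  have h6 : 0 ≤ C6 ^ 2 * (R * S) := by positivity
  nlinarith

/-- For `R` in a bounded range the mean square is bounded. -/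
lemma Dom.mean_small (h : Dom Ω r0 Rm K) (R0 : ℝ) : ∃ C : ℝ, 0 < C ∧ ∀ R hh : ℝ, 2 ≤ R → R ≤ R0 →
    1 ≤ hh → hh ≤ R / (Real.log R) ^ 2 →
    (1 / hh) * ∫ t in R..(R + hh), latticeRest Ω t ^ 2 ≤ C := by
  obtain ⟨Cl, hCl, hl⟩ := h.latticeCount_le
  set V := (volume Ω).toReal with hV
  have hV0 : 0 ≤ V := ENNReal.toReal_nonneg
  set T := R0 + R0 / (Real.log 2) ^ 2 with hT
  refine ⟨((Cl + V) * T ^ 2) ^ 2 + 1, by positivity, fun R hh hR hRR hh1 hhR => ?_⟩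
  have hlog2 : 0 < Real.log 2 := Real.log_pos one_lt_two
  have hlog : Real.log 2 ≤ Real.log R := Real.log_le_log zero_lt_two hR
  have hhT : hh ≤ R0 / (Real.log 2) ^ 2 := by
    refine hhR.trans ?_
    gcongr
    linarith
  refine (mean_le_of_le (by linarith) (fun t => sq_nonneg _)
    (g := fun _ => ((Cl + V) * T ^ 2) ^ 2) (by fun_prop) fun t ht1 ht2 => ?_).trans ?_
  · rw [sq_le_sq, abs_of_nonneg (show 0 ≤ (Cl + V) * T ^ 2 by positivity), latticeRest, abs_le]
    have htT : t ≤ T := by linarith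
    have ht0 : 0 ≤ t := by linarith
    have h1 := hl t (by linarith)
    have h2 : t ^ 2 ≤ T ^ 2 := by gcongr
    have h3 : (0 : ℝ) ≤ latticeCount (t • Ω) := Nat.cast_nonneg _
    rw [← hV]
    have h4 : 0 ≤ t ^ 2 * V := by positivity
    have h5 : Cl * t ^ 2 ≤ Cl * T ^ 2 := by gcongr
    have h6 : t ^ 2 * V ≤ T ^ 2 * V := by gcongr
    have h7 : 0 ≤ Cl * T ^ 2 := by positivity
    constructor <;> nlinarith
  · rw [intervalIntegral.integral_const, smul_eq_mul, add_sub_cancel_left, ← mul_assoc,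
      one_div_mul_cancel (by linarith), one_mul]
    linarith
end

/-! ### Comparison with the dyadic sums -/

/-- The inner sum over `l` of the final estimate. -/
def innerSum (Ω : Set E2) (R hh s : ℝ) (n : ℕ) : ℝ :=
  ∑' l : ℕ, if 1 ≤ l ∧ (l : ℝ) ≤ Real.log R then
    2 ^ (-(l : ℝ)) * sSup ((fun r => wSum Ω s r ((2 : ℝ) ^ n / (r * R)) hh) ''
      Set.Icc ((2 : ℝ) ^ ((l : ℝ) - 1)) ((2 : ℝ) ^ (l : ℝ)))
    else 0

lemma dyadic_eq_innerSum (Ω : Set E2) (R hh : ℝ) (hR : 0 ≤ Real.log R) :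
    ∑ l ∈ Finset.range ⌊Real.log R⌋₊, (1 / 2 ^ l) * dyadicSup Ω R hh l =
      2 * innerSum Ω R hh 1 0 := by
  rw [innerSum, tsum_eq_sum (s := (Finset.range ⌊Real.log R⌋₊).map (addRightEmbedding 1)),
    Finset.sum_map, Finset.mul_sum]
  · refine Finset.sum_congr rfl fun l hl => ?_
    have hl' : l + 1 ≤ ⌊Real.log R⌋₊ := Finset.mem_range.1 hl
    have hl2 : ((l + 1 : ℕ) : ℝ) ≤ Real.log R := (Nat.le_floor_iff hR).1 hl'
    rw [addRightEmbedding_apply, if_pos ⟨by omega, hl2⟩, dyadicSup, pow_zero]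
    have h1 : (2 : ℝ) ^ (((l + 1 : ℕ) : ℝ) - 1) = 2 ^ l := by
      push_cast; rw [add_sub_cancel_right, Real.rpow_natCast]
    have h2 : (2 : ℝ) ^ ((l + 1 : ℕ) : ℝ) = 2 ^ (l + 1) := Real.rpow_natCast _ _
    rw [Real.rpow_neg zero_le_two, h1, h2, ← mul_assoc]
    congr 1
    rw [pow_succ]
    field_simp
  · intro l hl
    rw [if_neg]
    rintro ⟨h1, h2⟩
    refine hl (Finset.mem_map.2 ⟨l - 1, Finset.mem_range.2 ?_, ?_⟩)
    · have := (Nat.le_floor_iff hR).2 h2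
      omega
    · rw [addRightEmbedding_apply]; omega

/-- The right-hand side of the estimate dominates its term `s = 1`, `n = 0`. -/
lemma sqrt_innerSum_le (Ω : Set E2) (R hh : ℝ) (hR : 1 ≤ Real.log R) :
    √(innerSum Ω R hh 1 0) ≤ ∑ s ∈ ({1, -1} : Finset ℝ), ∑' n : ℕ,
      if (2 : ℝ) ^ n ≤ Real.log R then 2 ^ (-(n : ℝ) / 2) * √(innerSum Ω R hh s n) else 0 := by
  have hnn : ∀ (s : ℝ) (n : ℕ), 0 ≤ (if (2 : ℝ) ^ n ≤ Real.log R then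
      2 ^ (-(n : ℝ) / 2) * √(innerSum Ω R hh s n) else 0 : ℝ) := fun s n => by
    split_ifs
    · positivity
    · exact le_rfl
  refine le_trans ?_ (Finset.single_le_sum (f := fun s : ℝ => ∑' n : ℕ,
      if (2 : ℝ) ^ n ≤ Real.log R then 2 ^ (-(n : ℝ) / 2) * √(innerSum Ω R hh s n) else 0)
    (fun s _ => tsum_nonneg (hnn s)) (show (1 : ℝ) ∈ ({1, -1} : Finset ℝ) by simp))
  have hfin : (Function.support fun n : ℕ => (if (2 : ℝ) ^ n ≤ Real.log R then
      2 ^ (-(n : ℝ) / 2) * √(innerSum Ω R hh 1 n) else 0 : ℝ)).Finite := by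
    refine (Set.finite_Iic ⌊Real.log R⌋₊).subset fun n hn => ?_
    have h1 : (2 : ℝ) ^ n ≤ Real.log R := by
      by_contra hc
      exact hn (if_neg hc)
    have h2 : (n : ℝ) ≤ 2 ^ n := by exact_mod_cast Nat.lt_two_pow_self.le
    exact Nat.le_floor (h2.trans h1)
  refine le_trans (le_of_eq ?_)
    ((summable_of_hasFiniteSupport hfin).le_tsum 0 fun n _ => hnn 1 n)
  simp [hR]

lemma sum_nonneg_rhs (Ω : Set E2) (R hh : ℝ) :
    0 ≤ ∑ s ∈ ({1, -1} : Finset ℝ), ∑' n : ℕ,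
      (if (2 : ℝ) ^ n ≤ Real.log R then 2 ^ (-(n : ℝ) / 2) * √(innerSum Ω R hh s n) else 0 : ℝ) :=
  Finset.sum_nonneg fun s _ => tsum_nonneg fun n => by
    split_ifs
    · positivity
    · exact le_rfl

/-- The estimate with the inner sums abbreviated. -/
lemma main_estimate (Ω : Set E2) (hconv : Convex ℝ Ω) (hopen : IsOpen Ω)
    (hbdd : Bornology.IsBounded Ω) (h0 : (0 : E2) ∈ Ω) (hcurv : CurvBddBelow Ω) :
    ∃ C : ℝ, ∀ R h : ℝ, 2 ≤ R → 1 ≤ h → h ≤ R / (Real.log R) ^ 2 →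
      meanSquare Ω R h ≤ C * √R + C * √R * ∑ s ∈ ({1, -1} : Finset ℝ), ∑' n : ℕ,
        if (2 : ℝ) ^ n ≤ Real.log R then 2 ^ (-(n : ℝ) / 2) * √(innerSum Ω R h s n) else 0 := by
  obtain ⟨r0, Rm, K, hd⟩ := exists_dom Ω hconv hopen hbdd h0 hcurv
  obtain ⟨C1, R0, hC1, hR0, hlarge⟩ := hd.mean_large
  obtain ⟨C2, hC2, hsmall⟩ := hd.mean_small R0
  refine ⟨√(2 * C1) + √C2, fun R h hR hh hhR => ?_⟩
  have hsR1 : 1 ≤ √R := Real.one_le_sqrt.2 (by linarith)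
  have hlog : 0 < Real.log R := Real.log_pos (by linarith)
  set X := ∑ s ∈ ({1, -1} : Finset ℝ), ∑' n : ℕ,
        (if (2 : ℝ) ^ n ≤ Real.log R then 2 ^ (-(n : ℝ) / 2) * √(innerSum Ω R h s n) else 0 : ℝ)
    with hX
  have hX0 : 0 ≤ X := sum_nonneg_rhs Ω R h
  have hs1 : 0 ≤ √(2 * C1) := Real.sqrt_nonneg _
  have hs2 : 0 ≤ √C2 := Real.sqrt_nonneg _
  rcases le_total R R0 with hc | hc
  · have h1 : meanSquare Ω R h ≤ √C2 := Real.sqrt_le_sqrt (hsmall R h hR hc hh hhR)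
    have h2 : 0 ≤ (√(2 * C1) + √C2) * √R * X := by positivity
    nlinarith
  · obtain ⟨hl1, hl2⟩ := hlarge R h hc
    have hb := hl2 hh (by rwa [le_div_iff₀ (by positivity)] at hhR)
    rw [dyadic_eq_innerSum Ω R h hlog.le] at hb
    have hXs := sqrt_innerSum_le Ω R h hl1
    rw [← hX] at hXs
    set Y := innerSum Ω R h 1 0 with hY
    have hY1 : Y ≤ X ^ 2 := (Real.sqrt_le_left hX0).1 hXs
    clear_value X Y
    have h1 : meanSquare Ω R h ≤ √(2 * C1) * √R * (1 + X) := by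
      rw [meanSquare, Real.sqrt_le_left (by positivity)]
      refine hb.trans ?_
      rw [mul_pow, mul_pow, Real.sq_sqrt (by positivity), Real.sq_sqrt (by linarith)]
      have h3 : R * Y ≤ R * X ^ 2 := by gcongr
      have h4 : 0 ≤ R * X := by positivity
      calc C1 * (R + R * (2 * Y)) ≤ C1 * (2 * (R * (1 + X) ^ 2)) := by gcongr; nlinarith
        _ = _ := by ring
    have h2 : 0 ≤ √C2 * √R * (1 + X) := by positivity
    nlinarith

/-- Proposition 3.1: if `Ω` is a bounded open convex planar domain containing
the origin with curvature bounded below in the generalized sense, then for `R ≥ 2` and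
`1 ≤ h ≤ R/(log R)²`,
`𝒢_Ω(R,h) ≤ C √R + C √R Σ_± Σ_{2ⁿ ≤ log R} 2^{−n/2}
(Σ_{1 ≤ l ≤ log R} 2^{−l} sup_{2^{l−1} ≤ r ≤ 2^l} 𝔖^±(r, 2ⁿ/(rR), h))^{1/2}`. -/
theorem statement5 (Ω : Set E2) (hconv : Convex ℝ Ω) (hopen : IsOpen Ω)
    (hbdd : Bornology.IsBounded Ω) (h0 : (0 : E2) ∈ Ω) (hcurv : CurvBddBelow Ω) :
    ∃ C : ℝ, ∀ R h : ℝ, 2 ≤ R → 1 ≤ h → h ≤ R / (Real.log R) ^ 2 →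
      meanSquare Ω R h ≤
        C * Real.sqrt R +
          C * Real.sqrt R * ∑ s ∈ ({1, -1} : Finset ℝ),
            ∑' n : ℕ, if (2 : ℝ) ^ n ≤ Real.log R then
              2 ^ (-(n : ℝ) / 2) *
                Real.sqrt (∑' l : ℕ, if 1 ≤ l ∧ (l : ℝ) ≤ Real.log R then
                  2 ^ (-(l : ℝ)) *
                    sSup ((fun r => wSum Ω s r ((2 : ℝ) ^ n / (r * R)) h) ''
                      Set.Icc ((2 : ℝ) ^ ((l : ℝ) - 1)) ((2 : ℝ) ^ (l : ℝ)))
                  else 0)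
              else 0 := by
  exact main_estimate Ω hconv hopen hbdd h0 hcurv

end
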